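/- Let R be a right Noetherian ring, C a finitely generated cotilting right R-module, and S = End(C_R) its endomorphism ring, so that C is an (S,R)-bimodule. Assume that S is left coherent, that C is finitely generated as a left S-module, and that C is tensorly faithful. Then for every right R-module M the following are equivalent: (i) M belongs to the Bass class ℬ_C(R); (ii) the Gorenstein injective dimension Gid(M) is finite. -/

import Mathlib

open Function MulOpposite

universe u

noncomputable section

/-! ## Chain conditions -/

/-- A ring is right coherent if every finitely generated right ideal is finitely presented. -/
def IsRightCoherentRing (R : Type u) [Ring R] : Prop :=
  ∀ I : Submodule Rᵐᵒᵖ R, I.FG → Module.FinitePresentation Rᵐᵒᵖ I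

/-- A ring is left coherent if every finitely generated left ideal is finitely presented. -/
def IsLeftCoherentRing (S : Type u) [Ring S] : Prop :=
  ∀ I : Submodule S S, I.FG → Module.FinitePresentation S I

/-- A ring is right Noetherian if every right ideal is finitely generated. -/
def IsRightNoetherianRing (R : Type u) [Ring R] : Prop :=
  ∀ I : Submodule Rᵐᵒᵖ R, I.FG

/-! ## The tensor product `N ⊗_S T` of a right `S`-module `N` with a left `S`-module `T` -/

section MTensor

variable (S : Type u) [Ring S]
variable (N : Type u) [AddCommGroup N] [Module Sᵐᵒᵖ N]
variable (T : Type u) [AddCommGroup T] [Module S T]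

/-- The subgroup of balancing relations defining `N ⊗_S T` as a quotient of `T ⊗_ℤ N`. -/
def mtRel : AddSubgroup (TensorProduct ℤ T N) :=
  AddSubgroup.closure
    {x | ∃ (s : S) (t : T) (n : N), x = (s • t) ⊗ₜ[ℤ] n - t ⊗ₜ[ℤ] (op s • n)}

/-- `MTensor S N T` is the tensor product `N ⊗_S T` of a right `S`-module `N` with a left
`S`-module `T`, realized as a quotient of `T ⊗_ℤ N`. -/
def MTensor : Type u := TensorProduct ℤ T N ⧸ mtRel S N T

instance : AddCommGroup (MTensor S N T) :=
  inferInstanceAs (AddCommGroup (TensorProduct ℤ T N ⧸ mtRel S N T))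

variable {S N T}

/-- `MTensor.mk n t` is the element `n ⊗ t` of `N ⊗_S T`. -/
def MTensor.mk (n : N) (t : T) : MTensor S N T := QuotientAddGroup.mk (t ⊗ₜ[ℤ] n)

section Map

variable {N' : Type u} [AddCommGroup N'] [Module Sᵐᵒᵖ N']

/-- Functoriality of `N ⊗_S T` in the right `S`-module variable `N`. -/
def MTensor.map (g : N →ₗ[Sᵐᵒᵖ] N') : MTensor S N T →+ MTensor S N' T :=
  QuotientAddGroup.map _ _
    (LinearMap.lTensor T g.toAddMonoidHom.toIntLinearMap).toAddMonoidHom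
    (by
      refine (AddSubgroup.closure_le _).2 ?_
      rintro x ⟨s, t, n, rfl⟩
      simp only [SetLike.mem_coe, AddSubgroup.mem_comap, LinearMap.toAddMonoidHom_coe,
        map_sub, LinearMap.lTensor_tmul, AddMonoidHom.coe_toIntLinearMap,
        LinearMap.toAddMonoidHom_coe, map_smul]
      exact AddSubgroup.subset_closure ⟨s, t, g n, rfl⟩)

end Map

section LMap

variable {T' : Type u} [AddCommGroup T'] [Module S T']

/-- Functoriality of `N ⊗_S T` in the left `S`-module variable `T`. -/
def MTensor.lmap (h : T →ₗ[S] T') : MTensor S N T →+ MTensor S N T' :=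
  QuotientAddGroup.map _ _
    (LinearMap.rTensor N h.toAddMonoidHom.toIntLinearMap).toAddMonoidHom
    (by
      refine (AddSubgroup.closure_le _).2 ?_
      rintro x ⟨s, t, n, rfl⟩
      simp only [SetLike.mem_coe, AddSubgroup.mem_comap, LinearMap.toAddMonoidHom_coe,
        map_sub, LinearMap.rTensor_tmul, AddMonoidHom.coe_toIntLinearMap, map_smul]
      exact AddSubgroup.subset_closure ⟨s, h t, n, rfl⟩)

end LMap

section Bimod

variable (R : Type u) [Ring R] [Module Rᵐᵒᵖ T] [SMulCommClass S Rᵐᵒᵖ T]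

instance MTensor.instSMul : SMul Rᵐᵒᵖ (MTensor S N T) :=
  ⟨fun ρ =>
    QuotientAddGroup.map _ _ (DistribMulAction.toAddMonoidHom (TensorProduct ℤ T N) ρ)
      (by
        refine (AddSubgroup.closure_le _).2 ?_
        rintro x ⟨s, t, n, rfl⟩
        simp only [SetLike.mem_coe, AddSubgroup.mem_comap,
          DistribMulAction.toAddMonoidHom_apply, smul_sub, TensorProduct.smul_tmul']
        exact AddSubgroup.subset_closure ⟨s, ρ • t, n, by rw [smul_comm s ρ t]⟩)⟩

instance MTensor.instModule : Module Rᵐᵒᵖ (MTensor S N T) :=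
  Function.Surjective.module Rᵐᵒᵖ (QuotientAddGroup.mk' (mtRel S N T))
    (QuotientAddGroup.mk'_surjective _) (fun _ _ => rfl)

theorem MTensor.smul_mk (ρ : Rᵐᵒᵖ) (n : N) (t : T) :
    ρ • (MTensor.mk n t : MTensor S N T) = MTensor.mk n (ρ • t) := by
  show QuotientAddGroup.mk (ρ • (t ⊗ₜ[ℤ] n)) = QuotientAddGroup.mk ((ρ • t) ⊗ₜ[ℤ] n)
  rw [TensorProduct.smul_tmul']

theorem MTensor.mk_add_right (n : N) (t t' : T) :
    (MTensor.mk n (t + t') : MTensor S N T) = MTensor.mk n t + MTensor.mk n t' := by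
  show QuotientAddGroup.mk _ = _
  rw [TensorProduct.add_tmul]
  rfl

/-- The natural map `θ_N : N → Hom_R(T, N ⊗_S T)`, `n ↦ (t ↦ n ⊗ t)`. -/
def MTensor.theta (n : N) : T →ₗ[Rᵐᵒᵖ] MTensor S N T where
  toFun t := MTensor.mk n t
  map_add' t t' := MTensor.mk_add_right n t t'
  map_smul' ρ t := (MTensor.smul_mk R ρ n t).symm

variable (S T N) in
/-- The natural map `θ_N : N → Hom_R(T, N ⊗_S T)` as a function. -/
def MTensor.thetaFun : N → (T →ₗ[Rᵐᵒᵖ] MTensor S N T) := fun n => MTensor.theta R n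

end Bimod

end MTensor

/-! ## The right `S`-module structure on `Hom_A(T, M)` induced by a left `S`-action on `T` -/

section HomModule

variable {B A : Type u} [Ring B] [Ring A]
variable {T : Type u} [AddCommGroup T] [Module A T] [Module B T] [SMulCommClass B A T]
variable {M : Type u} [AddCommGroup M] [Module A M]

instance homDomSMul : SMul Bᵐᵒᵖ (T →ₗ[A] M) :=
  ⟨fun b f =>
    { toFun := fun t => f (b.unop • t)
      map_add' := fun t t' => by
        show f (b.unop • (t + t')) = f (b.unop • t) + f (b.unop • t')
        rw [smul_add, map_add]
      map_smul' := fun a t => by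
        show f (b.unop • a • t) = a • f (b.unop • t)
        rw [smul_comm b.unop a t, map_smul] }⟩

@[simp] theorem homDomSMul_apply (b : Bᵐᵒᵖ) (f : T →ₗ[A] M) (t : T) :
    (b • f) t = f (b.unop • t) := rfl

instance homDomModule : Module Bᵐᵒᵖ (T →ₗ[A] M) where
  one_smul f := LinearMap.ext fun t => by simp
  mul_smul b b' f := LinearMap.ext fun t => by simp [mul_smul]
  smul_zero b := LinearMap.ext fun t => rfl
  smul_add b f g := LinearMap.ext fun t => rfl
  add_smul b b' f := LinearMap.ext fun t => by simp [add_smul]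
  zero_smul f := LinearMap.ext fun t => by simp

end HomModule

/-! ## The evaluation map `ν_M : Hom_R(T, M) ⊗_S T → M` -/

section Nu

variable (S R : Type u) [Ring S] [Ring R]
variable (T : Type u) [AddCommGroup T] [Module S T] [Module Rᵐᵒᵖ T] [SMulCommClass S Rᵐᵒᵖ T]
variable (M : Type u) [AddCommGroup M] [Module Rᵐᵒᵖ M]

/-- The evaluation map `ν_M : Hom_R(T, M) ⊗_S T → M`, `f ⊗ t ↦ f t`. -/
def MTensor.nuFun : MTensor S (T →ₗ[Rᵐᵒᵖ] M) T →+ M :=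
  QuotientAddGroup.lift _
    (TensorProduct.liftAddHom
      { toFun := fun t =>
          { toFun := fun f : T →ₗ[Rᵐᵒᵖ] M => f t
            map_zero' := rfl
            map_add' := fun f g => rfl }
        map_zero' := AddMonoidHom.ext fun f => f.map_zero
        map_add' := fun t t' => AddMonoidHom.ext fun f => f.map_add t t' }
      (fun z t f => by
        show f (z • t) = (z • f) t
        rw [map_zsmul, LinearMap.smul_apply]))
    (by
      refine (AddSubgroup.closure_le _).2 ?_
      rintro x ⟨s, t, f, rfl⟩
      simp only [SetLike.mem_coe, AddMonoidHom.mem_ker, map_sub,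
        TensorProduct.liftAddHom_tmul, AddMonoidHom.coe_mk, ZeroHom.coe_mk]
      show f (s • t) - (op s • f) t = 0
      rw [homDomSMul_apply]
      simp)

end Nu


/-! ## Resolutions and derived-functor vanishing -/

/-- The data of a nonnegatively graded chain complex `⋯ → P 1 → P 0 → X` of `A`-modules. -/
structure ResolutionData (A : Type u) [Ring A] (X : Type u) [AddCommGroup X] [Module A X] :
    Type (u + 1) where
  P : ℕ → Type u
  [instAdd : ∀ n, AddCommGroup (P n)]
  [instMod : ∀ n, Module A (P n)]
  d : ∀ n, P (n + 1) →ₗ[A] P n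
  ε : P 0 →ₗ[A] X

attribute [instance] ResolutionData.instAdd ResolutionData.instMod

/-- The property of being a projective resolution. -/
structure ResolutionData.IsProjResolution {A : Type u} [Ring A] {X : Type u} [AddCommGroup X]
    [Module A X] (Q : ResolutionData A X) : Prop where
  proj : ∀ n, Module.Projective A (Q.P n)
  surj : Function.Surjective Q.ε
  exact0 : Function.Exact (Q.d 0) Q.ε
  exactSucc : ∀ n, Function.Exact (Q.d (n + 1)) (Q.d n)

/-- `X` has a resolution by finitely generated projective `A`-modules. -/
def HasFGProjResolution (A : Type u) [Ring A] (X : Type u) [AddCommGroup X] [Module A X] : Prop :=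
  ∃ Q : ResolutionData A X, Q.IsProjResolution ∧ ∀ n, Module.Finite A (Q.P n)

/-- `Ext^i_A(X, Y) = 0` for all `i ≥ 1`: some (equivalently, any) projective resolution of `X`
has `Hom_A(-, Y)`-complex exact at all positive degrees. -/
def ExtVanishAll (A : Type u) [Ring A] (X Y : Type u) [AddCommGroup X] [Module A X]
    [AddCommGroup Y] [Module A Y] : Prop :=
  ∃ Q : ResolutionData A X, Q.IsProjResolution ∧
    ∀ j : ℕ, Function.Exact
      (fun f : Q.P j →ₗ[A] Y => f.comp (Q.d j))
      (fun f : Q.P (j + 1) →ₗ[A] Y => f.comp (Q.d (j + 1)))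

/-- `Ext^1_A(X, Y) = 0`: every short exact sequence `0 → Y → E → X → 0` splits. -/
def Ext1Vanishes (A : Type u) [Ring A] (X Y : Type u) [AddCommGroup X] [Module A X]
    [AddCommGroup Y] [Module A Y] : Prop :=
  ∀ (E : Type u) [AddCommGroup E] [Module A E] (i : Y →ₗ[A] E) (p : E →ₗ[A] X),
    Function.Injective i → Function.Surjective p → Function.Exact i p →
      ∃ s : X →ₗ[A] E, p.comp s = LinearMap.id

/-- `Tor^S_i(N, T) = 0` for all `i ≥ 1`: some (equivalently, any) projective resolution of the
right `S`-module `N` stays exact in positive degrees after applying `- ⊗_S T`. -/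
def TorVanishAll (S : Type u) [Ring S] (N : Type u) [AddCommGroup N] [Module Sᵐᵒᵖ N]
    (T : Type u) [AddCommGroup T] [Module S T] : Prop :=
  ∃ Q : ResolutionData Sᵐᵒᵖ N, Q.IsProjResolution ∧
    ∀ j : ℕ, Function.Exact
      (⇑(MTensor.map (T := T) (Q.d (j + 1))))
      (⇑(MTensor.map (T := T) (Q.d j)))

/-! ## Homological dimensions -/

/-- A surjection onto `M` from some module. -/
structure EpiOnto (A : Type u) [Ring A] (M : ModuleCat.{u} A) : Type (u + 1) where
  P : ModuleCat.{u} A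
  f : P →ₗ[A] M
  surj : Function.Surjective f

/-- An injection of `M` into some module. -/
structure MonoInto (A : Type u) [Ring A] (M : ModuleCat.{u} A) : Type (u + 1) where
  E : ModuleCat.{u} A
  f : M →ₗ[A] E
  inj : Function.Injective f

/-- `HasClassResolution A 𝒞 n M` says that there is an exact sequence
`0 → C_n → ⋯ → C_0 → M → 0` with all `C_i` in the class `𝒞`. -/
def HasClassResolution (A : Type u) [Ring A] (C : ModuleCat.{u} A → Prop) :
    ℕ → ModuleCat.{u} A → Prop
  | 0, M => C M
  | n + 1, M => ∃ e : EpiOnto A M, C e.P ∧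
      HasClassResolution A C n (ModuleCat.of A (LinearMap.ker e.f))

/-- `HasClassCoresolution A 𝒞 n M` says that there is an exact sequence
`0 → M → C^0 → ⋯ → C^n → 0` with all `C^i` in the class `𝒞`. -/
def HasClassCoresolution (A : Type u) [Ring A] (C : ModuleCat.{u} A → Prop) :
    ℕ → ModuleCat.{u} A → Prop
  | 0, M => C M
  | n + 1, M => ∃ m : MonoInto A M, C m.E ∧
      HasClassCoresolution A C n (ModuleCat.of A ((↥m.E) ⧸ LinearMap.range m.f))

/-- The projective dimension of `M` is at most `n`. -/
def ProjDimLE (A : Type u) [Ring A] (M : Type u) [AddCommGroup M] [Module A M] (n : ℕ) : Prop :=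
  HasClassResolution A (fun P => Module.Projective A P) n (ModuleCat.of A M)

/-- The injective dimension of `M` is at most `n`. -/
def InjDimLE (A : Type u) [Ring A] (M : Type u) [AddCommGroup M] [Module A M] (n : ℕ) : Prop :=
  HasClassCoresolution A (fun E => Module.Injective A E) n (ModuleCat.of A M)

/-- A right `S`-module `N` is flat if `N ⊗_S -` preserves injections of left `S`-modules. -/
def IsFlatRightModule (S : Type u) [Ring S] (N : Type u) [AddCommGroup N] [Module Sᵐᵒᵖ N] :
    Prop :=
  ∀ (X Y : Type u) [AddCommGroup X] [Module S X] [AddCommGroup Y] [Module S Y]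
    (g : X →ₗ[S] Y), Function.Injective g →
      Function.Injective (MTensor.lmap (N := N) g)

/-- The flat dimension of the right `S`-module `N` is at most `n`. -/
def FlatDimLE (S : Type u) [Ring S] (N : Type u) [AddCommGroup N] [Module Sᵐᵒᵖ N] (n : ℕ) :
    Prop :=
  HasClassResolution Sᵐᵒᵖ (fun P => IsFlatRightModule S P) n (ModuleCat.of Sᵐᵒᵖ N)

/-! ## Gorenstein homological algebra -/

/-- The data of a `ℤ`-indexed complex of `A`-modules. -/
structure ZComplex (A : Type u) [Ring A] : Type (u + 1) where
  P : ℤ → Type u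
  [instAdd : ∀ i, AddCommGroup (P i)]
  [instMod : ∀ i, Module A (P i)]
  d : ∀ i, P i →ₗ[A] P (i + 1)

attribute [instance] ZComplex.instAdd ZComplex.instMod

/-- Exactness of a `ℤ`-indexed complex. -/
def ZComplex.IsExact {A : Type u} [Ring A] (C : ZComplex A) : Prop :=
  ∀ i, Function.Exact (C.d i) (C.d (i + 1))

/-- A module is Gorenstein projective if it is a kernel of a totally acyclic complex of
projective modules. -/
def IsGorensteinProjective (A : Type u) [Ring A] (N : Type u) [AddCommGroup N] [Module A N] :
    Prop :=
  ∃ C : ZComplex A, (∀ i, Module.Projective A (C.P i)) ∧ C.IsExact ∧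
    (∀ (Q : Type u) [AddCommGroup Q] [Module A Q], Module.Projective A Q →
      ∀ i, Function.Exact
        (fun f : C.P (i + 1 + 1) →ₗ[A] Q => f.comp (C.d (i + 1)))
        (fun f : C.P (i + 1) →ₗ[A] Q => f.comp (C.d i))) ∧
    Nonempty (N ≃ₗ[A] LinearMap.ker (C.d 0))

/-- A module is Gorenstein injective if it is a kernel of a totally acyclic complex of
injective modules. -/
def IsGorensteinInjective (A : Type u) [Ring A] (M : Type u) [AddCommGroup M] [Module A M] :
    Prop :=
  ∃ C : ZComplex A, (∀ i, Module.Injective A (C.P i)) ∧ C.IsExact ∧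
    (∀ (I : Type u) [AddCommGroup I] [Module A I], Module.Injective A I →
      ∀ i, Function.Exact
        (fun f : I →ₗ[A] C.P i => (C.d i).comp f)
        (fun f : I →ₗ[A] C.P (i + 1) => (C.d (i + 1)).comp f)) ∧
    Nonempty (M ≃ₗ[A] LinearMap.ker (C.d 0))

/-- A right `S`-module is Gorenstein flat if it is a kernel of a complex of flat right
`S`-modules which stays exact after tensoring with any injective left `S`-module. -/
def IsGorensteinFlat (S : Type u) [Ring S] (N : Type u) [AddCommGroup N] [Module Sᵐᵒᵖ N] :
    Prop :=
  ∃ C : ZComplex Sᵐᵒᵖ, (∀ i, IsFlatRightModule S (C.P i)) ∧ C.IsExact ∧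
    (∀ (I : Type u) [AddCommGroup I] [Module S I], Module.Injective S I →
      ∀ i, Function.Exact
        (⇑(MTensor.map (T := I) (C.d i)))
        (⇑(MTensor.map (T := I) (C.d (i + 1))))) ∧
    Nonempty (N ≃ₗ[Sᵐᵒᵖ] LinearMap.ker (C.d 0))

/-- The Gorenstein projective dimension of `N` is at most `n`. -/
def GpdLE (A : Type u) [Ring A] (N : Type u) [AddCommGroup N] [Module A N] (n : ℕ) : Prop :=
  HasClassResolution A (fun P => IsGorensteinProjective A P) n (ModuleCat.of A N)

/-- The Gorenstein flat dimension of the right `S`-module `N` is at most `n`. -/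
def GfdLE (S : Type u) [Ring S] (N : Type u) [AddCommGroup N] [Module Sᵐᵒᵖ N] (n : ℕ) : Prop :=
  HasClassResolution Sᵐᵒᵖ (fun P => IsGorensteinFlat S P) n (ModuleCat.of Sᵐᵒᵖ N)

/-- The Gorenstein injective dimension of `M` is at most `n`. -/
def GidLE (A : Type u) [Ring A] (M : Type u) [AddCommGroup M] [Module A M] (n : ℕ) : Prop :=
  HasClassCoresolution A (fun E => IsGorensteinInjective A E) n (ModuleCat.of A M)

/-! ## Module classes `Prod(C)`, `Add(C)`, `add(C)` and (co)generators -/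

/-- `M` is a retract (equivalently, a direct summand up to isomorphism) of `P`. -/
def IsRetractOf (A : Type u) [Ring A] (M P : Type u) [AddCommGroup M] [Module A M]
    [AddCommGroup P] [Module A P] : Prop :=
  ∃ (f : M →ₗ[A] P) (g : P →ₗ[A] M), g.comp f = LinearMap.id

/-- `Prod(C)`: direct summands of direct products of copies of `C`. -/
def InProdClass (A : Type u) [Ring A] (C : Type u) [AddCommGroup C] [Module A C]
    (M : ModuleCat.{u} A) : Prop :=
  ∃ I : Type u, IsRetractOf A M (I → C)

/-- `Add(C)`: direct summands of direct sums of copies of `C`. -/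
def InAddClass (A : Type u) [Ring A] (C : Type u) [AddCommGroup C] [Module A C]
    (M : ModuleCat.{u} A) : Prop :=
  ∃ I : Type u, IsRetractOf A M (I →₀ C)

/-- `add(C)`: direct summands of finite direct sums of copies of `C`. -/
def InFinAddClass (A : Type u) [Ring A] (C : Type u) [AddCommGroup C] [Module A C]
    (M : ModuleCat.{u} A) : Prop :=
  ∃ k : ℕ, IsRetractOf A M (Fin k → C)

/-- `Q` is an injective cogenerator: `Q` is injective and every module embeds into a direct
product of copies of `Q`. -/
def IsInjectiveCogenerator (A : Type u) [Ring A] (Q : Type u) [AddCommGroup Q] [Module A Q] :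
    Prop :=
  Module.Injective A Q ∧
    ∀ (M : Type u) [AddCommGroup M] [Module A M],
      ∃ (I : Type u) (f : M →ₗ[A] (I → Q)), Function.Injective f

/-- `E` is the minimal injective cogenerator: it is an injective cogenerator which is a direct
summand of every injective cogenerator. -/
def IsMinimalInjectiveCogenerator (A : Type u) [Ring A] (E : Type u) [AddCommGroup E]
    [Module A E] : Prop :=
  IsInjectiveCogenerator A E ∧
    ∀ (Q : Type u) [AddCommGroup Q] [Module A Q],
      IsInjectiveCogenerator A Q → IsRetractOf A E Q

/-! ## Bimodules, homotheties, Wakamatsu tilting bimodules -/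

section Bimodules

variable (S R : Type u) [Ring S] [Ring R]
variable (T : Type u) [AddCommGroup T] [Module S T] [Module Rᵐᵒᵖ T] [SMulCommClass S Rᵐᵒᵖ T]

/-- The natural map `S → End(T_R)` given by the left `S`-action. -/
def leftHomothety : S → (T →ₗ[Rᵐᵒᵖ] T) := fun s =>
  { toFun := fun t => s • t
    map_add' := fun t t' => smul_add s t t'
    map_smul' := fun ρ t => smul_comm s ρ t }

/-- The natural map `R → End(_S T)` given by the right `R`-action. -/
def rightHomothety : R → (T →ₗ[S] T) := fun r =>
  { toFun := fun t => op r • t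
    map_add' := fun t t' => smul_add (op r) t t'
    map_smul' := fun s t => (smul_comm s (op r) t).symm }

/-- A Wakamatsu tilting `(S, R)`-bimodule: `T` admits resolutions by finitely generated
projectives on both sides, the natural maps `S → End(T_R)` and `R → End(_S T)` are
isomorphisms, and `Ext^i(T, T) = 0` on both sides for all `i ≥ 1`. -/
structure IsWakamatsuTilting : Prop where
  fgProjResR : HasFGProjResolution Rᵐᵒᵖ T
  fgProjResS : HasFGProjResolution S T
  bijS : Function.Bijective (leftHomothety S R T)
  bijR : Function.Bijective (rightHomothety S R T)
  extR : ExtVanishAll Rᵐᵒᵖ T T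
  extS : ExtVanishAll S T T

/-- An `(S, R)`-bimodule `T` is tensorly faithful if `T ⊗_R M = 0` implies `M = 0` and
`N ⊗_S T = 0` implies `N = 0`. -/
def IsTensorlyFaithful : Prop :=
  (∀ (M : Type u) [AddCommGroup M] [Module R M],
      Subsingleton (MTensor R T M) → Subsingleton M) ∧
  (∀ (N : Type u) [AddCommGroup N] [Module Sᵐᵒᵖ N],
      Subsingleton (MTensor S N T) → Subsingleton N)

/-- Membership in the Auslander class `𝒜_T(S)`. -/
structure InAuslanderClass (N : Type u) [AddCommGroup N] [Module Sᵐᵒᵖ N] : Prop where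
  torVanish : TorVanishAll S N T
  extVanish : ExtVanishAll Rᵐᵒᵖ T (MTensor S N T)
  thetaBij : Function.Bijective (MTensor.thetaFun S N T R)

/-- Membership in the Bass class `ℬ_T(R)`. -/
structure InBassClass (M : Type u) [AddCommGroup M] [Module Rᵐᵒᵖ M] : Prop where
  extVanish : ExtVanishAll Rᵐᵒᵖ T M
  torVanish : TorVanishAll S (T →ₗ[Rᵐᵒᵖ] M) T
  nuBij : Function.Bijective (MTensor.nuFun S R T M)

end Bimodules

/-! ## Cotilting and tilting modules -/

/-- A cotilting right `R`-module (Hügel–Coelho): finite injective dimension,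
`Ext^{i≥1}_R(Cᴵ, C) = 0` for every index set `I`, and there is a finite exact sequence
`0 → C_r → ⋯ → C_0 → Q → 0` with all `C_i ∈ Prod(C)` and `Q` an injective cogenerator. -/
structure IsCotilting (R : Type u) [Ring R] (C : Type u) [AddCommGroup C] [Module Rᵐᵒᵖ C] :
    Prop where
  finInjDim : ∃ n, InjDimLE Rᵐᵒᵖ C n
  extProdVanish : ∀ I : Type u, ExtVanishAll Rᵐᵒᵖ (I → C) C
  coresolution : ∃ (Q : ModuleCat.{u} Rᵐᵒᵖ) (r : ℕ),
    IsInjectiveCogenerator Rᵐᵒᵖ Q ∧ HasClassResolution Rᵐᵒᵖ (InProdClass Rᵐᵒᵖ C) r Q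

/-- An `n`-tilting right `R`-module (Miyashita). -/
structure IsNTilting (R : Type u) [Ring R] (T : Type u) [AddCommGroup T] [Module Rᵐᵒᵖ T]
    (n : ℕ) : Prop where
  fgProjRes : HasFGProjResolution Rᵐᵒᵖ T
  projDim : ProjDimLE Rᵐᵒᵖ T n
  extVanish : ExtVanishAll Rᵐᵒᵖ T T
  coresolution : HasClassCoresolution Rᵐᵒᵖ (InFinAddClass Rᵐᵒᵖ T) n (ModuleCat.of Rᵐᵒᵖ R)

/-- The data of a coresolution `0 → R → P 0 → P 1 → ⋯` of right `R`-modules. -/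
structure WakamatsuCoresolutionData (R : Type u) [Ring R] : Type (u + 1) where
  P : ℕ → Type u
  [instAdd : ∀ n, AddCommGroup (P n)]
  [instMod : ∀ n, Module Rᵐᵒᵖ (P n)]
  f0 : R →ₗ[Rᵐᵒᵖ] P 0
  d : ∀ n, P n →ₗ[Rᵐᵒᵖ] P (n + 1)

attribute [instance] WakamatsuCoresolutionData.instAdd WakamatsuCoresolutionData.instMod

/-- A Wakamatsu tilting right `R`-module: it admits a resolution by finitely generated
projective right `R`-modules, `Ext^{i≥1}_R(T, T) = 0`, and there is an exact sequence
`0 → R → T^0 → T^1 → ⋯` with each `T^i ∈ add(T)` and `Ext^1_R(Coker f, T) = 0` for every map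
`f` in this sequence. -/
def IsWakamatsuTiltingModule (R : Type u) [Ring R] (T : Type u) [AddCommGroup T]
    [Module Rᵐᵒᵖ T] : Prop :=
  HasFGProjResolution Rᵐᵒᵖ T ∧ ExtVanishAll Rᵐᵒᵖ T T ∧
    ∃ W : WakamatsuCoresolutionData R,
      Function.Injective W.f0 ∧ Function.Exact W.f0 (W.d 0) ∧
      (∀ n, Function.Exact (W.d n) (W.d (n + 1))) ∧
      (∀ n, InFinAddClass Rᵐᵒᵖ T (ModuleCat.of Rᵐᵒᵖ (W.P n))) ∧
      Ext1Vanishes Rᵐᵒᵖ ((W.P 0) ⧸ LinearMap.range W.f0) T ∧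
      (∀ n, Ext1Vanishes Rᵐᵒᵖ ((W.P (n + 1)) ⧸ LinearMap.range (W.d n)) T)

section

open CategoryTheory CategoryTheory.Abelian

/-! ## Vanishing of `Ext` -/

section ExtVanishing

/-- The vanishing of `Ext^n_A(X, Y)`. -/
def ExtZero (A : Type u) [Ring A] (X Y : Type u) [AddCommGroup X] [Module A X] [AddCommGroup Y]
    [Module A Y] (n : ℕ) : Prop :=
  Subsingleton (Ext.{u} (ModuleCat.of A X) (ModuleCat.of A Y) n)

variable {A : Type u} [Ring A]

/-- `0 → X → Y → Z → 0` is a short exact sequence. -/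
structure IsSES {X Y Z : Type u} [AddCommGroup X] [Module A X] [AddCommGroup Y] [Module A Y]
    [AddCommGroup Z] [Module A Z] (f : X →ₗ[A] Y) (g : Y →ₗ[A] Z) : Prop where
  inj : Injective f
  surj : Surjective g
  exact : Exact f g

variable {X Y Z W : Type u} [AddCommGroup X] [Module A X] [AddCommGroup Y] [Module A Y]
  [AddCommGroup Z] [Module A Z] [AddCommGroup W] [Module A W]

theorem isSES_subtype_ker {g : Y →ₗ[A] Z} (hg : Surjective g) :
    IsSES (LinearMap.ker g).subtype g :=
  ⟨Subtype.val_injective, hg, LinearMap.exact_subtype_ker_map g⟩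

theorem isSES_mkQ_range {f : X →ₗ[A] Y} (hf : Injective f) :
    IsSES f (LinearMap.range f).mkQ :=
  ⟨hf, Submodule.mkQ_surjective _, LinearMap.exact_map_mkQ_range f⟩

theorem IsSES.extClass {f : X →ₗ[A] Y} {g : Y →ₗ[A] Z} (h : IsSES f g) :
    (ShortComplex.mk (ModuleCat.ofHom f) (ModuleCat.ofHom g)
      (by ext x; exact h.exact.apply_apply_eq_zero x)).ShortExact where
  exact := by
    rw [ShortComplex.ShortExact.moduleCat_exact_iff_function_exact]
    exact h.exact
  mono_f := (ModuleCat.mono_iff_injective _).2 h.inj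
  epi_g := (ModuleCat.epi_iff_surjective _).2 h.surj

theorem exists_projective_presentation (A : Type u) [Ring A] (X : Type u) [AddCommGroup X]
    [Module A X] : ∃ g : (X →₀ A) →ₗ[A] X, Surjective g :=
  ⟨Finsupp.linearCombination A id, Finsupp.linearCombination_id_surjective A X⟩

theorem exists_injective_embedding (A : Type u) [Ring A] (X : Type u) [AddCommGroup X]
    [Module A X] : ∃ (I : ModuleCat.{u} A) (f : X →ₗ[A] I),
      Module.Injective A I ∧ Injective f := by
  let I := CategoryTheory.Injective.under (ModuleCat.of A X)
  let f : ModuleCat.of A X ⟶ I := CategoryTheory.Injective.ι _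
  refine ⟨I, f.hom, ?_, (ModuleCat.mono_iff_injective f).1 inferInstance⟩
  exact (Module.injective_iff_injective_object A I).2
    (inferInstanceAs (CategoryTheory.Injective I))

section

variable {f : X →ₗ[A] Y} {g : Y →ₗ[A] Z} {n : ℕ}

theorem ExtZero.retract_right {X' : Type u} [AddCommGroup X'] [Module A X']
    (h : ExtZero A W X n) (i : X' →ₗ[A] X) (r : X →ₗ[A] X') (hr : r ∘ₗ i = LinearMap.id) :
    ExtZero A W X' n := by
  refine subsingleton_of_forall_eq 0 fun e => ?_
  have h1 : e.comp (Ext.mk₀ (ModuleCat.ofHom i)) (add_zero n) = 0 := h.elim _ _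
  have h2 : ModuleCat.ofHom i ≫ ModuleCat.ofHom r = 𝟙 (ModuleCat.of A X') := by
    rw [← ModuleCat.ofHom_comp, hr]; rfl
  rw [← Ext.comp_mk₀_id e, ← h2, ← Ext.mk₀_comp_mk₀, ← Ext.comp_assoc_of_third_deg_zero, h1,
    Ext.zero_comp]

theorem ExtZero.retract_left {X' : Type u} [AddCommGroup X'] [Module A X']
    (h : ExtZero A X W n) (i : X' →ₗ[A] X) (r : X →ₗ[A] X') (hr : r ∘ₗ i = LinearMap.id) :
    ExtZero A X' W n := by
  refine subsingleton_of_forall_eq 0 fun e => ?_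
  have h1 : (Ext.mk₀ (ModuleCat.ofHom r)).comp e (zero_add n) = 0 := h.elim _ _
  have h2 : ModuleCat.ofHom i ≫ ModuleCat.ofHom r = 𝟙 (ModuleCat.of A X') := by
    rw [← ModuleCat.ofHom_comp, hr]; rfl
  rw [← Ext.mk₀_id_comp e, ← h2, ← Ext.mk₀_comp_mk₀_assoc, h1, Ext.comp_zero]

theorem ExtZero.congr_right (h : ExtZero A W X n) (e : X ≃ₗ[A] Y) : ExtZero A W Y n :=
  h.retract_right e.symm.toLinearMap e.toLinearMap (by ext; simp)

theorem ExtZero.congr_left (h : ExtZero A X W n) (e : X ≃ₗ[A] Y) : ExtZero A Y W n :=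
  h.retract_left e.symm.toLinearMap e.toLinearMap (by ext; simp)

theorem extZero_of_injective [Module.Injective A Y] : ExtZero A X Y (n + 1) := by
  have := Module.injective_object_of_injective_module A Y
  exact subsingleton_of_forall_eq 0 fun e => e.eq_zero_of_injective

theorem extZero_of_projective [Module.Projective A X] : ExtZero A X Y (n + 1) := by
  have := (IsProjective.iff_projective (R := A) X).1 ‹_›
  exact subsingleton_of_forall_eq 0 fun e => e.eq_zero_of_projective

namespace IsSES

theorem cov₃ (h : IsSES f g) (h₂ : ExtZero A W Y n) (h₁ : ExtZero A W X (n + 1)) :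
    ExtZero A W Z n := by
  refine subsingleton_of_forall_eq 0 fun e => ?_
  obtain ⟨x, rfl⟩ := Ext.covariant_sequence_exact₃ _ h.extClass e rfl (h₁.elim _ _)
  rw [h₂.elim x 0, Ext.zero_comp]

theorem cov₁ (h : IsSES f g) (h₃ : ExtZero A W Z n) (h₂ : ExtZero A W Y (n + 1)) :
    ExtZero A W X (n + 1) := by
  refine subsingleton_of_forall_eq 0 fun e => ?_
  obtain ⟨x, rfl⟩ := Ext.covariant_sequence_exact₁ _ h.extClass e (h₂.elim _ _) rfl
  rw [h₃.elim x 0, Ext.zero_comp]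

theorem con₁ (h : IsSES f g) (h₂ : ExtZero A Y W n) (h₃ : ExtZero A Z W (n + 1)) :
    ExtZero A X W n := by
  refine subsingleton_of_forall_eq 0 fun e => ?_
  obtain ⟨x, rfl⟩ := Ext.contravariant_sequence_exact₁ h.extClass _ e (add_comm 1 n)
    (h₃.elim _ _)
  rw [h₂.elim x 0, Ext.comp_zero]

theorem con₃ (h : IsSES f g) (h₁ : ExtZero A X W n) (h₂ : ExtZero A Y W (n + 1)) :
    ExtZero A Z W (n + 1) := by
  refine subsingleton_of_forall_eq 0 fun e => ?_
  obtain ⟨x, rfl⟩ := Ext.contravariant_sequence_exact₃ h.extClass _ e (h₂.elim _ _)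
    (add_comm 1 n)
  rw [h₁.elim x 0, Ext.comp_zero]

theorem lift (h : IsSES f g) (h₁ :
    ExtZero A W X 1) (φ : W →ₗ[A] Z) : ∃ ψ : W →ₗ[A] Y, g ∘ₗ ψ = φ := by
  obtain ⟨x, hx⟩ := Ext.covariant_sequence_exact₃ _ h.extClass
    (Ext.mk₀ (ModuleCat.ofHom φ)) rfl (h₁.elim _ _)
  obtain ⟨ψ, rfl⟩ := (Ext.mk₀_bijective _ _).2 x
  rw [Ext.mk₀_comp_mk₀] at hx
  have := (Ext.mk₀_bijective _ _).1 hx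
  exact ⟨ψ.hom, by simpa using congrArg ModuleCat.Hom.hom this⟩

theorem cov₁_of_lift (h : IsSES f g) (hl : ∀ φ : W →ₗ[A] Z, ∃ ψ : W →ₗ[A] Y, g ∘ₗ ψ = φ)
    (h₂ : ExtZero A W Y 1) : ExtZero A W X 1 := by
  refine subsingleton_of_forall_eq 0 fun e => ?_
  obtain ⟨x, rfl⟩ := Ext.covariant_sequence_exact₁ _ h.extClass e (h₂.elim _ _) rfl
  obtain ⟨φ, rfl⟩ := (Ext.mk₀_bijective _ _).2 x
  obtain ⟨ψ, hψ⟩ := hl φ.hom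
  have hφ : φ = ModuleCat.ofHom ψ ≫ ModuleCat.ofHom g := by
    ext x; exact (LinearMap.congr_fun hψ x).symm
  rw [hφ, ← Ext.mk₀_comp_mk₀, Ext.comp_assoc_of_second_deg_zero]
  erw [h.extClass.comp_extClass]
  rw [Ext.comp_zero]

theorem extend (h : IsSES f g) (h₃ :
    ExtZero A Z W 1) (φ : X →ₗ[A] W) : ∃ ψ : Y →ₗ[A] W, ψ ∘ₗ f = φ := by
  obtain ⟨x, hx⟩ := Ext.contravariant_sequence_exact₁ h.extClass _
    (Ext.mk₀ (ModuleCat.ofHom φ)) rfl (h₃.elim _ _)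
  obtain ⟨ψ, rfl⟩ := (Ext.mk₀_bijective _ _).2 x
  rw [Ext.mk₀_comp_mk₀] at hx
  have := (Ext.mk₀_bijective _ _).1 hx
  exact ⟨ψ.hom, by simpa using congrArg ModuleCat.Hom.hom this⟩

theorem con₃_of_extend (h : IsSES f g) (hl : ∀ φ : X →ₗ[A] W, ∃ ψ : Y →ₗ[A] W, ψ ∘ₗ f = φ)
    (h₂ : ExtZero A Y W 1) : ExtZero A Z W 1 := by
  refine subsingleton_of_forall_eq 0 fun e => ?_
  obtain ⟨x, rfl⟩ := Ext.contravariant_sequence_exact₃ h.extClass _ e (h₂.elim _ _)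
    (add_zero 1)
  obtain ⟨φ, rfl⟩ := (Ext.mk₀_bijective _ _).2 x
  obtain ⟨ψ, hψ⟩ := hl φ.hom
  have hφ : φ = ModuleCat.ofHom f ≫ ModuleCat.ofHom ψ := by
    ext x; exact (LinearMap.congr_fun hψ x).symm
  rw [hφ, ← Ext.mk₀_comp_mk₀, ← Ext.comp_assoc_of_second_deg_zero]
  erw [h.extClass.extClass_comp]
  rw [Ext.zero_comp]

end IsSES

end

end ExtVanishing

end

section

open CategoryTheory CategoryTheory.Abelian

section ExtVanishing

variable {A : Type u} [Ring A]
variable {X Y Z W : Type u} [AddCommGroup X] [Module A X] [AddCommGroup Y] [Module A Y]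
  [AddCommGroup Z] [Module A Z] [AddCommGroup W] [Module A W]

theorem extZero_pi_right {ι : Type u} {n : ℕ} (h : ExtZero A X Y (n + 1)) :
    ExtZero A X (ι → Y) (n + 1) := by
  obtain ⟨p, hp⟩ := exists_projective_presentation A X
  induction n generalizing X with
  | zero =>
    refine (isSES_subtype_ker hp).con₃_of_extend (fun φ => ?_) extZero_of_projective
    choose ψ hψ using fun i => (isSES_subtype_ker hp).extend h (LinearMap.proj i ∘ₗ φ)
    exact ⟨LinearMap.pi ψ, LinearMap.ext fun x => funext fun i => LinearMap.congr_fun (hψ i) x⟩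
  | succ n ih =>
    have h' := (isSES_subtype_ker hp).con₁ (n := n + 1) extZero_of_projective h
    obtain ⟨q, hq⟩ := exists_projective_presentation A (LinearMap.ker p)
    exact (isSES_subtype_ker hp).con₃ (ih h' q hq) extZero_of_projective

theorem extZero_finsupp_left {ι : Type u} {n : ℕ} (h : ExtZero A X Y (n + 1)) :
    ExtZero A (ι →₀ X) Y (n + 1) := by
  obtain ⟨I, f, hI, hf⟩ := exists_injective_embedding A Y
  induction n generalizing Y I with
  | zero =>
    refine (isSES_mkQ_range hf).cov₁_of_lift (fun φ => ?_) extZero_of_injective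
    choose ψ hψ using fun i => (isSES_mkQ_range hf).lift h (φ ∘ₗ Finsupp.lsingle i)
    refine ⟨Finsupp.lsum ℕ ψ, Finsupp.lhom_ext fun i x => ?_⟩
    simpa using LinearMap.congr_fun (hψ i) x
  | succ n ih =>
    have h' := (isSES_mkQ_range hf).cov₃ (n := n + 1) extZero_of_injective h
    obtain ⟨J, g, hJ, hg⟩ := exists_injective_embedding A (I ⧸ LinearMap.range f)
    exact (isSES_mkQ_range hf).cov₁ (ih h' J g hJ hg) extZero_of_injective

theorem extZero_fin_left {k n : ℕ} (h : ExtZero A X Y (n + 1)) :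
    ExtZero A (Fin k → X) Y (n + 1) :=
  (extZero_finsupp_left (ι := ULift.{u} (Fin k)) h).congr_left
    ((Finsupp.linearEquivFunOnFinite A X _).trans
      (LinearEquiv.funCongrLeft A X Equiv.ulift.symm))

/-- A linear map from a finitely generated module to a direct sum lands in a finite subsum. -/
theorem exists_finset_range_le_supported [Module.Finite A X] {ι : Type*} (f : X →ₗ[A] (ι →₀ Y)) :
    ∃ s : Finset ι, ∀ x, f x ∈ Finsupp.supported Y A (s : Set ι) := by
  classical
  obtain ⟨t, ht⟩ := Module.Finite.fg_top (R := A) (M := X)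
  refine ⟨t.biUnion fun x => (f x).support, fun x => ?_⟩
  have hx : x ∈ Submodule.span A (t : Set X) := ht ▸ Submodule.mem_top
  have hle : Submodule.span A (t : Set X) ≤
      (Finsupp.supported Y A ((t.biUnion fun x => (f x).support : Finset ι) : Set ι)).comap f := by
    refine Submodule.span_le.2 fun y hy => ?_
    rw [SetLike.mem_coe, Submodule.mem_comap, Finsupp.mem_supported, Finset.coe_subset]
    exact Finset.subset_biUnion_of_mem (fun x => (f x).support) hy
  exact hle hx

theorem exists_fg_projective_presentation (A : Type u) [Ring A] (X : Type u) [AddCommGroup X]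
    [Module A X] [Module.Finite A X] : ∃ (k : ℕ) (g : (Fin k → A) →ₗ[A] X), Surjective g :=
  Module.Finite.exists_fin' A X

theorem extZero_finsupp_right [IsNoetherianRing A] [Module.Finite A X] {ι : Type u} {n : ℕ}
    (h : ExtZero A X Y (n + 1)) : ExtZero A X (ι →₀ Y) (n + 1) := by
  obtain ⟨k, p, hp⟩ := exists_fg_projective_presentation A X
  induction n generalizing X k with
  | zero =>
    refine (isSES_subtype_ker hp).con₃_of_extend (fun φ => ?_) extZero_of_projective
    obtain ⟨s, hs⟩ := exists_finset_range_le_supported φ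
    choose ψ hψ using fun i : ι =>
      (isSES_subtype_ker hp).extend h (Finsupp.lapply i ∘ₗ φ)
    refine ⟨∑ i ∈ s, Finsupp.lsingle i ∘ₗ ψ i, LinearMap.ext fun x => ?_⟩
    have h1 : ∀ i, ψ i x.1 = φ x i := fun i => LinearMap.congr_fun (hψ i) x
    have h2 : φ x = ∑ i ∈ s, Finsupp.single i (φ x i) := by
      conv_lhs => rw [← Finsupp.sum_single (φ x)]
      exact Finsupp.sum_of_support_subset _ ((Finsupp.mem_supported _ _).1 (hs x)) _ (by simp)
    simp only [LinearMap.comp_apply, LinearMap.sum_apply, Submodule.subtype_apply, h1,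
      Finsupp.lsingle_apply]
    exact h2.symm
  | succ n ih =>
    have h' := (isSES_subtype_ker hp).con₁ (n := n + 1) extZero_of_projective h
    obtain ⟨l, q, hq⟩ := exists_fg_projective_presentation A (LinearMap.ker p)
    exact (isSES_subtype_ker hp).con₃ (ih h' l q hq) extZero_of_projective

/-! ### Projective resolutions -/

/-- The syzygies of the canonical free resolution of `X`. -/
def freeSyzygy (A : Type u) [Ring A] (X : Type u) [AddCommGroup X] [Module A X] :
    ℕ → ModuleCat.{u} A
  | 0 => ModuleCat.of A X
  | n + 1 => ModuleCat.of A
      (LinearMap.ker (Finsupp.linearCombination A (id : freeSyzygy A X n → freeSyzygy A X n)))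

/-- The canonical free resolution of `X`. -/
def freeResolution (A : Type u) [Ring A] (X : Type u) [AddCommGroup X] [Module A X] :
    ResolutionData A X where
  P n := freeSyzygy A X n →₀ A
  d n := (LinearMap.ker (Finsupp.linearCombination A
    (id : freeSyzygy A X n → freeSyzygy A X n))).subtype ∘ₗ
      Finsupp.linearCombination A (id : freeSyzygy A X (n + 1) → freeSyzygy A X (n + 1))
  ε := Finsupp.linearCombination A (id : X → X)

theorem exact_subtype_ker_comp {P₂ : Type u} [AddCommGroup P₂] [Module A P₂] (p : Y →ₗ[A] Z)
    (q : P₂ →ₗ[A] LinearMap.ker p) (hq : Surjective q) :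
    Exact ((LinearMap.ker p).subtype ∘ₗ q) p := by
  intro y
  constructor
  · intro hy
    obtain ⟨x, hx⟩ := hq ⟨y, hy⟩
    exact ⟨x, by simp [hx]⟩
  · rintro ⟨x, rfl⟩
    exact (q x).2

theorem freeResolution_isProjResolution (A : Type u) [Ring A] (X : Type u) [AddCommGroup X]
    [Module A X] : (freeResolution A X).IsProjResolution where
  proj n := inferInstanceAs (Module.Projective A (freeSyzygy A X n →₀ A))
  surj := Finsupp.linearCombination_id_surjective A X
  exact0 := exact_subtype_ker_comp (Finsupp.linearCombination A (id : X → X)) _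
    (Finsupp.linearCombination_id_surjective A (freeSyzygy A X 1))
  exactSucc n := by
    have := exact_subtype_ker_comp
      (Finsupp.linearCombination A (id : freeSyzygy A X (n + 1) → freeSyzygy A X (n + 1))) _
      (Finsupp.linearCombination_id_surjective A (freeSyzygy A X (n + 2)))
    exact fun y => Iff.trans (map_eq_zero_iff (LinearMap.ker (Finsupp.linearCombination A
      (id : freeSyzygy A X n → freeSyzygy A X n))).subtype Subtype.val_injective) (this y)

/-- The resolution of the first syzygy obtained by truncating a resolution. -/
def ResolutionData.truncate (Q : ResolutionData A X) (h : Exact (Q.d 0) Q.ε) :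
    ResolutionData A (LinearMap.ker Q.ε) where
  P n := Q.P (n + 1)
  d n := Q.d (n + 1)
  ε := (Q.d 0).codRestrict _ fun x => h.apply_apply_eq_zero x

theorem ResolutionData.IsProjResolution.truncate {Q : ResolutionData A X}
    (h : Q.IsProjResolution) : (Q.truncate h.exact0).IsProjResolution where
  proj n := h.proj (n + 1)
  surj := fun ⟨y, hy⟩ => by
    obtain ⟨x, rfl⟩ := (h.exact0 y).1 hy
    exact ⟨x, rfl⟩
  exact0 := fun y => by
    refine Iff.trans ?_ (h.exactSucc 0 y)
    exact Subtype.ext_iff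
  exactSucc n := h.exactSucc (n + 1)

theorem exists_factor_of_surjective {p : X →ₗ[A] Y} (hp : Surjective p) (f : X →ₗ[A] Z)
    (hf : ∀ x, p x = 0 → f x = 0) : ∃ φ : Y →ₗ[A] Z, φ ∘ₗ p = f := by
  refine ⟨((LinearMap.ker p).liftQ f hf) ∘ₗ
    (LinearMap.quotKerEquivOfSurjective p hp).symm.toLinearMap, LinearMap.ext fun x => ?_⟩
  have : (LinearMap.quotKerEquivOfSurjective p hp).symm (p x) = Submodule.Quotient.mk x := by
    rw [LinearEquiv.symm_apply_eq]; rfl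
  rw [LinearMap.comp_apply, LinearMap.comp_apply, LinearEquiv.coe_coe, this]
  rfl

theorem extVanishAll_iff : ExtVanishAll A X Y ↔ ∀ n, ExtZero A X Y (n + 1) := by
  constructor
  · rintro ⟨Q, hQ, hE⟩ n
    have hP := hQ.proj 0
    have hS := isSES_subtype_ker hQ.surj
    induction n generalizing X with
    | zero =>
      refine hS.con₃_of_extend (fun φ => ?_) extZero_of_projective
      obtain ⟨ψ, hψ⟩ := (hE 0 (φ ∘ₗ (Q.truncate hQ.exact0).ε)).1
        (LinearMap.ext fun x => by
          have := hQ.truncate.exact0.apply_apply_eq_zero x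
          exact (congrArg φ this).trans (map_zero φ))
      refine ⟨ψ, LinearMap.ext fun x => ?_⟩
      obtain ⟨y, rfl⟩ := hQ.truncate.surj x
      exact LinearMap.congr_fun hψ y
    | succ n ih =>
      exact hS.con₃ (ih (Q.truncate hQ.exact0) hQ.truncate (fun j => hE (j + 1))
        (hQ.proj 1) (isSES_subtype_ker hQ.truncate.surj)) extZero_of_projective
  · intro h
    have hR := freeResolution_isProjResolution A X
    refine ⟨freeResolution A X, hR, ?_⟩
    generalize freeResolution A X = Q at hR
    intro j
    induction j generalizing X with
    | zero =>
      intro f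
      constructor
      · intro hf
        obtain ⟨φ, hφ⟩ := exists_factor_of_surjective hR.truncate.surj f fun x hx => by
          obtain ⟨y, rfl⟩ := (hR.truncate.exact0 x).1 hx
          exact LinearMap.congr_fun hf y
        obtain ⟨ψ, hψ⟩ := (isSES_subtype_ker hR.surj).extend (h 0) φ
        refine ⟨ψ, ?_⟩
        rw [← hφ, ← hψ]
        rfl
      · rintro ⟨ψ, rfl⟩
        refine LinearMap.ext fun x => ?_
        exact (congrArg ψ ((hR.exactSucc 0).apply_apply_eq_zero x)).trans (map_zero ψ)
    | succ j ih =>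
      have hP := hR.proj 0
      exact ih (fun n => (isSES_subtype_ker hR.surj).con₁ extZero_of_projective (h (n + 1)))
        (Q.truncate hR.exact0) hR.truncate

end ExtVanishing

end

/-! ## The tensor product over a noncommutative ring -/

section MTensorAPI

variable {S : Type u} [Ring S] {N : Type u} [AddCommGroup N] [Module Sᵐᵒᵖ N]
  {T : Type u} [AddCommGroup T] [Module S T]

namespace MTensor

theorem mk_add_left (n n' : N) (t : T) :
    (mk (n + n') t : MTensor S N T) = mk n t + mk n' t := by
  show QuotientAddGroup.mk _ = _
  rw [TensorProduct.tmul_add]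
  rfl

theorem add_mk (n : N) (t t' : T) : (mk n (t + t') : MTensor S N T) = mk n t + mk n t' := by
  show QuotientAddGroup.mk _ = _
  rw [TensorProduct.add_tmul]
  rfl

theorem smul_mk_eq (s : S) (n : N) (t : T) :
    (mk (op s • n) t : MTensor S N T) = mk n (s • t) := by
  refine (QuotientAddGroup.eq.2 ?_)
  rw [neg_add_eq_sub]
  exact AddSubgroup.subset_closure ⟨s, t, n, rfl⟩

variable (S N T) in
/-- The balanced map `(n, t) ↦ n ⊗ t` as a biadditive map. -/
def mkHom : N →+ T →+ MTensor S N T where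
  toFun n :=
    { toFun := fun t => mk n t
      map_zero' := by
        have := add_mk (S := S) n (0 : T) 0
        simpa using this
      map_add' := add_mk n }
  map_zero' := by
    ext t
    have := mk_add_left (S := S) (0 : N) 0 t
    simpa using this
  map_add' n n' := by ext t; exact mk_add_left n n' t

@[simp] theorem mkHom_apply (n : N) (t : T) : mkHom S N T n t = mk n t := rfl

theorem induction_on {p : MTensor S N T → Prop} (x : MTensor S N T) (h0 : p 0)
    (hmk : ∀ n t, p (mk n t)) (hadd : ∀ x y, p x → p y → p (x + y)) : p x := by
  obtain ⟨y, rfl⟩ := QuotientAddGroup.mk_surjective x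
  induction y using TensorProduct.induction_on with
  | zero => exact h0
  | tmul t n => exact hmk n t
  | add y z hy hz => exact hadd _ _ hy hz

theorem hom_ext {G : Type*} [AddCommGroup G] {f g : MTensor S N T →+ G}
    (h : ∀ n t, f (mk n t) = g (mk n t)) : f = g := by
  ext x
  induction x using induction_on with
  | h0 => simp
  | hmk n t => exact h n t
  | hadd x y hx hy => rw [map_add, map_add, hx, hy]

/-- A balanced biadditive map induces a map on the tensor product. -/
def lift {G : Type*} [AddCommGroup G] (f : N →+ T →+ G)
    (hf : ∀ (s : S) n t, f (op s • n) t = f n (s • t)) : MTensor S N T →+ G :=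
  QuotientAddGroup.lift _
    (TensorProduct.liftAddHom f.flip (fun z t n => by simp))
    (by
      refine (AddSubgroup.closure_le _).2 ?_
      rintro x ⟨s, t, n, rfl⟩
      simp [hf])

@[simp] theorem lift_mk {G : Type*} [AddCommGroup G] (f : N →+ T →+ G)
    (hf : ∀ (s : S) n t, f (op s • n) t = f n (s • t)) (n : N) (t : T) :
    lift f hf (mk n t) = f n t := rfl

@[simp] theorem map_mk {N' : Type u} [AddCommGroup N'] [Module Sᵐᵒᵖ N'] (g : N →ₗ[Sᵐᵒᵖ] N')
    (n : N) (t : T) : map g (mk n t) = mk (g n) t := rfl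

theorem mk_sum {ι : Type*} (s : Finset ι) (n : ι → N) (t : T) :
    (mk (∑ i ∈ s, n i) t : MTensor S N T) = ∑ i ∈ s, mk (n i) t := by
  simp only [← mkHom_apply, map_sum, AddMonoidHom.finsetSum_apply]

theorem sum_mk {ι : Type*} (s : Finset ι) (n : N) (t : ι → T) :
    (mk n (∑ i ∈ s, t i) : MTensor S N T) = ∑ i ∈ s, mk n (t i) := by
  simp only [← mkHom_apply, map_sum]

@[simp] theorem zero_mk (t : T) : (mk (0 : N) t : MTensor S N T) = 0 := by
  rw [← mkHom_apply, map_zero, AddMonoidHom.zero_apply]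

@[simp] theorem mk_zero (n : N) : (mk n (0 : T) : MTensor S N T) = 0 := by
  rw [← mkHom_apply, map_zero]

end MTensor

end MTensorAPI

section HomFaithful

variable {R : Type u} [Ring R]


/-- The left `R`-module structure on the character group of a right `R`-module. -/
@[reducible] def charDualModule (R : Type u) [Ring R] (L : Type u) [AddCommGroup L]
    [Module Rᵐᵒᵖ L] :
    Module R (CharacterModule L) where
  smul r φ := (φ : L →+ AddCircle (1 : ℚ)).comp (DistribSMul.toAddMonoidHom L (op r))
  one_smul φ := by
    refine DFunLike.ext _ _ fun x => congrArg φ (one_smul Rᵐᵒᵖ x)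
  mul_smul r s φ := by
    refine DFunLike.ext _ _ fun x => congrArg φ ?_
    exact mul_smul (op s) (op r) x
  smul_zero r := rfl
  smul_add r φ ψ := rfl
  add_smul r s φ := by
    refine DFunLike.ext _ _ fun x => ?_
    exact (congrArg φ (add_smul (op r) (op s) x)).trans (map_add φ _ _)
  zero_smul φ := by
    refine DFunLike.ext _ _ fun x => ?_
    exact (congrArg φ (zero_smul Rᵐᵒᵖ x)).trans (map_zero φ)

/-- If `C ⊗_R -` detects zero modules then so does `Hom_R(C, -)`, for `C` finitely presented. -/
theorem subsingleton_of_hom_eq_zero [IsNoetherianRing Rᵐᵒᵖ] {C : Type u} [AddCommGroup C]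
    [Module Rᵐᵒᵖ C] [Module.Finite Rᵐᵒᵖ C]
    (hC : ∀ (M : Type u) [AddCommGroup M] [Module R M],
      Subsingleton (MTensor R C M) → Subsingleton M)
    {L : Type u} [AddCommGroup L] [Module Rᵐᵒᵖ L] (h : ∀ f : C →ₗ[Rᵐᵒᵖ] L, f = 0) :
    Subsingleton L := by
  classical
  obtain ⟨n, p, hp⟩ := exists_fg_projective_presentation Rᵐᵒᵖ C
  obtain ⟨m, q, hq⟩ := exists_fg_projective_presentation Rᵐᵒᵖ (LinearMap.ker p)
  let c : Fin n → C := fun i => p (Pi.single i 1)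
  let r : Fin m → Fin n → Rᵐᵒᵖ := fun k => (q (Pi.single k 1)).1
  have hpx : ∀ x, p x = ∑ i, x i • c i := fun x => by
    conv_lhs => rw [← Finset.univ_sum_single x]
    simp only [map_sum, c, ← map_smul, ← Pi.single_smul, smul_eq_mul, mul_one]
  have hrc : ∀ k, ∑ i, r k i • c i = 0 := fun k => (hpx _).symm.trans (q (Pi.single k 1)).2
  let D : (Fin n → L) →+ (Fin m → L) :=
    { toFun := fun l k => ∑ i, r k i • l i
      map_zero' := by ext k; simp
      map_add' := fun l l' => by ext k; simp [Finset.sum_add_distrib] }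
  have hD : Injective D := by
    refine (injective_iff_map_eq_zero D).2 fun l hl => ?_
    let g : (Fin n → Rᵐᵒᵖ) →ₗ[Rᵐᵒᵖ] L := Fintype.linearCombination Rᵐᵒᵖ l
    obtain ⟨φ, hφ⟩ := exists_factor_of_surjective hp g fun x hx => by
      obtain ⟨y, hy⟩ := hq ⟨x, hx⟩
      have hy' : x = ∑ k, y k • r k := by
        have h1 : q y = ∑ k, y k • q (Pi.single k 1) := by
          conv_lhs => rw [← Finset.univ_sum_single y]
          simp only [map_sum, ← map_smul, ← Pi.single_smul, smul_eq_mul, mul_one]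
        rw [hy] at h1
        simpa using congrArg Subtype.val h1
      rw [hy', map_sum]
      refine Finset.sum_eq_zero fun k _ => ?_
      rw [map_smul]
      have : g (r k) = 0 := congrFun hl k
      rw [this, smul_zero]
    ext i
    have h2 : g (Pi.single i 1) = 0 := by rw [← hφ, h φ]; rfl
    simpa [g, Fintype.linearCombination_apply_single] using h2
  let _ := charDualModule R L
  have hsm : ∀ (r : R) (φ : CharacterModule L) (x : L), (r • φ) x = φ (op r • x) :=
    fun _ _ _ => rfl
  have key : ∀ (φ : CharacterModule L) (i₀ : Fin n),
      (MTensor.mk (c i₀) φ : MTensor R C (CharacterModule L)) = 0 := by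
    intro φ i₀
    obtain ⟨Ψ, hΨ⟩ := CharacterModule.dual_surjective_of_injective (R := ℤ)
      D.toIntLinearMap hD ((φ : L →+ AddCircle (1 : ℚ)).comp (Pi.evalAddMonoidHom _ i₀))
    let ψ : Fin m → CharacterModule L := fun k =>
      (Ψ : (Fin m → L) →+ AddCircle (1 : ℚ)).comp (AddMonoidHom.single (fun _ => L) k)
    have h1 : ∀ l : Fin n → L, φ (l i₀) = ∑ k, ψ k (∑ i, r k i • l i) := fun l => by
      have e1 : φ (l i₀) = Ψ (D l) := (DFunLike.congr_fun hΨ l).symm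
      rw [e1, ← Finset.univ_sum_single (D l), map_sum]
      rfl
    have h2 : ∀ i, (if i = i₀ then φ else 0) = ∑ k, unop (r k i) • ψ k := fun i => by
      refine DFunLike.ext _ _ fun x => ?_
      have e1 := h1 (Pi.single i x)
      have e2 : ∀ k, ∑ j, r k j • (Pi.single i x : Fin n → L) j = r k i • x := fun k => by
        rw [Finset.sum_eq_single i (fun j _ hj => by rw [Pi.single_eq_of_ne hj, smul_zero])
          (fun hi => absurd (Finset.mem_univ i) hi), Pi.single_eq_same]
      have e3 : (∑ k, unop (r k i) • ψ k) x = ∑ k, ψ k (r k i • x) := by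
        refine (AddMonoidHom.finsetSum_apply _ _ _).trans ?_
        rfl
      rw [e3]
      simp only [e2] at e1
      rw [← e1]
      split_ifs with hi
      · subst hi; simp
      · rw [Pi.single_eq_of_ne (Ne.symm hi), map_zero]; rfl
    have h3 : (MTensor.mk (c i₀) φ : MTensor R C (CharacterModule L)) =
        ∑ i, MTensor.mk (c i) (if i = i₀ then φ else 0) := by
      rw [Finset.sum_eq_single i₀] <;> simp +contextual
    rw [h3]
    simp only [h2, MTensor.sum_mk, ← MTensor.smul_mk_eq, op_unop]
    rw [Finset.sum_comm]
    refine Finset.sum_eq_zero fun k _ => ?_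
    rw [← MTensor.mk_sum, hrc, MTensor.zero_mk]
  have hz : Subsingleton (CharacterModule L) := hC _ <| subsingleton_of_forall_eq 0 fun z => by
    induction z using MTensor.induction_on with
    | h0 => rfl
    | hmk c' φ =>
      obtain ⟨x, rfl⟩ := hp c'
      rw [hpx, MTensor.mk_sum]
      refine Finset.sum_eq_zero fun i _ => ?_
      rw [← op_unop (x i), MTensor.smul_mk_eq, key]
    | hadd x y hx hy => rw [hx, hy, add_zero]
  refine subsingleton_of_forall_eq 0 fun x => ?_
  by_contra hx
  obtain ⟨φ, hφ⟩ := CharacterModule.exists_character_apply_ne_zero_of_ne_zero hx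
  exact hφ (by rw [hz.elim φ 0]; rfl)

end HomFaithful

section Coresolution

variable {S R : Type u} [Ring S] [Ring R]
  {C : Type u} [AddCommGroup C] [Module Rᵐᵒᵖ C] [Module S C] [SMulCommClass S Rᵐᵒᵖ C]
  {Y : Type u} [AddCommGroup Y] [Module Rᵐᵒᵖ Y]

/-- A family of linear maps into `C`, whose `S`-span consists of all linear maps vanishing
on `T`. -/
def HomFGOn (S : Type u) [Ring S] {C : Type u} [AddCommGroup C] [Module Rᵐᵒᵖ C] [Module S C]
    (T : Submodule Rᵐᵒᵖ Y) : Prop :=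
  ∃ (n : ℕ) (g : Fin n → Y →ₗ[Rᵐᵒᵖ] C), (∀ i, ∀ x ∈ T, g i x = 0) ∧
    ∀ f : Y →ₗ[Rᵐᵒᵖ] C, (∀ x ∈ T, f x = 0) → ∃ s : Fin n → S, ∀ x, f x = ∑ i, s i • g i x

theorem exists_smul_eq (hEnd : Bijective (leftHomothety S R C)) (f : C →ₗ[Rᵐᵒᵖ] C) :
    ∃ s : S, ∀ c, f c = s • c := by
  obtain ⟨s, rfl⟩ := hEnd.2 f
  exact ⟨s, fun _ => rfl⟩

theorem eq_zero_of_smul_eq_zero (hEnd : Bijective (leftHomothety S R C)) {s : S}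
    (h : ∀ c : C, s • c = 0) : s = 0 := by
  refine hEnd.1 (LinearMap.ext fun c => ?_)
  exact (h c).trans (zero_smul S c).symm

theorem homFGOn_bot_pi [Module.Finite S C] (m : ℕ) :
    HomFGOn S (C := C) (⊥ : Submodule Rᵐᵒᵖ (Fin m → Rᵐᵒᵖ)) := by
  obtain ⟨d, c, hc⟩ := Submodule.fg_iff_exists_fin_generating_family.1
    (Module.Finite.fg_top (R := S) (M := C))
  let e := finProdFinEquiv (m := m) (n := d)
  refine ⟨m * d, fun i => (LinearMap.toSpanSingleton Rᵐᵒᵖ C (c (e.symm i).2)) ∘ₗ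
    LinearMap.proj (e.symm i).1, by rintro i x rfl; simp, fun f _ => ?_⟩
  have hs : ∀ i, ∃ s : Fin d → S, ∑ j, s j • c j = f (Pi.single i 1) := fun i => by
    have : f (Pi.single i 1) ∈ Submodule.span S (Set.range c) := hc ▸ Submodule.mem_top
    exact (Submodule.mem_span_range_iff_exists_fun S).1 this
  choose s hs using hs
  refine ⟨fun i => s (e.symm i).1 (e.symm i).2, fun x => ?_⟩
  rw [← e.sum_comp, Fintype.sum_prod_type]
  conv_lhs => rw [← Finset.univ_sum_single x]
  rw [map_sum]
  refine Finset.sum_congr rfl fun i _ => ?_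
  have : (Pi.single i (x i) : Fin m → Rᵐᵒᵖ) = x i • Pi.single i 1 := by
    rw [← Pi.single_smul, smul_eq_mul, mul_one]
  rw [this, map_smul, ← hs, Finset.smul_sum]
  refine Finset.sum_congr rfl fun j _ => ?_
  simp [smul_comm]

theorem HomFGOn.of_bot [IsNoetherian Rᵐᵒᵖ Y] (hEnd : Bijective (leftHomothety S R C))
    (hS : IsLeftCoherentRing S)
    (hC : ∀ (L : Type u) [AddCommGroup L] [Module Rᵐᵒᵖ L],
      (∀ f : C →ₗ[Rᵐᵒᵖ] L, f = 0) → Subsingleton L)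
    (h : HomFGOn S (C := C) (⊥ : Submodule Rᵐᵒᵖ Y)) (T : Submodule Rᵐᵒᵖ Y) :
    HomFGOn S (C := C) T := by
  obtain ⟨T₀, ⟨hT₀, hP⟩, hmax⟩ := set_has_maximal_iff_noetherian.2 ‹IsNoetherian Rᵐᵒᵖ Y›
    {T' | T' ≤ T ∧ HomFGOn S (C := C) T'} ⟨⊥, bot_le, h⟩
  rcases hT₀.eq_or_lt with rfl | hlt
  · exact hP
  exfalso
  obtain ⟨α, hα⟩ : ∃ α : C →ₗ[Rᵐᵒᵖ] T.map T₀.mkQ, α ≠ 0 := by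
    by_contra! hcon
    have := hC _ hcon
    refine hlt.not_ge fun x hx => ?_
    have h1 : (⟨T₀.mkQ x, Submodule.mem_map_of_mem hx⟩ : T.map T₀.mkQ) = 0 := this.elim _ _
    simpa using congrArg Subtype.val h1
  let β : C →ₗ[Rᵐᵒᵖ] Y ⧸ T₀ := (T.map T₀.mkQ).subtype ∘ₗ α
  obtain ⟨n, g, hg0, hg⟩ := hP
  choose a ha using fun i => exists_smul_eq hEnd (T₀.liftQ (g i) (hg0 i) ∘ₗ β)
  let l : (Fin n → S) →ₗ[S] Submodule.span S (Set.range a) :=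
    (Fintype.linearCombination S a).codRestrict _ fun x => by
      rw [Fintype.linearCombination_apply]
      exact Submodule.sum_mem _ fun i _ =>
        Submodule.smul_mem _ _ (Submodule.subset_span ⟨i, rfl⟩)
  have hl : Surjective l := fun ⟨x, hx⟩ => by
    obtain ⟨c, hc⟩ := (Submodule.mem_span_range_iff_exists_fun S).1 hx
    exact ⟨c, Subtype.ext hc⟩
  have hlker : ∀ t : Fin n → S, l t = 0 ↔ ∀ c : C, ∑ i, t i • a i • c = 0 := fun t => by
    have e : ∀ c : C, ∑ i, t i • a i • c = (l t).1 • c := fun c => by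
      simp [l, Fintype.linearCombination_apply, Finset.sum_smul, mul_smul]
    simp only [e]
    exact ⟨fun h c => by rw [h]; simp,
      fun h => Subtype.ext (eq_zero_of_smul_eq_zero hEnd h)⟩
  have hfp := hS (Submodule.span S (Set.range a)) (Submodule.fg_span (Set.finite_range a))
  obtain ⟨k, t, ht⟩ := Submodule.fg_iff_exists_fin_generating_family.1
    (Module.FinitePresentation.fg_ker l hl)
  have htker : ∀ j, l (t j) = 0 := fun j => by
    have : t j ∈ LinearMap.ker l := ht ▸ Submodule.subset_span ⟨j, rfl⟩
    exact this
  have hmk : ∀ i x c, T₀.mkQ x = β c → g i x = a i • c := fun i x c hx => by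
    rw [← ha i c, LinearMap.comp_apply, ← hx]
    rfl
  have hT' : HomFGOn S (C := C) ((LinearMap.range β).comap T₀.mkQ) := by
    refine ⟨k, fun j => ∑ i, leftHomothety S R C (t j i) ∘ₗ g i, ?_, fun f hf => ?_⟩
    · rintro j x ⟨c, hc⟩
      have e : ∀ i, (leftHomothety S R C (t j i) ∘ₗ g i) x = t j i • a i • c := fun i =>
        congrArg (t j i • ·) (hmk i x c hc.symm)
      rw [LinearMap.sum_apply]
      simp only [e]
      exact (hlker _).1 (htker j) c
    · obtain ⟨s, hs⟩ := hg f fun x hx => hf x <| by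
        rw [Submodule.mem_comap, Submodule.mkQ_apply, (Submodule.Quotient.mk_eq_zero _).2 hx]
        exact zero_mem _
      have hsk : s ∈ LinearMap.ker l := by
        refine (hlker s).2 fun c => ?_
        obtain ⟨x, hx⟩ := T₀.mkQ_surjective (β c)
        rw [← hf x (by rw [Submodule.mem_comap, hx]; exact ⟨c, rfl⟩), hs]
        simp only [hmk _ x c hx]
      rw [← ht] at hsk
      obtain ⟨v, hv⟩ := (Submodule.mem_span_range_iff_exists_fun S).1 hsk
      refine ⟨v, fun x => ?_⟩
      rw [hs, ← hv]
      simp only [LinearMap.sum_apply, LinearMap.comp_apply, Finset.sum_apply, Pi.smul_apply,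
        Finset.sum_smul, Finset.smul_sum, smul_eq_mul, mul_smul]
      rw [Finset.sum_comm]
      rfl
  refine hmax _ ⟨?_, hT'⟩ (lt_of_le_of_ne ?_ ?_)
  · rintro x ⟨c, hc⟩
    obtain ⟨y, hy, hxy⟩ := (α c).2
    have : y - x ∈ T₀ := (Submodule.Quotient.eq _).1 (hxy.trans hc)
    have h2 := T.sub_mem hy (hlt.le this)
    simpa using h2
  · intro x hx
    rw [Submodule.mem_comap, Submodule.mkQ_apply, (Submodule.Quotient.mk_eq_zero _).2 hx]
    exact zero_mem _
  · intro heq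
    refine hα (LinearMap.ext fun c => Subtype.ext ?_)
    obtain ⟨x, hx⟩ := T₀.mkQ_surjective (β c)
    have : x ∈ T₀ := by
      rw [heq, Submodule.mem_comap, hx]
      exact ⟨c, rfl⟩
    exact hx.symm.trans ((Submodule.Quotient.mk_eq_zero _).2 this)

/-- The maps from a finitely generated module to `C` are finitely generated over `S`. -/
theorem exists_hom_generators [IsNoetherianRing Rᵐᵒᵖ] [Module.Finite Rᵐᵒᵖ Y]
    (hEnd : Bijective (leftHomothety S R C)) [Module.Finite S C] (hS : IsLeftCoherentRing S)
    (hC : ∀ (L : Type u) [AddCommGroup L] [Module Rᵐᵒᵖ L],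
      (∀ f : C →ₗ[Rᵐᵒᵖ] L, f = 0) → Subsingleton L) :
    ∃ (k : ℕ) (φ : Y →ₗ[Rᵐᵒᵖ] (Fin k → C)),
      ∀ f : Y →ₗ[Rᵐᵒᵖ] C, ∃ s : Fin k → S, ∀ x, f x = ∑ i, s i • φ x i := by
  obtain ⟨m, p, hp⟩ := exists_fg_projective_presentation Rᵐᵒᵖ Y
  obtain ⟨k, g, hg0, hg⟩ := HomFGOn.of_bot hEnd hS hC (homFGOn_bot_pi m) (LinearMap.ker p)
  choose φ hφ using fun i => exists_factor_of_surjective hp (g i) (hg0 i)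
  refine ⟨k, LinearMap.pi φ, fun f => ?_⟩
  obtain ⟨s, hs⟩ := hg (f ∘ₗ p) fun x hx => (congrArg f hx).trans (map_zero f)
  refine ⟨s, fun x => ?_⟩
  obtain ⟨y, rfl⟩ := hp x
  refine (hs y).trans (Finset.sum_congr rfl fun i _ => ?_)
  exact congrArg (s i • ·) (LinearMap.congr_fun (hφ i) y).symm

/-- The map given by a matrix over `S`. -/
def matHom (R : Type u) [Ring R] {C : Type u} [AddCommGroup C] [Module Rᵐᵒᵖ C] [Module S C]
    [SMulCommClass S Rᵐᵒᵖ C] {ι : Type*} {k : ℕ} (m : ι → Fin k → S) :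
    (Fin k → C) →ₗ[Rᵐᵒᵖ] (ι → C) where
  toFun c l := ∑ i, m l i • c i
  map_add' c c' := by ext l; simp [Finset.sum_add_distrib]
  map_smul' r c := by ext l; simp [Finset.smul_sum, smul_comm]

theorem matHom_apply {ι : Type*} {k : ℕ} (m : ι → Fin k → S) (c : Fin k → C) (l : ι) :
    matHom R m c l = ∑ i, m l i • c i := rfl

theorem exists_eq_matHom (hEnd : Bijective (leftHomothety S R C)) {ι : Type*} {k : ℕ}
    (f : (Fin k → C) →ₗ[Rᵐᵒᵖ] (ι → C)) : ∃ m : ι → Fin k → S, f = matHom R m := by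
  choose m hm using fun l i =>
    exists_smul_eq hEnd (LinearMap.proj l ∘ₗ f ∘ₗ LinearMap.single Rᵐᵒᵖ (fun _ => C) i)
  refine ⟨m, LinearMap.ext fun c => funext fun l => ?_⟩
  rw [matHom_apply]
  conv_lhs => rw [← Finset.univ_sum_single c]
  simp only [← hm]
  simp

/-- Every map from a finitely generated module to a power of `C` factors through a finite
power of `C`. -/
def FactorsThroughFinitePowers (A : Type u) [Ring A] (C D : Type u) [AddCommGroup C] [Module A C]
    [AddCommGroup D] [Module A D] : Prop :=
  ∀ (Y : Type u) [AddCommGroup Y] [Module A Y] [Module.Finite A Y] (f : Y →ₗ[A] D),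
    ∃ (k : ℕ) (a : Y →ₗ[A] (Fin k → C)) (b : (Fin k → C) →ₗ[A] D), b ∘ₗ a = f

theorem factorsThroughFinitePowers_pi [IsNoetherianRing Rᵐᵒᵖ]
    (hEnd : Bijective (leftHomothety S R C)) [Module.Finite S C] (hS : IsLeftCoherentRing S)
    (hC : ∀ (L : Type u) [AddCommGroup L] [Module Rᵐᵒᵖ L],
      (∀ f : C →ₗ[Rᵐᵒᵖ] L, f = 0) → Subsingleton L) (X : Type u) :
    FactorsThroughFinitePowers Rᵐᵒᵖ C (X → C) := by
  intro Y _ _ _ f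
  obtain ⟨k, φ, hφ⟩ := exists_hom_generators (Y := Y) hEnd hS hC
  choose m hm using fun x => hφ (LinearMap.proj x ∘ₗ f)
  exact ⟨k, φ, matHom R m, LinearMap.ext fun y => funext fun x => (hm x y).symm⟩

theorem HasClassResolution.extZero {A : Type u} [Ring A] {C Y : Type u} [AddCommGroup C]
    [Module A C] [AddCommGroup Y] [Module A Y] (hY : ∀ n, ExtZero A Y C (n + 1)) {r : ℕ}
    {Q : ModuleCat.{u} A} (h : HasClassResolution A (InProdClass A C) r Q) :
    (∀ n, ExtZero A Y Q (n + 1)) ∧ ∀ φ : Y →ₗ[A] Q, ∃ (I : Type u) (ψ : Y →ₗ[A] (I → C))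
      (g : (I → C) →ₗ[A] Q), g ∘ₗ ψ = φ := by
  induction r generalizing Q with
  | zero =>
    obtain ⟨I, i, r, hr⟩ := h
    refine ⟨fun n => (extZero_pi_right (hY n)).retract_right i r hr, fun φ =>
      ⟨I, i ∘ₗ φ, r, by rw [← LinearMap.comp_assoc, hr, LinearMap.id_comp]⟩⟩
  | succ r ih =>
    obtain ⟨e, ⟨I, i, ρ, hρ⟩, hK⟩ := h
    have hK' := (ih hK).1
    refine ⟨fun n => (isSES_subtype_ker e.surj).cov₃
      ((extZero_pi_right (hY n)).retract_right i ρ hρ) (hK' (n + 1)), fun φ => ?_⟩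
    obtain ⟨ψ, hψ⟩ := (isSES_subtype_ker e.surj).lift (hK' 0) φ
    refine ⟨I, i ∘ₗ ψ, e.f ∘ₗ ρ, ?_⟩
    rw [LinearMap.comp_assoc, ← LinearMap.comp_assoc ψ, hρ, LinearMap.id_comp, hψ]

theorem IsCotilting.cogenerates (h : IsCotilting R C) (hY : ∀ n, ExtZero Rᵐᵒᵖ Y C (n + 1))
    {y : Y} (hy : ∀ f : Y →ₗ[Rᵐᵒᵖ] C, f y = 0) : y = 0 := by
  obtain ⟨Q, r, ⟨-, hQ⟩, hr⟩ := h.coresolution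
  obtain ⟨I, f, hf⟩ := hQ Y
  refine hf (funext fun i => ?_)
  obtain ⟨J, ψ, g, hg⟩ := (hr.extZero hY).2 (LinearMap.proj i ∘ₗ f)
  have h1 : ψ y = 0 := funext fun j => hy (LinearMap.proj j ∘ₗ ψ)
  have h2 := LinearMap.congr_fun hg y
  rw [LinearMap.comp_apply, h1, map_zero] at h2
  rw [map_zero]
  exact h2.symm

variable (S R C) in
/-- A coresolution `0 → R → C^{k 0} → C^{k 1} → ⋯` whose cosyzygies `X j` are left orthogonal
to `C`. -/
structure FinCoresolution where
  X : ℕ → ModuleCat.{u} Rᵐᵒᵖ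
  k : ℕ → ℕ
  φ : ∀ j, X j →ₗ[Rᵐᵒᵖ] (Fin (k j) → C)
  π : ∀ j, (Fin (k j) → C) →ₗ[Rᵐᵒᵖ] X (j + 1)
  ses : ∀ j, IsSES (φ j) (π j)
  approx : ∀ j (f : X j →ₗ[Rᵐᵒᵖ] C), ∃ s : Fin (k j) → S, ∀ x, f x = ∑ i, s i • φ j x i
  finite : ∀ j, Module.Finite Rᵐᵒᵖ (X j)
  perp : ∀ j n, ExtZero Rᵐᵒᵖ (X j) C (n + 1)
  unit : Rᵐᵒᵖ ≃ₗ[Rᵐᵒᵖ] X 0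

theorem IsCotilting.extZero_self (h : IsCotilting R C) (n : ℕ) : ExtZero Rᵐᵒᵖ C C (n + 1) :=
  (extVanishAll_iff.1 (h.extProdVanish PUnit) n).congr_left
    (LinearEquiv.funUnique PUnit.{u + 1} Rᵐᵒᵖ C)

theorem exists_finCoresolution [IsNoetherianRing Rᵐᵒᵖ]
    (hEnd : Bijective (leftHomothety S R C)) [Module.Finite S C] [Module.Finite Rᵐᵒᵖ C]
    (hS : IsLeftCoherentRing S)
    (hC : ∀ (L : Type u) [AddCommGroup L] [Module Rᵐᵒᵖ L],
      (∀ f : C →ₗ[Rᵐᵒᵖ] L, f = 0) → Subsingleton L) (hcot : IsCotilting R C) :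
    Nonempty (FinCoresolution S R C) := by
  let Stage := {X : ModuleCat.{u} Rᵐᵒᵖ // Module.Finite Rᵐᵒᵖ X ∧ ∀ n, ExtZero Rᵐᵒᵖ X C (n + 1)}
  have step : ∀ X : Stage, ∃ (k : ℕ) (φ : X.1 →ₗ[Rᵐᵒᵖ] (Fin k → C)), Injective φ ∧
      ∀ f : X.1 →ₗ[Rᵐᵒᵖ] C, ∃ s : Fin k → S, ∀ x, f x = ∑ i, s i • φ x i := fun X => by
    have := X.2.1
    obtain ⟨k, φ, hφ⟩ := exists_hom_generators (Y := X.1) hEnd hS hC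
    refine ⟨k, φ, (injective_iff_map_eq_zero φ).2 fun x hx => hcot.cogenerates X.2.2 fun f => ?_,
      hφ⟩
    obtain ⟨s, hs⟩ := hφ f
    rw [hs, hx]
    simp
  choose k φ hφ hs using step
  let next : Stage → Stage := fun X => ⟨ModuleCat.of Rᵐᵒᵖ ((Fin (k X) → C) ⧸ LinearMap.range (φ X)),
    inferInstanceAs (Module.Finite Rᵐᵒᵖ ((Fin (k X) → C) ⧸ LinearMap.range (φ X))), fun n => by
      have hk : ∀ n, ExtZero Rᵐᵒᵖ (Fin (k X) → C) C (n + 1) := fun n =>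
        extZero_fin_left (hcot.extZero_self n)
      cases n with
      | zero =>
        refine (isSES_mkQ_range (hφ X)).con₃_of_extend (fun f => ?_) (hk 0)
        obtain ⟨s, hs⟩ := hs X f
        refine ⟨∑ i, leftHomothety S R C (s i) ∘ₗ LinearMap.proj i, LinearMap.ext fun x => ?_⟩
        rw [hs, LinearMap.comp_apply, LinearMap.sum_apply]
        rfl
      | succ n => exact (isSES_mkQ_range (hφ X)).con₃ (X.2.2 n) (hk (n + 1))⟩
  let st : ℕ → Stage := fun j => next^[j] ⟨ModuleCat.of Rᵐᵒᵖ Rᵐᵒᵖ,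
    Module.Finite.self Rᵐᵒᵖ, fun n => extZero_of_projective⟩
  have hst : ∀ j, st (j + 1) = next (st j) := fun j => Function.iterate_succ_apply' _ _ _
  have hpi : ∀ j, ∃ π : (Fin (k (st j)) → C) →ₗ[Rᵐᵒᵖ] (st (j + 1)).1, IsSES (φ (st j)) π :=
    fun j => by
      rw [hst]
      exact ⟨_, isSES_mkQ_range (hφ (st j))⟩
  choose π hπ using hpi
  exact ⟨⟨fun j => (st j).1, fun j => k (st j), fun j => φ (st j), π, hπ,
    fun j => hs (st j), fun j => (st j).2.1, fun j => (st j).2.2, LinearEquiv.refl _ _⟩⟩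

end Coresolution

/-! ## `Tor` through a free resolution of the left module -/

section MatrixResolution

section

variable {S : Type u} [Ring S] {N N' N'' : Type u} [AddCommGroup N] [Module Sᵐᵒᵖ N]
  [AddCommGroup N'] [Module Sᵐᵒᵖ N'] [AddCommGroup N''] [Module Sᵐᵒᵖ N'']
  {T : Type u} [AddCommGroup T] [Module S T]

theorem MTensor.map_comp_apply (f : N →ₗ[Sᵐᵒᵖ] N') (g : N' →ₗ[Sᵐᵒᵖ] N'') (z : MTensor S N T) :
    MTensor.map (g ∘ₗ f) z = MTensor.map g (MTensor.map f z) :=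
  DFunLike.congr_fun (MTensor.hom_ext (f := MTensor.map (T := T) (g ∘ₗ f))
    (g := (MTensor.map g).comp (MTensor.map f)) fun _ _ => rfl) z

theorem MTensor.map_zero_apply (z : MTensor S N T) :
    MTensor.map (0 : N →ₗ[Sᵐᵒᵖ] N') z = 0 :=
  DFunLike.congr_fun (MTensor.hom_ext (f := MTensor.map (T := T) (0 : N →ₗ[Sᵐᵒᵖ] N'))
    (g := 0) fun _ t => MTensor.zero_mk t) z

end

variable {S : Type u} [Ring S] {C : Type u} [AddCommGroup C] [Module S C]

variable (S C) in
/-- A resolution of the left `S`-module `C` by finitely generated free modules, written in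
terms of matrices acting on row vectors. -/
structure MatrixResolution where
  k : ℕ → ℕ
  m : ∀ j, Fin (k (j + 1)) → Fin (k j) → S
  e : Fin (k 0) → C
  gen : ∀ c : C, ∃ s : Fin (k 0) → S, ∑ i, s i • e i = c
  rel : ∀ s : Fin (k 0) → S, ∑ i, s i • e i = 0 ↔
    ∃ t : Fin (k (0 + 1)) → S, ∀ i, s i = ∑ l, t l * m 0 l i
  exact : ∀ j (s : Fin (k (j + 1)) → S), (∀ i, ∑ l, s l * m j l i = 0) ↔
    ∃ t : Fin (k (j + 1 + 1)) → S, ∀ l, s l = ∑ p, t p * m (j + 1) p l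

section

variable {N N' : Type u} [AddCommGroup N] [AddCommGroup N'] [Module Sᵐᵒᵖ N'] [Module Sᵐᵒᵖ N]

/-- Right multiplication of a row vector over `N` by a matrix over `S`. -/
def rowMul (N : Type u) [AddCommGroup N] [Module Sᵐᵒᵖ N] {k l : ℕ} (m : Fin l → Fin k → S) :
    (Fin l → N) →+ (Fin k → N) where
  toFun n i := ∑ p, op (m p i) • n p
  map_zero' := by ext; simp
  map_add' x y := by ext; simp [Finset.sum_add_distrib]

theorem rowMul_apply {k l : ℕ} (m : Fin l → Fin k → S) (n : Fin l → N) (i : Fin k) :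
    rowMul N m n i = ∑ p, op (m p i) • n p := rfl

theorem rowMul_comp {k l : ℕ} (m : Fin l → Fin k → S) (f : N →ₗ[Sᵐᵒᵖ] N') (n : Fin l → N) :
    rowMul N' m (f ∘ n) = f ∘ rowMul N m n := by
  ext i
  simp [rowMul_apply]

end

namespace MatrixResolution

variable (K : MatrixResolution S C)

theorem mul_eq_zero (j : ℕ) (p i) : ∑ l, K.m (j + 1) p l * K.m j l i = 0 :=
  (K.exact j (K.m (j + 1) p)).2
    ⟨Pi.single p 1, fun l => by simp [Pi.single_apply]⟩ i

theorem m_smul_e (p) : ∑ i, K.m 0 p i • K.e i = 0 :=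
  (K.rel (K.m 0 p)).2 ⟨Pi.single p 1, fun l => by simp [Pi.single_apply]⟩

section

variable {N : Type u} [AddCommGroup N] [Module Sᵐᵒᵖ N]

theorem rowMul_rowMul (j : ℕ) (n) : rowMul N (K.m j) (rowMul N (K.m (j + 1)) n) = 0 := by
  ext i
  simp only [rowMul_apply, Finset.smul_sum, ← mul_smul, ← op_mul]
  rw [Finset.sum_comm]
  refine Finset.sum_eq_zero fun p _ => ?_
  rw [← Finset.sum_smul, ← Finset.op_sum, K.mul_eq_zero, op_zero, zero_smul]

variable (N) in
/-- Exactness of the complex of row vectors over `N` in degree `j + 1`. -/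
def ExactAt (j : ℕ) : Prop :=
  ∀ x, rowMul N (K.m j) x = 0 → ∃ y, rowMul N (K.m (j + 1)) y = x

theorem exactAt_of_projective [Module.Projective Sᵐᵒᵖ N] (j : ℕ) : K.ExactAt N j := by
  classical
  intro x hx
  obtain ⟨σ, hσ⟩ := Module.projective_def.1 ‹Module.Projective Sᵐᵒᵖ N›
  have h1 : ∀ v : N, ∃ t : Fin (K.k (j + 1 + 1)) → S, ∀ l,
      unop (σ (x l) v) = ∑ p, t p * K.m (j + 1) p l := fun v => by
    refine (K.exact j _).1 fun i => ?_
    have h2 := congrArg (fun z => σ (z i) v) hx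
    simp only [rowMul_apply, map_sum, map_smul, Finsupp.finsetSum_apply, Finsupp.smul_apply,
      Pi.zero_apply, map_zero, Finsupp.zero_apply, smul_eq_mul] at h2
    have h3 := congrArg unop h2
    simpa using h3
  choose t ht using h1
  let U : Finset N := Finset.univ.biUnion fun l => (σ (x l)).support
  refine ⟨fun p => ∑ v ∈ U, op (t v p) • v, funext fun l => ?_⟩
  have h4 : x l = ∑ v ∈ U, σ (x l) v • v := by
    conv_lhs => rw [← hσ (x l)]
    rw [Finsupp.linearCombination_apply]
    exact Finsupp.sum_of_support_subset _
      (Finset.subset_biUnion_of_mem (fun l => (σ (x l)).support) (Finset.mem_univ l)) _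
      (by simp)
  rw [h4, rowMul_apply]
  simp only [Finset.smul_sum]
  rw [Finset.sum_comm]
  refine Finset.sum_congr rfl fun v _ => ?_
  simp only [← mul_smul, ← op_mul]
  rw [← Finset.sum_smul, ← Finset.op_sum, ← ht, op_unop]

variable (N) in
/-- The augmentation from row vectors over `N` to `N ⊗_S C`. -/
def aug : (Fin (K.k 0) → N) →+ MTensor S N C where
  toFun n := ∑ i, MTensor.mk (n i) (K.e i)
  map_zero' := by simp
  map_add' x y := by simp [MTensor.mk_add_left, Finset.sum_add_distrib]

theorem aug_apply (n : Fin (K.k 0) → N) : K.aug N n = ∑ i, MTensor.mk (n i) (K.e i) := rfl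

theorem aug_surjective : Surjective (K.aug N) := by
  intro z
  induction z using MTensor.induction_on with
  | h0 => exact ⟨0, map_zero _⟩
  | hmk n c =>
    obtain ⟨s, rfl⟩ := K.gen c
    refine ⟨fun i => op (s i) • n, ?_⟩
    rw [aug_apply, MTensor.sum_mk]
    simp only [MTensor.smul_mk_eq]
  | hadd x y hx hy =>
    obtain ⟨a, rfl⟩ := hx
    obtain ⟨b, rfl⟩ := hy
    exact ⟨a + b, map_add _ _ _⟩

theorem map_aug {N' : Type u} [AddCommGroup N'] [Module Sᵐᵒᵖ N'] (f : N →ₗ[Sᵐᵒᵖ] N')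
    (n : Fin (K.k 0) → N) : MTensor.map f (K.aug N n) = K.aug N' (f ∘ n) := by
  simp [aug_apply]

theorem aug_rowMul (n) : K.aug N (rowMul N (K.m 0) n) = 0 := by
  simp only [aug_apply, rowMul_apply, MTensor.mk_sum, MTensor.smul_mk_eq]
  rw [Finset.sum_comm]
  refine Finset.sum_eq_zero fun p _ => ?_
  rw [← MTensor.sum_mk, K.m_smul_e, MTensor.mk_zero]

theorem aug_eq_zero_iff (x : Fin (K.k 0) → N) :
    K.aug N x = 0 ↔ ∃ y, rowMul N (K.m 0) y = x := by
  classical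
  refine ⟨fun hx => ?_, by rintro ⟨y, rfl⟩; exact K.aug_rowMul y⟩
  let Q := (Fin (K.k 0) → N) ⧸ (rowMul N (K.m 0)).range
  let q : (Fin (K.k 0) → N) →+ Q := QuotientAddGroup.mk' _
  have hq : ∀ (s s' : Fin (K.k 0) → S) (n : N), ∑ i, s i • K.e i = ∑ i, s' i • K.e i →
      q (fun i => op (s i) • n) = q (fun i => op (s' i) • n) := fun s s' n h => by
    obtain ⟨t, ht⟩ := (K.rel (s - s')).1 (by simp [sub_smul, h])
    rw [← sub_eq_zero, ← map_sub]
    refine (QuotientAddGroup.eq_zero_iff _).2 ⟨fun p => op (t p) • n, funext fun i => ?_⟩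
    have h1 : s i - s' i = _ := ht i
    simp only [rowMul_apply, Pi.sub_apply]
    rw [← sub_smul, ← op_sub, h1, Finset.op_sum, Finset.sum_smul]
    simp [mul_smul]
  choose g hg using K.gen
  let f : N →+ C →+ Q :=
    { toFun := fun n =>
        { toFun := fun c => q (fun i => op (g c i) • n)
          map_zero' := by
            rw [hq (g 0) 0 n (by simp [hg])]
            simp only [Pi.zero_apply, op_zero, zero_smul]
            exact map_zero q
          map_add' := fun c c' => by
            rw [hq (g (c + c')) (g c + g c') n (by simp [hg, add_smul, Finset.sum_add_distrib]),
              ← map_add]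
            congr 1
            ext i
            simp [add_smul] }
      map_zero' := by
        ext c
        simp only [smul_zero, AddMonoidHom.coe_mk, ZeroHom.coe_mk, AddMonoidHom.zero_apply]
        exact map_zero q
      map_add' := fun n n' => by
        ext c
        simp only [AddMonoidHom.coe_mk, ZeroHom.coe_mk, AddMonoidHom.add_apply, ← map_add]
        congr 1
        ext i
        simp }
  have hf : ∀ (s : S) n c, f (op s • n) c = f n (s • c) := fun s n c => by
    show q (fun i => op (g c i) • op s • n) = q (fun i => op (g (s • c) i) • n)
    rw [hq (g (s • c)) (fun i => s * g c i) n (by simp [hg, mul_smul, ← Finset.smul_sum])]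
    simp only [op_mul, mul_smul]
  have h1 : MTensor.lift f hf (K.aug N x) = q x := by
    rw [aug_apply, map_sum]
    conv_rhs => rw [← Finset.univ_sum_single x]
    rw [map_sum]
    refine Finset.sum_congr rfl fun i _ => ?_
    rw [MTensor.lift_mk]
    show q (fun j => op (g (K.e i) j) • x i) = _
    rw [hq (g (K.e i)) (Pi.single i 1) (x i) (by simp [hg, Pi.single_apply])]
    congr 1
    ext j
    rcases eq_or_ne j i with rfl | hj
    · simp
    · simp [Pi.single_eq_of_ne hj]
  rw [hx, map_zero] at h1
  exact (QuotientAddGroup.eq_zero_iff _).1 h1.symm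

end

section

variable {L P N : Type u} [AddCommGroup N] [Module Sᵐᵒᵖ N] [AddCommGroup P] [Module Sᵐᵒᵖ P]
  [AddCommGroup L] [Module Sᵐᵒᵖ L] {i : L →ₗ[Sᵐᵒᵖ] P} {p : P →ₗ[Sᵐᵒᵖ] N}

theorem exactAt_iff_of_isSES (h : IsSES i p) [Module.Projective Sᵐᵒᵖ P] (j : ℕ) :
    K.ExactAt N j ↔ ∀ x : Fin (K.k j) → L, (∃ y, rowMul P (K.m j) y = i ∘ x) →
      ∃ v, rowMul L (K.m j) v = x := by
  have hi : ∀ {k : ℕ} (x y : Fin k → L), i ∘ x = i ∘ y → x = y := fun x y hxy =>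
    h.inj.comp_left hxy
  have hker : ∀ {k : ℕ} (y : Fin k → P), p ∘ y = 0 → ∃ x : Fin k → L, i ∘ x = y := fun y hy => by
    choose x hx using fun l => (h.exact (y l)).1 (congrFun hy l)
    exact ⟨x, funext hx⟩
  have hpi : ∀ {k : ℕ} (x : Fin k → L), p ∘ i ∘ x = 0 := fun x =>
    funext fun l => h.exact.apply_apply_eq_zero (x l)
  have hsub : ∀ {k : ℕ} (x y : Fin k → P), p ∘ (x - y) = p ∘ x - p ∘ y := fun x y =>
    funext fun l => map_sub p _ _
  constructor
  · rintro hN x ⟨y, hy⟩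
    obtain ⟨w, hw⟩ := hN (p ∘ y) (by rw [rowMul_comp, hy, hpi])
    obtain ⟨w', rfl⟩ := h.surj.comp_left w
    obtain ⟨v, hv⟩ := hker (y - rowMul P (K.m (j + 1)) w') (by
      rw [hsub, ← hw, rowMul_comp, sub_self])
    refine ⟨v, hi _ _ ?_⟩
    rw [← rowMul_comp, hv, map_sub, K.rowMul_rowMul, sub_zero, hy]
  · intro hL n hn
    obtain ⟨y, rfl⟩ := h.surj.comp_left n
    obtain ⟨x, hx⟩ := hker (rowMul P (K.m j) y) (by rw [← rowMul_comp, hn])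
    obtain ⟨v, rfl⟩ := hL x ⟨y, hx.symm⟩
    obtain ⟨w, hw⟩ := K.exactAt_of_projective (N := P) j (y - i ∘ v) (by
      rw [map_sub, rowMul_comp, hx, sub_self])
    exact ⟨p ∘ w, by rw [rowMul_comp, hw, hsub, hpi, sub_zero]⟩

theorem exactAt_zero_iff (h : IsSES i p) [Module.Projective Sᵐᵒᵖ P] :
    K.ExactAt N 0 ↔ Injective (MTensor.map (T := C) i) := by
  rw [K.exactAt_iff_of_isSES h, injective_iff_map_eq_zero]
  simp only [← K.aug_eq_zero_iff, ← K.map_aug]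
  refine ⟨fun hx z => ?_, fun hz x => hz _⟩
  obtain ⟨x, rfl⟩ := K.aug_surjective z
  exact hx x

theorem exactAt_succ_iff (h : IsSES i p) [Module.Projective Sᵐᵒᵖ P] (j : ℕ) :
    K.ExactAt N (j + 1) ↔ K.ExactAt L j := by
  rw [K.exactAt_iff_of_isSES h]
  refine forall_congr' fun x => imp_congr_left ⟨?_, fun hx => ?_⟩
  · rintro ⟨y, hy⟩
    have h1 := K.rowMul_rowMul (N := P) j y
    rw [hy, rowMul_comp] at h1
    exact funext fun l => h.inj ((congrFun h1 l).trans (map_zero i).symm)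
  · refine K.exactAt_of_projective (N := P) j _ ?_
    rw [rowMul_comp, hx]
    exact funext fun l => map_zero i

end

theorem map_exact_right (K : MatrixResolution S C) {L P N : Type u} [AddCommGroup N]
    [Module Sᵐᵒᵖ N] [AddCommGroup P]
    [Module Sᵐᵒᵖ P] [AddCommGroup L] [Module Sᵐᵒᵖ L] {i : L →ₗ[Sᵐᵒᵖ] P} {p : P →ₗ[Sᵐᵒᵖ] N}
    (hp : Surjective p) (h : Exact i p) {z : MTensor S P C} (hz : MTensor.map p z = 0) :
    ∃ w, MTensor.map (T := C) i w = z := by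
  obtain ⟨x, rfl⟩ := K.aug_surjective z
  rw [map_aug, K.aug_eq_zero_iff] at hz
  obtain ⟨v, hv⟩ := hz
  obtain ⟨v', rfl⟩ := hp.comp_left v
  rw [rowMul_comp] at hv
  choose y hy using fun l => (h ((x - rowMul P (K.m 0) v') l)).1 (by
    rw [Pi.sub_apply, map_sub, sub_eq_zero]
    exact (congrFun hv l).symm)
  refine ⟨K.aug L y, ?_⟩
  have : ⇑i ∘ y = x - rowMul P (K.m 0) v' := funext hy
  rw [map_aug, this, map_sub, aug_rowMul, sub_zero]

theorem exact_map_iff {N : Type u} [AddCommGroup N] [Module Sᵐᵒᵖ N] (Q : ResolutionData Sᵐᵒᵖ N)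
    (hQ : Q.IsProjResolution) (j : ℕ) :
    Exact (MTensor.map (T := C) (Q.d (j + 1))) (MTensor.map (T := C) (Q.d j)) ↔
      K.ExactAt N j := by
  have hP := hQ.proj 0
  have hS := isSES_subtype_ker hQ.surj
  induction j generalizing N with
  | zero =>
    let p' : Q.P (0 + 1) →ₗ[Sᵐᵒᵖ] LinearMap.ker Q.ε :=
      (Q.d 0).codRestrict _ fun x => hQ.exact0.apply_apply_eq_zero x
    have hp' : Surjective p' := hQ.truncate.surj
    have hex : Exact (Q.d (0 + 1)) p' := hQ.truncate.exact0
    have hd : ∀ z, MTensor.map (T := C) (Q.d 0) z =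
        MTensor.map (LinearMap.ker Q.ε).subtype (MTensor.map p' z) :=
      fun z => MTensor.map_comp_apply p' (LinearMap.ker Q.ε).subtype z
    have h0 : ∀ w, MTensor.map (T := C) p' (MTensor.map (Q.d (0 + 1)) w) = 0 := fun w => by
      have h1 : p' ∘ₗ Q.d (0 + 1) = 0 := LinearMap.ext fun x => hex.apply_apply_eq_zero x
      rw [← MTensor.map_comp_apply, h1]
      exact MTensor.map_zero_apply w
    rw [K.exactAt_zero_iff hS, injective_iff_map_eq_zero]
    constructor
    · intro hE z hz
      obtain ⟨x, rfl⟩ := K.aug_surjective z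
      obtain ⟨x', rfl⟩ := hp'.comp_left x
      rw [← K.map_aug] at hz ⊢
      rw [← hd] at hz
      obtain ⟨w, hw⟩ := (hE _).1 hz
      rw [← hw, h0]
    · intro hinj z
      constructor
      · intro hz
        rw [hd] at hz
        exact K.map_exact_right hp' hex (hinj _ hz)
      · rintro ⟨w, rfl⟩
        rw [hd, h0, map_zero]
  | succ j ih =>
    rw [K.exactAt_succ_iff hS]
    exact ih (Q.truncate hQ.exact0) hQ.truncate (hQ.proj 1)
      (isSES_subtype_ker hQ.truncate.surj)

theorem torVanishAll_iff {N : Type u} [AddCommGroup N] [Module Sᵐᵒᵖ N] :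
    TorVanishAll S N C ↔ ∀ j, K.ExactAt N j := by
  constructor
  · rintro ⟨Q, hQ, h⟩ j
    exact (K.exact_map_iff Q hQ j).1 (h j)
  · intro h
    have hQ := freeResolution_isProjResolution Sᵐᵒᵖ N
    exact ⟨_, hQ, fun j => (K.exact_map_iff _ hQ j).2 (h j)⟩

end MatrixResolution

end MatrixResolution

/-! ## The Bass class through orthogonality -/

section BassClass

variable {S R : Type u} [Ring S] [Ring R]
  {C : Type u} [AddCommGroup C] [Module Rᵐᵒᵖ C] [Module S C] [SMulCommClass S Rᵐᵒᵖ C]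

/-- The linear map `(c_i) ↦ ∑ i, n_i (c_i)` attached to a row vector of linear maps. -/
def rowHom {M : Type u} [AddCommGroup M] [Module Rᵐᵒᵖ M] {k : ℕ}
    (n : Fin k → C →ₗ[Rᵐᵒᵖ] M) : (Fin k → C) →ₗ[Rᵐᵒᵖ] M where
  toFun c := ∑ i, n i (c i)
  map_add' c c' := by simp [Finset.sum_add_distrib]
  map_smul' r c := by simp [Finset.smul_sum]

section

variable {M : Type u} [AddCommGroup M] [Module Rᵐᵒᵖ M] {k : ℕ}

theorem rowHom_apply (n : Fin k → C →ₗ[Rᵐᵒᵖ] M) (c : Fin k → C) :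
    rowHom n c = ∑ i, n i (c i) := rfl

theorem rowHom_injective :
    Injective (rowHom : (Fin k → C →ₗ[Rᵐᵒᵖ] M) → ((Fin k → C) →ₗ[Rᵐᵒᵖ] M)) := by
  classical
  intro n n' h
  refine funext fun i => LinearMap.ext fun c => ?_
  have key : ∀ n : Fin k → C →ₗ[Rᵐᵒᵖ] M, rowHom n (Pi.single i c) = n i c := fun n => by
    rw [rowHom_apply, Finset.sum_eq_single i, Pi.single_eq_same]
    · intro j _ hj
      rw [Pi.single_eq_of_ne hj, map_zero]
    · exact fun h => absurd (Finset.mem_univ i) h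
  rw [← key, ← key, h]

theorem exists_eq_rowHom (f : (Fin k → C) →ₗ[Rᵐᵒᵖ] M) :
    ∃ n : Fin k → C →ₗ[Rᵐᵒᵖ] M, rowHom n = f := by
  classical
  refine ⟨fun i => f ∘ₗ LinearMap.single Rᵐᵒᵖ (fun _ => C) i, LinearMap.ext fun c => ?_⟩
  conv_rhs => rw [← Finset.univ_sum_single c, map_sum]
  rfl

theorem rowHom_rowMul {l : ℕ} (m : Fin l → Fin k → S) (n : Fin l → C →ₗ[Rᵐᵒᵖ] M) :
    rowHom (rowMul (C →ₗ[Rᵐᵒᵖ] M) m n) = rowHom n ∘ₗ matHom R m := by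
  refine LinearMap.ext fun c => ?_
  simp only [rowHom_apply, rowMul_apply, LinearMap.comp_apply, matHom_apply, map_sum,
    LinearMap.sum_apply, homDomSMul_apply, unop_op]
  exact Finset.sum_comm

end

namespace FinCoresolution

variable (K : FinCoresolution S R C) (hEnd : Bijective (leftHomothety S R C))

/-- The matrices of the differentials `C^{k j} → C^{k (j + 1)}`. -/
def mat (j : ℕ) : Fin (K.k (j + 1)) → Fin (K.k j) → S :=
  (exists_eq_matHom hEnd (K.φ (j + 1) ∘ₗ K.π j)).choose

theorem φ_π_apply (j : ℕ) (c : Fin (K.k j) → C) :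
    K.φ (j + 1) (K.π j c) = matHom R (K.mat hEnd j) c :=
  LinearMap.congr_fun (exists_eq_matHom hEnd (K.φ (j + 1) ∘ₗ K.π j)).choose_spec c

/-- The generators of `C` as a left `S`-module coming from the coresolution. -/
def gens : Fin (K.k 0) → C := K.φ 0 (K.unit 1)

theorem ext_unit {M : Type u} [AddCommGroup M] [Module Rᵐᵒᵖ M] {f g : K.X 0 →ₗ[Rᵐᵒᵖ] M}
    (h : f (K.unit 1) = g (K.unit 1)) : f = g := by
  have h1 : f ∘ₗ K.unit.toLinearMap = g ∘ₗ K.unit.toLinearMap := LinearMap.ext_ring h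
  ext x
  obtain ⟨a, rfl⟩ := K.unit.surjective x
  exact LinearMap.congr_fun h1 a

theorem exists_unit {M : Type u} [AddCommGroup M] [Module Rᵐᵒᵖ M] (x : M) :
    ∃ f : K.X 0 →ₗ[Rᵐᵒᵖ] M, f (K.unit 1) = x :=
  ⟨LinearMap.toSpanSingleton Rᵐᵒᵖ M x ∘ₗ K.unit.symm.toLinearMap, by simp⟩

/-- Maps from the `j`-th cosyzygy into `M` extend to `C^{k j}`. -/
def ExtendsTo (j : ℕ) (M : Type u) [AddCommGroup M] [Module Rᵐᵒᵖ M] : Prop :=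
  ∀ f : K.X j →ₗ[Rᵐᵒᵖ] M, ∃ g, g ∘ₗ K.φ j = f

section

variable {M : Type u} [AddCommGroup M] [Module Rᵐᵒᵖ M]

theorem comp_φ_succ_eq_zero_iff (j : ℕ) (n : Fin (K.k (j + 1)) → C →ₗ[Rᵐᵒᵖ] M) :
    rowHom n ∘ₗ K.φ (j + 1) = 0 ↔ rowMul _ (K.mat hEnd j) n = 0 := by
  have h0 : rowHom (0 : Fin (K.k j) → C →ₗ[Rᵐᵒᵖ] M) = 0 := by
    refine LinearMap.ext fun c => ?_
    simp [rowHom_apply]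
  rw [← rowHom_injective.eq_iff, rowHom_rowMul, h0]
  constructor
  · intro h
    refine LinearMap.ext fun c => ?_
    rw [LinearMap.comp_apply, ← K.φ_π_apply hEnd]
    exact LinearMap.congr_fun h _
  · intro h
    ext1 x
    obtain ⟨c, rfl⟩ := (K.ses j).surj x
    have := LinearMap.congr_fun h c
    rwa [LinearMap.comp_apply, ← K.φ_π_apply hEnd] at this

theorem extendsTo_succ_iff (j : ℕ) :
    K.ExtendsTo (j + 1) M ↔ ∀ n : Fin (K.k j) → C →ₗ[Rᵐᵒᵖ] M, rowHom n ∘ₗ K.φ j = 0 →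
      ∃ n', rowMul _ (K.mat hEnd j) n' = n := by
  constructor
  · intro h n hn
    obtain ⟨f, hf⟩ := exists_factor_of_surjective (K.ses j).surj (rowHom n) fun x hx => by
      obtain ⟨y, rfl⟩ := ((K.ses j).exact x).1 hx
      exact LinearMap.congr_fun hn y
    obtain ⟨g, rfl⟩ := h f
    obtain ⟨n', rfl⟩ := exists_eq_rowHom g
    refine ⟨n', rowHom_injective ?_⟩
    rw [rowHom_rowMul, ← hf]
    refine LinearMap.ext fun c => ?_
    simp only [LinearMap.comp_apply, K.φ_π_apply hEnd]
  · intro h f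
    obtain ⟨n, hn⟩ := exists_eq_rowHom (f ∘ₗ K.π j)
    obtain ⟨n', rfl⟩ := h n (by
      ext1 x
      rw [hn, LinearMap.comp_apply, LinearMap.comp_apply,
        (K.ses j).exact.apply_apply_eq_zero, map_zero, LinearMap.zero_apply])
    refine ⟨rowHom n', LinearMap.ext fun x => ?_⟩
    obtain ⟨c, rfl⟩ := (K.ses j).surj x
    rw [rowHom_rowMul] at hn
    rw [LinearMap.comp_apply, K.φ_π_apply hEnd]
    exact LinearMap.congr_fun hn c

end

theorem exists_rowMul_iff (j : ℕ) (s : Fin (K.k j) → S) :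
    (∀ x, ∑ i, s i • K.φ j x i = 0) ↔
      ∃ t : Fin (K.k (j + 1)) → S, ∀ i, s i = ∑ l, t l * K.mat hEnd j l i := by
  classical
  constructor
  · intro h
    obtain ⟨f, hf⟩ := exists_factor_of_surjective (K.ses j).surj
        (rowHom fun i => leftHomothety S R C (s i)) fun c hc => by
      obtain ⟨x, rfl⟩ := ((K.ses j).exact c).1 hc
      exact h x
    obtain ⟨t, ht⟩ := K.approx (j + 1) f
    refine ⟨t, fun i => sub_eq_zero.1 (eq_zero_of_smul_eq_zero hEnd fun c => ?_)⟩
    have h1 := (LinearMap.congr_fun hf (Pi.single i c)).symm.trans (ht _)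
    have h2 : ∀ (s : Fin (K.k j) → S), ∑ i', s i' • (Pi.single i c : Fin (K.k j) → C) i' =
        s i • c := fun s => by
      rw [Finset.sum_eq_single i, Pi.single_eq_same]
      · intro i' _ hi'
        rw [Pi.single_eq_of_ne hi', smul_zero]
      · exact fun h => absurd (Finset.mem_univ i) h
    simp only [K.φ_π_apply hEnd, matHom_apply, h2] at h1
    rw [sub_smul, Finset.sum_smul, sub_eq_zero, ← h2 s]
    simp only [mul_smul]
    exact h1
  · rintro ⟨t, ht⟩ x
    have h1 := K.φ_π_apply hEnd j (K.φ j x)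
    rw [(K.ses j).exact.apply_apply_eq_zero, map_zero] at h1
    simp only [ht, Finset.sum_smul, mul_smul]
    rw [Finset.sum_comm]
    refine Finset.sum_eq_zero fun l _ => ?_
    rw [← Finset.smul_sum, ← matHom_apply (R := R), ← h1, Pi.zero_apply, smul_zero]

/-- The resolution of the left `S`-module `C` obtained by applying `Hom_R(-, C)`. -/
def toMatrixResolution : MatrixResolution S C where
  k := K.k
  m := K.mat hEnd
  e := K.gens
  gen c := by
    obtain ⟨f, hf⟩ := K.exists_unit c
    obtain ⟨s, hs⟩ := K.approx 0 f
    exact ⟨s, by rw [← hf, hs]; rfl⟩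
  rel s := by
    refine Iff.trans ?_ (K.exists_rowMul_iff hEnd 0 s)
    refine ⟨fun h => ?_, fun h => h _⟩
    have h1 : (rowHom fun i => leftHomothety S R C (s i)) ∘ₗ K.φ 0 = 0 := K.ext_unit h
    exact LinearMap.congr_fun h1
  exact j s := by
    refine Iff.trans ?_ (K.exists_rowMul_iff hEnd (j + 1) s)
    have h1 := K.comp_φ_succ_eq_zero_iff hEnd j fun l => leftHomothety S R C (s l)
    have h2 : rowMul _ (K.mat hEnd j) (fun l => leftHomothety S R C (s l)) =
        fun i => leftHomothety S R C (∑ l, s l * K.mat hEnd j l i) := by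
      refine funext fun i => LinearMap.ext fun c => ?_
      rw [rowMul_apply, LinearMap.sum_apply]
      simp only [homDomSMul_apply, unop_op]
      show ∑ l, s l • K.mat hEnd j l i • c = (∑ l, s l * K.mat hEnd j l i) • c
      simp only [Finset.sum_smul, mul_smul]
    rw [h2] at h1
    refine Iff.trans ⟨fun h => h1.2 (funext fun i => LinearMap.ext fun c => ?_), fun h i => ?_⟩
      LinearMap.ext_iff
    · rw [h]
      exact zero_smul S c
    · exact eq_zero_of_smul_eq_zero hEnd fun c => LinearMap.congr_fun (congrFun (h1.1 h) i) c

section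

variable {M : Type u} [AddCommGroup M] [Module Rᵐᵒᵖ M]

theorem nuFun_aug (n : Fin (K.k 0) → C →ₗ[Rᵐᵒᵖ] M) :
    MTensor.nuFun S R C M ((K.toMatrixResolution hEnd).aug _ n) = rowHom n K.gens :=
  map_sum (MTensor.nuFun S R C M) (fun i => MTensor.mk (n i) (K.gens i)) Finset.univ

theorem comp_φ_zero_eq_zero_iff (n : Fin (K.k 0) → C →ₗ[Rᵐᵒᵖ] M) :
    rowHom n ∘ₗ K.φ 0 = 0 ↔
      MTensor.nuFun S R C M ((K.toMatrixResolution hEnd).aug _ n) = 0 := by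
  rw [nuFun_aug]
  exact ⟨fun h => LinearMap.congr_fun h (K.unit 1), fun h => K.ext_unit h⟩

theorem extendsTo_zero_iff (hEnd : Bijective (leftHomothety S R C)) :
    K.ExtendsTo 0 M ↔ Surjective (MTensor.nuFun S R C M) := by
  constructor
  · intro h x
    obtain ⟨f, hf⟩ := K.exists_unit x
    obtain ⟨g, rfl⟩ := h f
    obtain ⟨n, rfl⟩ := exists_eq_rowHom g
    exact ⟨_, (K.nuFun_aug hEnd n).trans hf⟩
  · intro h f
    obtain ⟨z, hz⟩ := h (f (K.unit 1))
    obtain ⟨n, rfl⟩ := (K.toMatrixResolution hEnd).aug_surjective z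
    exact ⟨rowHom n, K.ext_unit ((K.nuFun_aug hEnd n).symm.trans hz)⟩

theorem extendsTo_one_iff (hEnd : Bijective (leftHomothety S R C)) :
    K.ExtendsTo 1 M ↔ Injective (MTensor.nuFun S R C M) := by
  rw [injective_iff_map_eq_zero, K.extendsTo_succ_iff hEnd 0]
  simp only [K.comp_φ_zero_eq_zero_iff hEnd]
  constructor
  · intro h z hz
    obtain ⟨n, rfl⟩ := (K.toMatrixResolution hEnd).aug_surjective z
    exact ((K.toMatrixResolution hEnd).aug_eq_zero_iff n).2 (h n hz)
  · exact fun h n hn => ((K.toMatrixResolution hEnd).aug_eq_zero_iff n).1 (h _ hn)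

theorem extendsTo_add_two_iff (j : ℕ) :
    K.ExtendsTo (j + 1 + 1) M ↔ (K.toMatrixResolution hEnd).ExactAt (C →ₗ[Rᵐᵒᵖ] M) j := by
  rw [K.extendsTo_succ_iff hEnd (j + 1)]
  exact forall_congr' fun n => imp_congr_left (K.comp_φ_succ_eq_zero_iff hEnd j n)

theorem forall_extendsTo_iff (h : ∀ n, ExtZero Rᵐᵒᵖ C M (n + 1)) :
    (∀ j, K.ExtendsTo j M) ↔ ∀ j n, ExtZero Rᵐᵒᵖ (K.X j) M (n + 1) := by
  have hC : ∀ j n, ExtZero Rᵐᵒᵖ (Fin (K.k j) → C) M (n + 1) := fun j n =>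
    extZero_fin_left (h n)
  constructor
  · intro hE j
    induction j with
    | zero =>
      have : Module.Projective Rᵐᵒᵖ (K.X 0) := Module.Projective.of_equiv K.unit
      exact fun n => extZero_of_projective
    | succ j ih =>
      rintro (_ | n)
      · exact (K.ses j).con₃_of_extend (hE j) (hC j 0)
      · exact (K.ses j).con₃ (ih n) (hC j (n + 1))
  · exact fun hX j f => (K.ses j).extend (hX (j + 1) 0) f

theorem inBassClass_iff (hEnd : Bijective (leftHomothety S R C)) : InBassClass S R C M ↔
    (∀ n, ExtZero Rᵐᵒᵖ C M (n + 1)) ∧ ∀ j n, ExtZero Rᵐᵒᵖ (K.X j) M (n + 1) := by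
  constructor
  · intro h
    have h1 := extVanishAll_iff.1 h.extVanish
    refine ⟨h1, (K.forall_extendsTo_iff h1).1 ?_⟩
    rintro (_ | _ | j)
    · exact (K.extendsTo_zero_iff hEnd).2 h.nuBij.2
    · exact (K.extendsTo_one_iff hEnd).2 h.nuBij.1
    · exact (K.extendsTo_add_two_iff hEnd j).2
        ((K.toMatrixResolution hEnd).torVanishAll_iff.1 h.torVanish j)
  · rintro ⟨h1, h2⟩
    have h3 := (K.forall_extendsTo_iff h1).2 h2
    exact ⟨extVanishAll_iff.2 h1, (K.toMatrixResolution hEnd).torVanishAll_iff.2 fun j =>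
      (K.extendsTo_add_two_iff hEnd j).1 (h3 _), (K.extendsTo_one_iff hEnd).1 (h3 1),
      (K.extendsTo_zero_iff hEnd).1 (h3 0)⟩

end

end FinCoresolution

end BassClass

/-! ## Lifting maps into exact complexes of injective modules -/

section Lifting

variable {A : Type u} [Ring A]

theorem exists_extension_of_ker_le {X Y I : Type u} [AddCommGroup X] [Module A X]
    [AddCommGroup Y] [Module A Y] [AddCommGroup I] [Module A I] [Module.Injective A I]
    (ψ : X →ₗ[A] Y) (f : X →ₗ[A] I) (h : LinearMap.ker ψ ≤ LinearMap.ker f) :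
    ∃ f' : Y →ₗ[A] I, ∀ x, f' (ψ x) = f x := by
  obtain ⟨f', hf'⟩ := Module.Injective.extension_property A _ _ _
    ((LinearMap.ker ψ).liftQ ψ le_rfl)
    (LinearMap.ker_eq_bot.1 (Submodule.ker_liftQ_eq_bot _ _ _ le_rfl))
    ((LinearMap.ker ψ).liftQ f h)
  exact ⟨f', fun x => by simpa using LinearMap.congr_fun hf' (Submodule.Quotient.mk x)⟩

/-- Relative lifting for the subquotient `U / V`: every map of `U / V` into cycles of `E` lifts to
the preceding term of `E`. -/
def ZComplex.LiftsOn (E : ZComplex A) {G : Type u} [AddCommGroup G] [Module A G]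
    (U V : Submodule A G) : Prop :=
  ∀ (i : ℤ) (g : G →ₗ[A] E.P (i + 1)), (∀ x ∈ U, E.d (i + 1) (g x) = 0) → (∀ x ∈ V, g x = 0) →
    ∃ h : G →ₗ[A] E.P i, (∀ x ∈ U, E.d i (h x) = g x) ∧ ∀ x ∈ V, h x = 0

/-- Every map from `D` into cycles of `E` lifts to the preceding term of `E`. -/
def ZComplex.Lifts (E : ZComplex A) (D : Type u) [AddCommGroup D] [Module A D] : Prop :=
  E.LiftsOn (⊤ : Submodule A D) ⊥

theorem ZComplex.lifts_iff (E : ZComplex A) (D : Type u) [AddCommGroup D] [Module A D] :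
    E.Lifts D ↔ ∀ (i : ℤ) (g : D →ₗ[A] E.P (i + 1)), (∀ x, E.d (i + 1) (g x) = 0) →
      ∃ h : D →ₗ[A] E.P i, ∀ x, E.d i (h x) = g x := by
  refine ⟨fun H i g hg => ?_, fun H i g hg _ => ?_⟩
  · obtain ⟨h, hh, -⟩ := H i g (fun x _ => hg x) (by rintro x rfl; simp)
    exact ⟨h, fun x => hh x trivial⟩
  · obtain ⟨h, hh⟩ := H i g fun x => hg x trivial
    exact ⟨h, fun x _ => hh x, by rintro x rfl; simp⟩

namespace ZComplex

variable {E : ZComplex A}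
variable {G : Type u} [AddCommGroup G] [Module A G] {U V : Submodule A G}
variable {G' : Type u} [AddCommGroup G'] [Module A G'] {U' V' : Submodule A G'}

theorem exists_relative_extension (hE : ∀ i, Module.Injective A (E.P i)) (θ : G →ₗ[A] G')
    (h : ∀ x ∈ U, θ x ∈ V' → x ∈ V) (i : ℤ)
    (f : G →ₗ[A] E.P i) (hf : ∀ x ∈ V, f x = 0) :
    ∃ f' : G' →ₗ[A] E.P i, (∀ x ∈ U, f' (θ x) = f x) ∧ ∀ y ∈ V', f' y = 0 := by
  have := hE i
  obtain ⟨f', hf'⟩ := exists_extension_of_ker_le (V'.mkQ ∘ₗ θ ∘ₗ U.subtype) (f ∘ₗ U.subtype)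
    (by
      rintro ⟨x, hx⟩ hx'
      simp only [LinearMap.mem_ker, LinearMap.comp_apply, Submodule.mkQ_apply,
        Submodule.subtype_apply, Submodule.Quotient.mk_eq_zero] at hx' ⊢
      exact hf x (h x hx hx'))
  refine ⟨f' ∘ₗ V'.mkQ, fun x hx => hf' ⟨x, hx⟩, fun y hy => ?_⟩
  simp [(Submodule.Quotient.mk_eq_zero V').2 hy]

theorem LiftsOn.map (hE : ∀ i, Module.Injective A (E.P i)) (θ : G →ₗ[A] G') (hVU : V ≤ U)
    (h₂ : ∀ y ∈ U', ∃ x ∈ U, y - θ x ∈ V') (h₁ : ∀ x ∈ U, θ x ∈ U')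
    (h₃ : ∀ x ∈ U, θ x ∈ V' ↔ x ∈ V) (H : E.LiftsOn U V) : E.LiftsOn U' V' := by
  intro i g' hg hg'
  obtain ⟨h, hh, hh'⟩ := H i (g' ∘ₗ θ) (fun x hx => hg _ (h₁ x hx))
    (fun x hx => hg' _ ((h₃ x (hVU hx)).2 hx))
  obtain ⟨h', hh₁, hh₂⟩ := exists_relative_extension hE θ (fun x hx => (h₃ x hx).1) i h hh'
  refine ⟨h', fun y hy => ?_, hh₂⟩
  obtain ⟨x, hx, hxy⟩ := h₂ y hy
  have e₁ := hh₂ _ hxy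
  have e₂ := hg' _ hxy
  rw [map_sub, sub_eq_zero] at e₁ e₂
  rw [e₁, e₂, hh₁ x hx, hh x hx]
  rfl

theorem LiftsOn.comap (hE : ∀ i, Module.Injective A (E.P i)) (θ : G →ₗ[A] G') (hVU : V ≤ U)
    (h₂ : ∀ y ∈ U', ∃ x ∈ U, y - θ x ∈ V') (h₁ : ∀ x ∈ U, θ x ∈ U')
    (h₃ : ∀ x ∈ U, θ x ∈ V' ↔ x ∈ V) (H : E.LiftsOn U' V') : E.LiftsOn U V := by
  intro i g hg hg'
  obtain ⟨g', e₁, e₂⟩ := exists_relative_extension hE θ (fun x hx => (h₃ x hx).1) (i + 1) g hg'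
  obtain ⟨h', hh, hh'⟩ := H i g' (fun y hy => by
    obtain ⟨x, hx, hxy⟩ := h₂ y hy
    have e₃ := e₂ _ hxy
    rw [map_sub, sub_eq_zero] at e₃
    rw [e₃, e₁ x hx, hg x hx]) e₂
  refine ⟨h' ∘ₗ θ, fun x hx => ?_, fun x hx => hh' _ ((h₃ x (hVU hx)).2 hx)⟩
  rw [LinearMap.comp_apply, hh _ (h₁ x hx), e₁ x hx]

theorem LiftsOn.of_sub {K : Submodule A G} (hex : E.IsExact) (hVK : V ≤ K) (hKU : K ≤ U)
    (hU : E.LiftsOn U V) (hK : E.LiftsOn K V) : E.LiftsOn U K := by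
  intro i g hg hg'
  obtain ⟨j, rfl⟩ : ∃ j, i = j + 1 := ⟨i - 1, by ring⟩
  obtain ⟨h, hh, hh'⟩ := hU _ g hg fun x hx => hg' x (hVK hx)
  obtain ⟨k, hk, hk'⟩ := hK j h (fun x hx => by rw [hh x (hKU hx), hg' x hx]) hh'
  refine ⟨h - E.d j ∘ₗ k, fun x hx => ?_, fun x hx => by simp [hk x hx]⟩
  rw [LinearMap.sub_apply, LinearMap.comp_apply, map_sub, (hex j).apply_apply_eq_zero, sub_zero,
    hh x hx]

/-- The finitely supported functions with `i`-th value in `U i`. -/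
def finsuppSub {ι : Type u} (U : ι → Submodule A G) : Submodule A (ι →₀ G) where
  carrier := {v | ∀ i, v i ∈ U i}
  zero_mem' := fun i => (U i).zero_mem
  add_mem' := fun h h' i => (U i).add_mem (h i) (h' i)
  smul_mem' := fun a _ h i => (U i).smul_mem a (h i)

theorem mem_finsuppSub {ι : Type u} {U : ι → Submodule A G} {v : ι →₀ G} :
    v ∈ finsuppSub U ↔ ∀ i, v i ∈ U i := Iff.rfl

open Classical in
theorem single_mem_finsuppSub {ι : Type u} {U : ι → Submodule A G} {i : ι} {x : G}
    (hx : x ∈ U i) : Finsupp.single i x ∈ finsuppSub U := by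
  intro j
  rw [Finsupp.single_apply]
  split_ifs with h
  · exact h ▸ hx
  · exact (U j).zero_mem

theorem LiftsOn.finsupp {ι : Type u} {U V : ι → Submodule A G}
    (H : ∀ i, E.LiftsOn (U i) (V i)) : E.LiftsOn (finsuppSub U) (finsuppSub V) := by
  intro i g hg hg'
  choose h hh hh' using fun j => H j i (g ∘ₗ Finsupp.lsingle j)
    (fun x hx => hg _ (single_mem_finsuppSub hx)) (fun x hx => hg' _ (single_mem_finsuppSub hx))
  refine ⟨Finsupp.lsum ℕ h, fun x hx => ?_, fun x hx => ?_⟩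
  · conv_rhs => rw [← Finsupp.sum_single x]
    rw [Finsupp.lsum_apply, Finsupp.sum, Finsupp.sum, map_sum, map_sum]
    exact Finset.sum_congr rfl fun j _ => hh j _ (hx j)
  · rw [Finsupp.lsum_apply, Finsupp.sum]
    exact Finset.sum_eq_zero fun j _ => hh' j _ (hx j)

end ZComplex

end Lifting

section Filtration

variable {A : Type u} [Ring A]

namespace ZComplex

variable {E : ZComplex A} {G : Type u} [AddCommGroup G] [Module A G]

theorem LiftsOn.iSup_of_filtration (hE : ∀ i, Module.Injective A (E.P i)) (hex : E.IsExact)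
    {ι : Type*} [LinearOrder ι] [WellFoundedLT ι] (Y : ι → Submodule A G) (T : Submodule A G)
    (hY : Monotone Y) (hT : ∀ β, T ≤ Y β) (H : ∀ β, E.LiftsOn (Y β) ((⨆ γ < β, Y γ) ⊔ T)) :
    E.LiftsOn ((⨆ β, Y β) ⊔ T) T := by
  intro i g hg hg'
  have hinj := hE i
  have hgY : ∀ β, ∀ x ∈ Y β, E.d (i + 1) (g x) = 0 := fun β x hx =>
    hg x (Submodule.mem_sup_left ((le_iSup Y β) hx))
  have hext : ∀ f : G →ₗ.[A] E.P i, ∃ h : G →ₗ[A] E.P i, ∀ x : f.domain, h x = f x := fun f =>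
    exists_extension_of_ker_le f.domain.subtype f.toFun (by simp)
  let s : Set (G →ₗ.[A] E.P i) := {f | T ≤ f.domain ∧ (∀ x : f.domain, (x : G) ∈ T → f x = 0) ∧
    (∀ x : f.domain, E.d i (f x) = g x) ∧
    ∀ β, Y β ≤ f.domain ∨ f.domain ≤ (⨆ γ < β, Y γ) ⊔ T}
  obtain ⟨f, -, hf⟩ := zorn_le_nonempty₀ s (by
      intro c hcs hc y hy
      have hdir : DirectedOn (· ≤ ·) c := hc.directedOn
      have hmem : ∀ x : (LinearPMap.sSup c hdir).domain, ∃ f, ∃ hf : f ∈ c,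
          ∃ hx : (x : G) ∈ f.domain,
          LinearPMap.sSup c hdir x = f ⟨x, hx⟩ := by
        rintro ⟨x, hx⟩
        obtain ⟨f, hf, hfx⟩ := (LinearPMap.mem_domain_sSup_iff ⟨y, hy⟩ hdir).1 hx
        exact ⟨f, hf, hfx, LinearPMap.sSup_apply hdir hf ⟨x, hfx⟩⟩
      have hle : ∀ z ∈ c, z ≤ LinearPMap.sSup c hdir := fun z hz => LinearPMap.le_sSup hdir hz
      refine ⟨LinearPMap.sSup c hdir, ⟨(hcs hy).1.trans (hle y hy).1, ?_, ?_, ?_⟩, hle⟩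
      · intro x hx
        obtain ⟨f, hf, hfx, e⟩ := hmem x
        rw [e]
        exact (hcs hf).2.1 _ hx
      · intro x
        obtain ⟨f, hf, hfx, e⟩ := hmem x
        rw [e]
        exact (hcs hf).2.2.1 _
      · intro β
        by_cases h : ∃ f ∈ c, Y β ≤ f.domain
        · obtain ⟨f, hf, h⟩ := h
          exact Or.inl (h.trans (hle f hf).1)
        · push Not at h
          refine Or.inr fun x hx => ?_
          obtain ⟨f, hf, hfx, -⟩ := hmem ⟨x, hx⟩
          exact ((hcs hf).2.2.2 β).resolve_left (h f hf) hfx)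
    ((0 : G →ₗ[A] E.P i).toPMap T) ⟨le_rfl, fun x _ => rfl, fun x => by
      exact (map_zero _).trans (hg' x x.2).symm, fun β => Or.inr le_sup_right⟩
  obtain ⟨hf₁, hf₂, hf₃, hf₄⟩ := hf.prop
  obtain ⟨h, hh⟩ := hext f
  have hall : ∀ β, Y β ≤ f.domain := by
    by_contra! hne
    obtain ⟨β, hβ, hmin⟩ := WellFounded.has_min (wellFounded_lt (α := ι))
      {β | ¬ Y β ≤ f.domain} hne
    have hlt : ∀ γ < β, Y γ ≤ f.domain := fun γ hγ => by
      by_contra hn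
      exact hmin γ hn hγ
    have hdom : f.domain = (⨆ γ < β, Y γ) ⊔ T :=
      le_antisymm ((hf₄ β).resolve_left hβ) (sup_le (iSup₂_le hlt) hf₁)
    obtain ⟨h', hh₁, hh₂⟩ := H β i (g - E.d i ∘ₗ h)
      (fun x hx => by
        rw [LinearMap.sub_apply, LinearMap.comp_apply, map_sub, hgY β x hx,
          (hex i).apply_apply_eq_zero, sub_zero])
      (fun x hx => by
        rw [← hdom] at hx
        rw [LinearMap.sub_apply, LinearMap.comp_apply, hh ⟨x, hx⟩, hf₃ ⟨x, hx⟩, sub_self])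
    rw [← hdom] at hh₂
    have hdomY : f.domain ≤ Y β := by
      rw [hdom]
      exact sup_le (iSup₂_le fun γ hγ => hY hγ.le) (hT β)
    refine hβ (hf.le_of_ge (y := (h + h').toPMap (Y β)) ⟨hT β, fun x hx => ?_, fun x => ?_,
      fun γ => ?_⟩ ⟨hdomY, fun x y hxy => ?_⟩).1
    · have e₁ := hh ⟨x, hf₁ hx⟩
      rw [hf₂ ⟨x, hf₁ hx⟩ hx] at e₁
      have e₂ := hh₂ x (hf₁ hx)
      change h x + h' x = 0
      rw [e₂, add_zero]
      exact e₁
    · change E.d i (h x + h' x) = g x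
      rw [map_add, hh₁ x x.2]
      simp
    · rcases le_or_gt γ β with hγ | hγ
      · exact Or.inl (hY hγ)
      · exact Or.inr ((le_iSup₂ (f := fun γ' (_ : γ' < γ) => Y γ') β hγ).trans le_sup_left)
    · change f x = h y + h' y
      rw [← hxy, hh x, hh₂ x x.2, add_zero]
  refine ⟨h, fun x hx => ?_, fun x hx => ?_⟩
  · have hx' : x ∈ f.domain := sup_le (iSup_le hall) hf₁ hx
    rw [hh ⟨x, hx'⟩, hf₃]
  · rw [hh ⟨x, hf₁ hx⟩, hf₂ _ hx]

end ZComplex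

end Filtration

section Chain

variable {A : Type u} [Ring A]

theorem Submodule.mem_biSup_of_monotone {G : Type*} [AddCommGroup G] [Module A G] {ι : Type*}
    [LinearOrder ι] {U : ι → Submodule A G} (hU : Monotone U) {p : ι → Prop} {y : G}
    (hy : y ∈ ⨆ (i) (_ : p i), U i) : y = 0 ∨ ∃ i, p i ∧ y ∈ U i := by
  rw [iSup_subtype'] at hy
  rcases isEmpty_or_nonempty {i // p i} with h | h
  · left
    rwa [iSup_of_empty, Submodule.mem_bot] at hy
  · right
    obtain ⟨i, hi⟩ := (Submodule.mem_iSup_of_directed _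
      ((hU.comp (Subtype.mono_coe p)).directed_le)).1 hy
    exact ⟨i, i.2, hi⟩

namespace ZComplex

variable {E : ZComplex A} {G : Type u} [AddCommGroup G] [Module A G] {ι : Type u}

open Classical in
/-- The sum of the values of a finitely supported function over the indices satisfying `p`. -/
def partialSum (p : ι → Prop) : (ι →₀ G) →ₗ[A] G :=
  Finsupp.lsum ℕ fun i => if p i then LinearMap.id else 0

theorem partialSum_single_of_pos {p : ι → Prop} {i : ι} (h : p i) (x : G) :
    partialSum (A := A) p (Finsupp.single i x) = x := by
  simp [partialSum, h]

theorem partialSum_single_of_neg {p : ι → Prop} {i : ι} (h : ¬ p i) (x : G) :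
    partialSum (A := A) p (Finsupp.single i x) = 0 := by
  simp [partialSum, h]

theorem partialSum_mem {p : ι → Prop} {U : ι → Submodule A G} {v : ι →₀ G}
    (hv : v ∈ finsuppSub U) : partialSum (A := A) p v ∈ ⨆ (i) (_ : p i), U i := by
  rw [partialSum, Finsupp.lsum_apply]
  refine Submodule.sum_mem _ fun i _ => ?_
  dsimp only
  split_ifs with h
  · exact (le_iSup₂ (f := fun i (_ : p i) => U i) i h) (hv i)
  · exact Submodule.zero_mem _

theorem partialSum_congr {p q : ι → Prop} {v : ι →₀ G} (h : ∀ i, v i ≠ 0 → (p i ↔ q i)) :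
    partialSum (A := A) p v = partialSum (A := A) q v := by
  rw [partialSum, partialSum, Finsupp.lsum_apply, Finsupp.lsum_apply]
  refine Finset.sum_congr rfl fun i hi => ?_
  by_cases hq : q i
  · simp [hq, (h i (by simpa using hi)).2 hq]
  · simp [hq, mt (h i (by simpa using hi)).1 hq]

theorem finsuppSub_mono {U V : ι → Submodule A G} (h : ∀ i, V i ≤ U i) :
    finsuppSub V ≤ finsuppSub U := fun _ hv i => h i (hv i)

variable [LinearOrder ι]

/-- The finitely supported functions with values in `U i`, vanishing above `β`, and with sum
in `V β`. -/
def bounded (U V : ι → Submodule A G) (β : ι) : Submodule A (ι →₀ G) :=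
  finsuppSub (fun i => ⨆ _ : i ≤ β, U i) ⊓ (V β).comap (partialSum fun _ => True)

theorem mem_bounded {U V : ι → Submodule A G} {β : ι} {v : ι →₀ G} :
    v ∈ bounded U V β ↔ (∀ i, v i ∈ U i) ∧ (∀ i, v i ≠ 0 → i ≤ β) ∧
      partialSum (A := A) (fun _ => True) v ∈ V β := by
  have key : ∀ i, (v i ∈ ⨆ _ : i ≤ β, U i) ↔ v i ∈ U i ∧ (v i ≠ 0 → i ≤ β) := fun i => by
    by_cases h : i ≤ β
    · simp [h]
    · simp only [h, iSup_false, Submodule.mem_bot, imp_false, not_not]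
      exact ⟨fun h => ⟨h ▸ Submodule.zero_mem _, h⟩, fun h => h.2⟩
  rw [bounded, Submodule.mem_inf, mem_finsuppSub, forall_congr' key, Submodule.mem_comap,
    forall_and, and_assoc]

theorem bounded_mono {U V : ι → Submodule A G} (hV : Monotone V) : Monotone (bounded U V) := by
  intro β γ h v hv
  rw [mem_bounded] at hv ⊢
  exact ⟨hv.1, fun i hi => (hv.2.1 i hi).trans h, hV h hv.2.2⟩

theorem mem_biSup_bounded {U V : ι → Submodule A G} (hV : Monotone V) {p : ι → Prop} {v : ι →₀ G}
    (hv : v ∈ finsuppSub U) (hp : ∀ i, v i ≠ 0 → p i)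
    (hs : partialSum (A := A) (fun _ => True) v ∈ ⨆ (i) (_ : p i), V i) :
    v ∈ ⨆ (i) (_ : p i), bounded U V i := by
  rcases eq_or_ne v 0 with rfl | hne
  · exact Submodule.zero_mem _
  have hne' : v.support.Nonempty := Finsupp.support_nonempty_iff.2 hne
  set m := v.support.max' hne' with hm
  have hmp : p m := hp m (by simpa using v.support.max'_mem hne')
  have hle : ∀ i, v i ≠ 0 → i ≤ m := fun i hi => v.support.le_max' i (by simpa using hi)
  obtain ⟨γ, hγp, hγm, hγ⟩ : ∃ γ, p γ ∧ m ≤ γ ∧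
      partialSum (A := A) (fun _ => True) v ∈ V γ := by
    rcases Submodule.mem_biSup_of_monotone hV hs with h | ⟨i, hi, h⟩
    · exact ⟨m, hmp, le_rfl, h ▸ Submodule.zero_mem _⟩
    · rcases le_total m i with hmi | hmi
      · exact ⟨i, hi, hmi, h⟩
      · exact ⟨m, hmp, le_rfl, hV hmi h⟩
  exact (le_iSup₂ (f := fun i (_ : p i) => bounded U V i) γ hγp)
    (mem_bounded.2 ⟨hv, fun i hi => (hle i hi).trans hγm, hγ⟩)

theorem LiftsOn.bounded (hE : ∀ i, Module.Injective A (E.P i)) {U V : ι → Submodule A G}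
    (hU : Monotone U) (hV : Monotone V) (hVU : ∀ i, V i ≤ U i) (β : ι)
    (H : E.LiftsOn (⨆ γ < β, U γ) (⨆ γ < β, V γ)) :
    E.LiftsOn (bounded U V β ⊔ finsuppSub V)
      ((⨆ γ < β, bounded U V γ ⊔ finsuppSub V) ⊔ finsuppSub V) := by
  have hbU : ∀ β, ZComplex.bounded U V β ≤ finsuppSub U := fun β v hv => (mem_bounded.1 hv).1
  have hlt : ∀ γ < β, ZComplex.bounded U V γ ⊔ finsuppSub V ≤
      ZComplex.bounded U V β ⊔ finsuppSub V := fun γ hγ =>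
    sup_le_sup_right (bounded_mono hV hγ.le) _
  refine LiftsOn.comap hE (partialSum (A := A) (· < β)) (sup_le (iSup₂_le hlt) le_sup_right)
    ?_ ?_ ?_ H
  · intro y hy
    rcases Submodule.mem_biSup_of_monotone hU hy with rfl | ⟨i, hi, hy⟩
    · exact ⟨0, Submodule.zero_mem _, by simp⟩
    · refine ⟨Finsupp.single i y - Finsupp.single β y, Submodule.mem_sup_left
        (mem_bounded.2 ⟨?_, ?_, ?_⟩), ?_⟩
      · exact Submodule.sub_mem (finsuppSub U) (single_mem_finsuppSub hy)
          (single_mem_finsuppSub (hU hi.le hy))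
      · intro j hj
        by_contra hn
        have h₁ : i ≠ j := fun h => hn (h ▸ hi.le)
        have h₂ : β ≠ j := fun h => hn (h ▸ le_rfl)
        simp [h₁.symm, h₂.symm] at hj
      · rw [map_sub, partialSum_single_of_pos trivial, partialSum_single_of_pos trivial, sub_self]
        exact Submodule.zero_mem _
      · rw [map_sub, partialSum_single_of_pos (p := (· < β)) hi,
            partialSum_single_of_neg (p := (· < β)) (lt_irrefl β),
          sub_zero, sub_self]
        exact Submodule.zero_mem _
  · exact fun x hx => partialSum_mem (sup_le (hbU β) (finsuppSub_mono hVU) hx)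
  · intro x hx
    have hT : ∀ t ∈ finsuppSub V, partialSum (A := A) (· < β) t ∈ ⨆ γ < β, V γ :=
      fun t ht => partialSum_mem ht
    constructor
    · intro hs
      obtain ⟨w, hw, t, ht, rfl⟩ := Submodule.mem_sup.1 hx
      refine Submodule.add_mem _ ?_ (Submodule.mem_sup_right ht)
      rw [map_add, Submodule.add_mem_iff_left _ (hT t ht)] at hs
      obtain ⟨hw₁, hw₂, hw₃⟩ := mem_bounded.1 hw
      set w' := w - Finsupp.single β (w β) with hw'
      have hw'U : w' ∈ finsuppSub U :=
        Submodule.sub_mem _ hw₁ (single_mem_finsuppSub (hw₁ β))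
      have hw'lt : ∀ i, w' i ≠ 0 → i < β := by
        intro i hi
        rcases eq_or_ne i β with rfl | hne
        · simp [hw'] at hi
        · refine lt_of_le_of_ne (hw₂ i fun h0 => hi ?_) hne
          simp [hw', h0, hne]
      have e₁ : partialSum (A := A) (· < β) w' = partialSum (A := A) (· < β) w := by
        rw [hw', map_sub, partialSum_single_of_neg (p := (· < β)) (lt_irrefl β), sub_zero]
      have e₂ : partialSum (A := A) (fun _ => True) w' = partialSum (A := A) (· < β) w' :=
        partialSum_congr fun i hi => by simpa using hw'lt i hi
      have e₃ : partialSum (A := A) (fun _ => True) w' =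
          partialSum (A := A) (fun _ => True) w - w β := by
        rw [hw', map_sub, partialSum_single_of_pos trivial]
      have hVlt : (⨆ γ < β, V γ) ≤ V β := iSup₂_le fun γ hγ => hV hγ.le
      have hwβ : w β ∈ V β := by
        have h := Submodule.sub_mem _ hw₃ (hVlt hs)
        rwa [← e₁, ← e₂, e₃, sub_sub_cancel] at h
      have hww : w = w' + Finsupp.single β (w β) := by rw [hw', sub_add_cancel]
      rw [hww]
      refine Submodule.add_mem _ (Submodule.mem_sup_left ?_)
        (Submodule.mem_sup_right (single_mem_finsuppSub hwβ))
      have hle : (⨆ γ < β, ZComplex.bounded U V γ) ≤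
          ⨆ γ < β, ZComplex.bounded U V γ ⊔ finsuppSub V := iSup₂_mono fun γ _ => le_sup_left
      refine hle (mem_biSup_bounded hV hw'U hw'lt ?_)
      rw [e₂, e₁]
      exact hs
    · suffices hle : ((⨆ γ < β, ZComplex.bounded U V γ ⊔ finsuppSub V) ⊔ finsuppSub V) ≤
          (⨆ γ < β, V γ).comap (partialSum (A := A) (· < β)) from fun h => hle h
      refine sup_le (iSup₂_le fun γ hγ => sup_le ?_ hT) hT
      intro v hv
      obtain ⟨-, hv₂, hv₃⟩ := mem_bounded.1 hv
      rw [Submodule.mem_comap, partialSum_congr (q := fun _ => True)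
        fun i hi => by simpa using (hv₂ i hi).trans_lt hγ]
      exact (le_iSup₂ (f := fun γ (_ : γ < β) => V γ) γ hγ) hv₃

theorem LiftsOn.iSup_of_initial (hE : ∀ i, Module.Injective A (E.P i)) (hex : E.IsExact)
    [WellFoundedLT ι] {U V : ι → Submodule A G}
    (hU : Monotone U) (hV : Monotone V) (hVU : ∀ i, V i ≤ U i)
    (H : ∀ i, E.LiftsOn (U i) (V i))
    (Hlt : ∀ i, E.LiftsOn (⨆ j < i, U j) (⨆ j < i, V j)) :
    E.LiftsOn (⨆ i, U i) (⨆ i, V i) := by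
  have hVK : (⨆ β, ZComplex.bounded U V β ⊔ finsuppSub V) ⊔ finsuppSub V =
      finsuppSub U ⊓ (⨆ i, V i).comap (partialSum (A := A) fun _ => True) := by
    have hV' : finsuppSub V ≤
        finsuppSub U ⊓ (⨆ i, V i).comap (partialSum (A := A) fun _ => True) := fun v hv =>
      ⟨finsuppSub_mono hVU hv, by simpa using partialSum_mem (p := fun _ => True) hv⟩
    refine le_antisymm (sup_le (iSup_le fun β => sup_le (fun v hv => ?_) hV') hV') ?_
    · obtain ⟨hv₁, -, hv₃⟩ := mem_bounded.1 hv
      exact ⟨hv₁, (le_iSup V β) hv₃⟩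
    · rintro v ⟨hv, hs⟩
      have hle : (⨆ β, ZComplex.bounded U V β) ≤
          ⨆ β, ZComplex.bounded U V β ⊔ finsuppSub V := iSup_mono fun β => le_sup_left
      refine Submodule.mem_sup_left (hle ?_)
      simpa using mem_biSup_bounded (p := fun _ => True) hV hv (fun _ _ => trivial)
        (by simpa using hs)
  have hK := LiftsOn.iSup_of_filtration hE hex (fun β => ZComplex.bounded U V β ⊔ finsuppSub V)
    (finsuppSub V) (fun β γ h => sup_le_sup_right (bounded_mono hV h) _) (fun β => le_sup_right)
    (fun β => LiftsOn.bounded hE hU hV hVU β (Hlt β))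
  rw [hVK] at hK
  have hUK := LiftsOn.of_sub hex (hVK ▸ le_sup_right) inf_le_left (LiftsOn.finsupp H) hK
  refine hUK.map hE (partialSum (A := A) fun _ => True) inf_le_left ?_ ?_ ?_
  · intro y hy
    rcases Submodule.mem_biSup_of_monotone (p := fun _ => True) hU (by simpa using hy)
      with rfl | ⟨i, hi, hy⟩
    · exact ⟨0, Submodule.zero_mem _, by simp⟩
    · refine ⟨Finsupp.single i y, single_mem_finsuppSub hy, ?_⟩
      rw [partialSum_single_of_pos trivial, sub_self]
      exact Submodule.zero_mem _
  · intro x hx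
    simpa using partialSum_mem (p := fun _ => True) hx
  · intro x hx
    exact ⟨fun h => ⟨hx, h⟩, fun h => h.2⟩

theorem LiftsOn.iSup_wellOrder (hE : ∀ i, Module.Injective A (E.P i)) (hex : E.IsExact)
    [WellFoundedLT ι] {U V : ι → Submodule A G}
    (hU : Monotone U) (hV : Monotone V) (hVU : ∀ i, V i ≤ U i)
    (H : ∀ i, E.LiftsOn (U i) (V i)) : E.LiftsOn (⨆ i, U i) (⨆ i, V i) := by
  refine LiftsOn.iSup_of_initial hE hex hU hV hVU H fun i => ?_
  induction i using WellFoundedLT.induction with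
  | ind i ih =>
    have key : ∀ (W : ι → Submodule A G) (k : {j // j < i}),
        (⨆ j < k, W j) = ⨆ j < (k : ι), W j := fun W k =>
      le_antisymm (iSup₂_le fun j hj => le_iSup₂_of_le (f := fun j (_ : j < (k : ι)) => W j)
          (j : ι) hj le_rfl)
        (iSup₂_le fun j hj => le_iSup₂_of_le
          (f := fun (j : {j // j < i}) (_ : j < k) => W j) ⟨j, hj.trans k.2⟩ hj le_rfl)
    rw [iSup_subtype' (f := fun j _ => U j), iSup_subtype' (f := fun j _ => V j)]
    refine LiftsOn.iSup_of_initial hE hex (ι := {j // j < i}) (fun a b h => hU h)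
      (fun a b h => hV h) (fun a => hVU a) (fun a => H a) fun k => ?_
    rw [key U k, key V k]
    exact ih k k.2

end ZComplex

end Chain

section Directed

theorem exists_monotone_finset_bound (α : Type*) [Preorder α] [IsDirectedOrder α] [Nonempty α] :
    ∃ φ : Finset α → α, Monotone φ ∧ ∀ F, ∀ x ∈ F, x ≤ φ F := by
  classical
  have hex : ∀ (F : Finset α) (ih : ∀ F' ⊂ F, α), ∃ M, (∀ x ∈ F, x ≤ M) ∧
      ∀ F' (h : F' ⊂ F), ih F' h ≤ M := by
    intro F ih
    obtain ⟨M, hM⟩ := Finset.exists_le (F ∪ F.ssubsets.attach.image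
      fun F' : {x // x ∈ F.ssubsets} => ih F'.1 (Finset.mem_ssubsets.1 F'.2))
    exact ⟨M, fun x hx => hM x (Finset.mem_union_left _ hx), fun F' h =>
      hM _ (Finset.mem_union_right _ (Finset.mem_image.2
        ⟨⟨F', Finset.mem_ssubsets.2 h⟩, Finset.mem_attach _ _, rfl⟩))⟩
  choose step hstep₁ hstep₂ using hex
  refine ⟨Finset.strongInduction step, fun F' F h => ?_, fun F x hx => ?_⟩
  · rcases eq_or_ne F' F with rfl | hne
    · exact le_rfl
    · have hss : F' ⊂ F := Finset.ssubset_iff_subset_ne.2 ⟨h, hne⟩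
      rw [Finset.strongInduction_eq step F]
      exact hstep₂ F (fun t _ => Finset.strongInduction step t) F' hss
  · rw [Finset.strongInduction_eq]
    exact hstep₁ _ _ _ hx

/-- A property closed under suprema of well-ordered monotone families is closed under suprema of
directed sets. -/
theorem sSup_of_directedOn_of_wellOrder {L : Type u} [CompleteLattice L] (Q : L → Prop)
    (hQ : ∀ (ι : Type u) [LinearOrder ι] [WellFoundedLT ι] (F : ι → L), Monotone F →
      (∀ i, Q (F i)) → Q (⨆ i, F i))
    (s : Set L) (hne : s.Nonempty) (hs : DirectedOn (· ≤ ·) s) (hsQ : ∀ x ∈ s, Q x) :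
    Q (sSup s) := by
  classical
  have : Nonempty s := hne.to_subtype
  have : IsDirectedOrder s := ⟨fun x y => by
    obtain ⟨z, hz, hx, hy⟩ := hs x x.2 y y.2
    exact ⟨⟨z, hz⟩, hx, hy⟩⟩
  obtain ⟨φ, hmono, hφ⟩ := exists_monotone_finset_bound s
  let Ψ : Set s → L := fun t => ⨆ F : {F : Finset s // (F : Set s) ⊆ t}, ((φ F : s) : L)
  have hΨmono : Monotone Ψ := fun t t' h => iSup_le fun F =>
    le_iSup (fun F : {F : Finset s // (F : Set s) ⊆ t'} => ((φ F : s) : L)) ⟨F, F.2.trans h⟩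
  have hΨ : ∀ c : Cardinal.{u}, ∀ t : Set s, Cardinal.mk t = c → Q (Ψ t) := by
    intro c
    induction c using WellFoundedLT.induction with
    | ind c ih =>
      intro t ht
      rcases t.finite_or_infinite with hfin | hinf
      · have e : Ψ t = (φ hfin.toFinset : s) := by
          refine le_antisymm (iSup_le fun F => ?_) ?_
          · exact hmono fun x hx => hfin.mem_toFinset.2 (F.2 hx)
          · exact le_iSup (fun F : {F : Finset s // (F : Set s) ⊆ t} => ((φ F : s) : L))
              ⟨hfin.toFinset, by simp⟩
        rw [e]
        exact hsQ _ (Subtype.prop _)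
      · have hc : Cardinal.aleph0 ≤ c := ht ▸ Cardinal.infinite_iff.1 hinf.to_subtype
        obtain ⟨e⟩ : Nonempty (c.ord.ToType ≃ t) := Cardinal.eq.1 (by
          rw [ht, Cardinal.mk_ord_toType])
        have hne' : Nonempty c.ord.ToType := ⟨e.symm ⟨_, hinf.nonempty.some_mem⟩⟩
        have hlt : ∀ i : c.ord.ToType, Cardinal.mk (Set.Iic i) < c := by
          intro i
          have h := Cardinal.mk_Iio_lt i (by rw [Cardinal.mk_ord_toType, Ordinal.type_toType])
          rw [Cardinal.mk_ord_toType] at h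
          rw [← Set.Iio_insert]
          exact Cardinal.mk_insert_le.trans_lt
            (Cardinal.add_lt_of_lt hc h (Cardinal.one_lt_aleph0.trans_le hc))
        let T : c.ord.ToType → Set s := fun i => (fun j => (e j : s)) '' Set.Iic i
        have hT : ∀ i, T i ⊆ t := by
          rintro i _ ⟨j, -, rfl⟩
          exact (e j).2
        have hmonoT : Monotone T := fun i j h => Set.image_mono (Set.Iic_subset_Iic.2 h)
        have e' : Ψ t = ⨆ i, Ψ (T i) := by
          refine le_antisymm (iSup_le ?_) (iSup_le fun i => hΨmono (hT i))
          rintro ⟨F, hF⟩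
          obtain ⟨M, hM⟩ := Finset.exists_le
            (F.attach.image fun x : {x // x ∈ F} => e.symm ⟨x, hF x.2⟩)
          have hFM : (F : Set s) ⊆ T M := fun x hx => ⟨e.symm ⟨x, hF hx⟩,
            hM _ (Finset.mem_image.2 ⟨⟨x, hx⟩, Finset.mem_attach _ _, rfl⟩), by simp⟩
          exact (le_iSup (fun F : {F : Finset s // (F : Set s) ⊆ T M} => ((φ F : s) : L))
            ⟨F, hFM⟩).trans (le_iSup (fun i => Ψ (T i)) M)
        rw [e']
        exact hQ _ _ (hΨmono.comp hmonoT) fun i =>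
          ih _ (Cardinal.mk_image_le.trans_lt (hlt i)) _ rfl
  have e : sSup s = Ψ Set.univ := by
    refine le_antisymm (sSup_le fun x hx => ?_) (iSup_le fun F => le_sSup (Subtype.prop _))
    have h : (⟨x, hx⟩ : s) ≤ φ {⟨x, hx⟩} := hφ _ _ (by simp)
    exact (Subtype.coe_le_coe.2 h).trans
      (le_iSup (fun F : {F : Finset s // (F : Set s) ⊆ Set.univ} => ((φ F : s) : L))
        ⟨_, Set.subset_univ _⟩)
  rw [e]
  exact hΨ _ _ rfl

end Directed

section Lazard

variable {A : Type u} [Ring A]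

namespace ZComplex

variable {E : ZComplex A} {G : Type u} [AddCommGroup G] [Module A G]

theorem LiftsOn.sSup (hE : ∀ i, Module.Injective A (E.P i)) (hex : E.IsExact)
    (s : Set (Submodule A G × Submodule A G)) (hne : s.Nonempty) (hs : DirectedOn (· ≤ ·) s)
    (H : ∀ p ∈ s, p.2 ≤ p.1 ∧ E.LiftsOn p.1 p.2) : E.LiftsOn (sSup s).1 (sSup s).2 := by
  refine (sSup_of_directedOn_of_wellOrder
    (fun p : Submodule A G × Submodule A G => p.2 ≤ p.1 ∧ E.LiftsOn p.1 p.2) ?_ s hne hs H).2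
  intro ι _ _ F hF hQ
  rw [Prod.fst_iSup, Prod.snd_iSup]
  exact ⟨iSup_mono fun i => (hQ i).1, LiftsOn.iSup_wellOrder hE hex (fun i j h => (hF h).1)
    (fun i j h => (hF h).2) (fun i => (hQ i).1) fun i => (hQ i).2⟩

theorem Lifts.fin {C : Type u} [AddCommGroup C] [Module A C] (h : E.Lifts C) (k : ℕ) :
    E.Lifts (Fin k → C) := by
  rw [lifts_iff] at h ⊢
  intro i g hg
  choose φ hφ using fun l : Fin k => h i (g ∘ₗ LinearMap.single A (fun _ => C) l) fun x => hg _
  refine ⟨LinearMap.lsum A (fun _ => C) ℕ φ, fun x => ?_⟩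
  rw [LinearMap.lsum_apply, LinearMap.sum_apply, map_sum]
  conv_rhs => rw [← Finset.univ_sum_single x]
  rw [map_sum]
  exact Finset.sum_congr rfl fun l _ => hφ l (x l)

theorem Lifts.retract {X Y : Type u} [AddCommGroup X] [Module A X] [AddCommGroup Y] [Module A Y]
    (h : E.Lifts X) (f : Y →ₗ[A] X) (r : X →ₗ[A] Y) (hr : r ∘ₗ f = LinearMap.id) : E.Lifts Y := by
  rw [lifts_iff] at h ⊢
  intro i g hg
  obtain ⟨φ, hφ⟩ := h i (g ∘ₗ r) fun x => hg _
  exact ⟨φ ∘ₗ f, fun y => by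
    rw [LinearMap.comp_apply, hφ, LinearMap.comp_apply, ← LinearMap.comp_apply r, hr,
      LinearMap.id_apply]⟩

variable {C D : Type u} [AddCommGroup C] [Module A C] [AddCommGroup D] [Module A D]

variable (A C D) in
/-- The evaluation map onto `D` from countably many copies of `C` for each map `C → D`. -/
def evalSum : (((C →ₗ[A] D) × ℕ) →₀ C) →ₗ[A] D := Finsupp.lsum ℕ fun j => j.1

theorem evalSum_single (j : (C →ₗ[A] D) × ℕ) (c : C) :
    evalSum A C D (Finsupp.single j c) = j.1 c := by
  simp [evalSum]

theorem evalSum_surjective (hD : FactorsThroughFinitePowers A C D) :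
    Surjective (evalSum A C D) := by
  intro d
  obtain ⟨k, a, b, hab⟩ := hD (Submodule.span A {d}) (Submodule.span A {d}).subtype
  have hd := LinearMap.congr_fun hab ⟨d, Submodule.mem_span_singleton_self d⟩
  refine ⟨∑ l, Finsupp.single (b ∘ₗ LinearMap.single A (fun _ => C) l, 0)
    (a ⟨d, Submodule.mem_span_singleton_self d⟩ l), ?_⟩
  rw [map_sum]
  simp only [evalSum_single]
  refine Eq.trans ?_ hd
  rw [LinearMap.comp_apply]
  conv_rhs => rw [← Finset.univ_sum_single (a ⟨d, Submodule.mem_span_singleton_self d⟩)]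
  rw [map_sum]
  rfl

theorem exists_liftsOn_supported (hE : ∀ i, Module.Injective A (E.P i)) [Module.Finite A C]
    (hD : FactorsThroughFinitePowers A C D) (hC : E.Lifts C) (s : Finset ((C →ₗ[A] D) × ℕ))
    (W : Submodule A (((C →ₗ[A] D) × ℕ) →₀ C)) (hWs : W ≤ Finsupp.supported C A (s : Set _))
    (hW : W ≤ LinearMap.ker (evalSum A C D)) :
    ∃ (s' : Finset ((C →ₗ[A] D) × ℕ)) (V : Submodule A (((C →ₗ[A] D) × ℕ) →₀ C)),
      s ⊆ s' ∧ W ≤ V ∧ V ≤ Finsupp.supported C A (s' : Set _) ∧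
      V ≤ LinearMap.ker (evalSum A C D) ∧
      E.LiftsOn (Finsupp.supported C A (s' : Set _)) V := by
  classical
  have hfin : Module.Finite A (Finsupp.supported C A (s : Set ((C →ₗ[A] D) × ℕ))) :=
    Module.Finite.equiv (Finsupp.supportedEquivFinsupp (s : Set ((C →ₗ[A] D) × ℕ))).symm
  obtain ⟨k, a, b, hab⟩ := hD
    (Finsupp.supported C A (s : Set ((C →ₗ[A] D) × ℕ)) ⧸ W.comap (Submodule.subtype _))
    (Submodule.liftQ _ (evalSum A C D ∘ₗ Submodule.subtype _) fun x hx => hW hx)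
  obtain ⟨n, hn⟩ : ∃ n, ∀ j ∈ s, j.2 < n :=
    ⟨s.sup Prod.snd + 1, fun j hj => Nat.lt_succ_of_le (Finset.le_sup (f := Prod.snd) hj)⟩
  let e : Fin k → (C →ₗ[A] D) × ℕ := fun l => (b ∘ₗ LinearMap.single A (fun _ => C) l, n + l)
  have he : Injective e := fun l l' h => Fin.ext (Nat.add_left_cancel (congrArg Prod.snd h))
  have hes : ∀ l, e l ∉ s := fun l h => absurd (hn _ h) (by simp [e])
  let ā := a ∘ₗ Submodule.mkQ _
  have hā : ∀ x, b (ā x) = evalSum A C D x := fun x => LinearMap.congr_fun hab (Submodule.mkQ _ x)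
  let q : (((C →ₗ[A] D) × ℕ) →₀ C) →ₗ[A] (Fin k → C) :=
    ā ∘ₗ Finsupp.restrictDom C A (s : Set ((C →ₗ[A] D) × ℕ)) +
      LinearMap.pi fun l => Finsupp.lapply (e l)
  have hqs : ∀ x (hx : x ∈ Finsupp.supported C A (s : Set ((C →ₗ[A] D) × ℕ))),
      q x = ā ⟨x, hx⟩ := by
    intro x hx
    have h₁ : Finsupp.restrictDom C A (s : Set ((C →ₗ[A] D) × ℕ)) x = ⟨x, hx⟩ :=
      LinearMap.congr_fun (Finsupp.restrictDom_comp_subtype (s : Set ((C →ₗ[A] D) × ℕ))) ⟨x, hx⟩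
    have h₂ : (LinearMap.pi fun l => Finsupp.lapply (e l) :
        (((C →ₗ[A] D) × ℕ) →₀ C) →ₗ[A] (Fin k → C)) x = 0 := by
      funext l
      exact (Finsupp.mem_supported' A x).1 hx _ (hes l)
    rw [LinearMap.add_apply, LinearMap.comp_apply, h₁, h₂, add_zero]
  have hqe : ∀ l c, q (Finsupp.single (e l) c) = Pi.single l c := by
    intro l c
    have h₁ : Finsupp.restrictDom C A (s : Set ((C →ₗ[A] D) × ℕ)) (Finsupp.single (e l) c) = 0 := by
      refine Subtype.ext (Finsupp.ext fun j => ?_)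
      by_cases hj : j ∈ s
      · have : e l ≠ j := fun h => hes l (h ▸ hj)
        simp [Finsupp.restrictDom_apply, Finsupp.filter_apply, this]
      · simp [Finsupp.restrictDom_apply, hj]
    rw [LinearMap.add_apply, LinearMap.comp_apply, h₁, map_zero, zero_add]
    funext l'
    by_cases h : l' = l
    · subst h; simp
    · have : e l ≠ e l' := fun h' => h (he h').symm
      simp [h, this]
  let s' := s ∪ Finset.univ.image e
  have hbq : ∀ x ∈ Finsupp.supported C A (s' : Set ((C →ₗ[A] D) × ℕ)),
      b (q x) = evalSum A C D x := by
    intro x hx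
    rw [← Finsupp.sum_single x, Finsupp.sum, map_sum, map_sum, map_sum]
    refine Finset.sum_congr rfl fun j hj => ?_
    rcases Finset.mem_union.1 (Finset.mem_coe.1 (hx hj)) with h | h
    · rw [hqs _ (Finsupp.single_mem_supported A (x j) h), hā]
    · obtain ⟨l, -, rfl⟩ := Finset.mem_image.1 h
      rw [hqe, evalSum_single]
      rfl
  have hss' : Finsupp.supported C A (s : Set ((C →ₗ[A] D) × ℕ)) ≤
      Finsupp.supported C A (s' : Set ((C →ₗ[A] D) × ℕ)) :=
    Finsupp.supported_mono (Finset.coe_subset.2 Finset.subset_union_left)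
  refine ⟨s', Finsupp.supported C A (s' : Set _) ⊓ LinearMap.ker q, Finset.subset_union_left,
    le_inf (hWs.trans hss') fun w hw => ?_, inf_le_left, fun x hx => ?_, ?_⟩
  · rw [LinearMap.mem_ker, hqs w (hWs hw)]
    have : Submodule.mkQ (W.comap (Submodule.subtype _)) ⟨w, hWs hw⟩ = 0 :=
      (Submodule.Quotient.mk_eq_zero _).2 hw
    rw [LinearMap.comp_apply, this, map_zero]
  · rw [LinearMap.mem_ker, ← hbq x hx.1, LinearMap.mem_ker.1 hx.2, map_zero]
  · refine LiftsOn.comap (U' := ⊤) (V' := ⊥) hE q inf_le_left (fun y _ => ?_) (fun _ _ => trivial)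
      (fun x hx => ⟨fun h => ⟨hx, h⟩, fun h => h.2⟩) (hC.fin k)
    refine ⟨∑ l, Finsupp.single (e l) (y l), Submodule.sum_mem _ fun l _ =>
      Finsupp.single_mem_supported A _ ?_, ?_⟩
    · exact Finset.mem_coe.2 (Finset.mem_union_right _ (Finset.mem_image_of_mem _ (by simp)))
    · rw [map_sum]
      simp only [hqe, Finset.univ_sum_single, sub_self]
      exact Submodule.zero_mem _

theorem Lifts.of_factorsThroughFinitePowers (hE : ∀ i, Module.Injective A (E.P i))
    (hex : E.IsExact) [Module.Finite A C] (hD : FactorsThroughFinitePowers A C D)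
    (hC : E.Lifts C) : E.Lifts D := by
  classical
  let S : Set (Submodule A (((C →ₗ[A] D) × ℕ) →₀ C) × Submodule A (((C →ₗ[A] D) × ℕ) →₀ C)) :=
    {p | ∃ s : Finset ((C →ₗ[A] D) × ℕ), p.1 = Finsupp.supported C A (s : Set _) ∧ p.2 ≤ p.1 ∧
      p.2 ≤ LinearMap.ker (evalSum A C D) ∧ E.LiftsOn p.1 p.2}
  have key : ∀ (s : Finset ((C →ₗ[A] D) × ℕ)) (W : Submodule A (((C →ₗ[A] D) × ℕ) →₀ C)),
      W ≤ Finsupp.supported C A (s : Set _) → W ≤ LinearMap.ker (evalSum A C D) →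
      ∃ p ∈ S, Finsupp.supported C A (s : Set _) ≤ p.1 ∧ W ≤ p.2 := by
    intro s W h₁ h₂
    obtain ⟨s', V, hs, hV₁, hV₂, hV₃, hV₄⟩ := exists_liftsOn_supported hE hD hC s W h₁ h₂
    exact ⟨(_, V), ⟨s', rfl, hV₂, hV₃, hV₄⟩, Finsupp.supported_mono (Finset.coe_subset.2 hs), hV₁⟩
  have hne : S.Nonempty := by
    obtain ⟨p, hp, -⟩ := key ∅ ⊥ bot_le bot_le
    exact ⟨p, hp⟩
  have hdir : DirectedOn (· ≤ ·) S := by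
    rintro ⟨_, V₁⟩ ⟨s₁, rfl, h₁, h₁', -⟩ ⟨_, V₂⟩ ⟨s₂, rfl, h₂, h₂', -⟩
    have l₁ : Finsupp.supported C A (s₁ : Set ((C →ₗ[A] D) × ℕ)) ≤
        Finsupp.supported C A ((s₁ ∪ s₂ : Finset _) : Set ((C →ₗ[A] D) × ℕ)) :=
      Finsupp.supported_mono (Finset.coe_subset.2 Finset.subset_union_left)
    have l₂ : Finsupp.supported C A (s₂ : Set ((C →ₗ[A] D) × ℕ)) ≤
        Finsupp.supported C A ((s₁ ∪ s₂ : Finset _) : Set ((C →ₗ[A] D) × ℕ)) :=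
      Finsupp.supported_mono (Finset.coe_subset.2 Finset.subset_union_right)
    obtain ⟨p, hp, h, h'⟩ := key (s₁ ∪ s₂) (V₁ ⊔ V₂) (sup_le (h₁.trans l₁) (h₂.trans l₂))
      (sup_le h₁' h₂')
    exact ⟨p, hp, ⟨l₁.trans h, le_sup_left.trans h'⟩, ⟨l₂.trans h, le_sup_right.trans h'⟩⟩
  have H := LiftsOn.sSup hE hex S hne hdir fun p hp => ⟨hp.choose_spec.2.1, hp.choose_spec.2.2.2⟩
  have e₁ : (sSup S).1 = ⊤ := by
    refine eq_top_iff.2 fun x _ => ?_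
    obtain ⟨p, hp, h, -⟩ := key x.support ⊥ bot_le bot_le
    exact (le_sSup hp).1 (h ((Finsupp.mem_supported A x).2 le_rfl))
  have e₂ : (sSup S).2 = LinearMap.ker (evalSum A C D) := by
    refine le_antisymm ?_ fun x hx => ?_
    · exact (sSup_le (a := ((⊤ : Submodule A _), LinearMap.ker (evalSum A C D)))
        fun p hp => Prod.le_def.2 ⟨le_top, hp.choose_spec.2.2.1⟩).2
    · obtain ⟨p, hp, -, h⟩ := key x.support (Submodule.span A {x})
        ((Submodule.span_singleton_le_iff_mem _ _).2 ((Finsupp.mem_supported A x).2 le_rfl))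
        ((Submodule.span_singleton_le_iff_mem _ _).2 hx)
      exact (le_sSup hp).2 (h (Submodule.mem_span_singleton_self x))
  rw [e₁, e₂] at H
  refine H.map hE (evalSum A C D) le_top (fun y _ => ?_) (fun _ _ => trivial) fun _ _ => Iff.rfl
  obtain ⟨x, rfl⟩ := evalSum_surjective hD y
  exact ⟨x, trivial, by simp⟩

end ZComplex

end Lazard

section LiftsClosure

variable {A : Type u} [Ring A] {E : ZComplex A}
variable {X Y Z D : Type u} [AddCommGroup X] [Module A X] [AddCommGroup Y] [Module A Y]
  [AddCommGroup Z] [Module A Z] [AddCommGroup D] [Module A D]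

namespace ZComplex

/-- The differential of `E` corestricted to cycles. -/
def toCycles (hex : E.IsExact) (i : ℤ) : E.P i →ₗ[A] LinearMap.ker (E.d (i + 1)) :=
  (E.d i).codRestrict _ fun x => (hex i).apply_apply_eq_zero x

theorem isSES_cycles (hex : E.IsExact) (i : ℤ) :
    IsSES (LinearMap.ker (E.d i)).subtype (toCycles hex i) where
  inj := Subtype.val_injective
  surj := by
    rintro ⟨y, hy⟩
    obtain ⟨x, rfl⟩ := (hex i y).1 hy
    exact ⟨x, rfl⟩
  exact x :=
    ⟨fun h => ⟨⟨x, congrArg Subtype.val h⟩, rfl⟩, by rintro ⟨y, rfl⟩; exact Subtype.ext y.2⟩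

theorem Lifts.of_projective [Module.Projective A D] (hex : E.IsExact) : E.Lifts D := by
  rw [lifts_iff]
  intro i g hg
  obtain ⟨h, hh⟩ := Module.projective_lifting_property (toCycles hex i)
    (g.codRestrict (LinearMap.ker (E.d (i + 1))) hg) (isSES_cycles hex i).surj
  exact ⟨h, fun x => congrArg Subtype.val (LinearMap.congr_fun hh x)⟩

theorem Lifts.coker {f : X →ₗ[A] Y} {g : Y →ₗ[A] Z} (h : IsSES f g)
    (hE : ∀ i, Module.Injective A (E.P i)) (hex : E.IsExact) (hX : E.Lifts X) (hY : E.Lifts Y) :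
    E.Lifts Z := by
  have hf : E.LiftsOn (LinearMap.range f) ⊥ := by
    refine LiftsOn.map (U := ⊤) (V := ⊥) hE f bot_le ?_ (fun x _ => ⟨x, rfl⟩) (fun x _ => ?_) hX
    · rintro _ ⟨x, rfl⟩
      exact ⟨x, trivial, by simp⟩
    · exact map_eq_zero_iff f h.inj
  refine LiftsOn.map (V := LinearMap.range f) hE g le_top (fun y _ => ?_) (fun _ _ => trivial)
    (fun x _ => h.exact x) (LiftsOn.of_sub hex bot_le le_top hY hf)
  obtain ⟨x, rfl⟩ := h.surj y
  exact ⟨x, trivial, by simp⟩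

theorem Lifts.ker {f : X →ₗ[A] Y} {g : Y →ₗ[A] Z} (h : IsSES f g)
    (hE : ∀ i, Module.Injective A (E.P i)) (hex : E.IsExact) (hY : E.Lifts Y) (hZ : E.Lifts Z) :
    E.Lifts X := by
  rw [lifts_iff] at *
  intro i φ hφ
  have := hE (i + 1)
  obtain ⟨ψ, hψ⟩ := exists_extension_of_ker_le f φ
    (by rw [LinearMap.ker_eq_bot.2 h.inj]; exact bot_le)
  obtain ⟨v, hv⟩ := exists_factor_of_surjective h.surj (E.d (i + 1) ∘ₗ ψ) fun y hy => by
    obtain ⟨x, rfl⟩ := (h.exact y).1 hy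
    rw [LinearMap.comp_apply, hψ, hφ]
  have hv' := LinearMap.congr_fun hv
  simp only [LinearMap.comp_apply] at hv'
  obtain ⟨k, hk⟩ := hZ (i + 1) v fun z => by
    obtain ⟨y, rfl⟩ := h.surj z
    rw [hv', (hex (i + 1)).apply_apply_eq_zero]
  obtain ⟨l, hl⟩ := hY i (ψ - k ∘ₗ g) fun y => by
    rw [LinearMap.sub_apply, LinearMap.comp_apply, map_sub, hk, hv', sub_self]
  refine ⟨l ∘ₗ f, fun x => ?_⟩
  rw [LinearMap.comp_apply, hl, LinearMap.sub_apply, LinearMap.comp_apply,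
    h.exact.apply_apply_eq_zero, map_zero, sub_zero, hψ]

theorem Lifts.of_coresolution (hE : ∀ i, Module.Injective A (E.P i)) (hex : E.IsExact)
    (hI : ∀ I : ModuleCat.{u} A, Module.Injective A I → E.Lifts I) {n : ℕ} {M : ModuleCat.{u} A}
    (h : HasClassCoresolution A (fun I => Module.Injective A I) n M) : E.Lifts M := by
  induction n generalizing M with
  | zero => exact hI M h
  | succ n ih =>
    obtain ⟨m, h₁, h₂⟩ := h
    exact Lifts.ker (isSES_mkQ_range m.inj) hE hex (hI _ h₁) (ih h₂)

theorem lifts_iff_extZero (hE : ∀ i, Module.Injective A (E.P i)) (hex : E.IsExact) :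
    E.Lifts D ↔ ∀ i, ExtZero A D (LinearMap.ker (E.d i)) 1 := by
  rw [lifts_iff]
  constructor
  · intro H i
    have := hE i
    refine (isSES_cycles hex i).cov₁_of_lift (fun φ => ?_) extZero_of_injective
    obtain ⟨h, hh⟩ := H i ((LinearMap.ker (E.d (i + 1))).subtype ∘ₗ φ) fun x => (φ x).2
    exact ⟨h, LinearMap.ext fun x => Subtype.ext (hh x)⟩
  · intro H i g hg
    obtain ⟨h, hh⟩ := (isSES_cycles hex i).lift (H i)
      (g.codRestrict (LinearMap.ker (E.d (i + 1))) hg)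
    exact ⟨h, fun x => congrArg Subtype.val (LinearMap.congr_fun hh x)⟩

theorem Lifts.extZero (hE : ∀ i, Module.Injective A (E.P i)) (hex : E.IsExact) (hD : E.Lifts D)
    (i : ℤ) (n : ℕ) : ExtZero A D (LinearMap.ker (E.d i)) (n + 1) := by
  induction n generalizing i with
  | zero => exact (lifts_iff_extZero hE hex).1 hD i
  | succ n ih =>
    have := hE i
    exact (isSES_cycles hex i).cov₁ (ih (i + 1)) extZero_of_injective


end ZComplex

end LiftsClosure

section FiniteGid

variable {R S : Type u} [Ring R] [Ring S]
variable {C : Type u} [AddCommGroup C] [Module Rᵐᵒᵖ C] [Module S C] [SMulCommClass S Rᵐᵒᵖ C]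
variable {M M' B : Type u} [AddCommGroup M] [Module Rᵐᵒᵖ M] [AddCommGroup M'] [Module Rᵐᵒᵖ M']
  [AddCommGroup B] [Module Rᵐᵒᵖ B]

variable (S C) in
/-- Postcomposition as a map of right `S`-modules. -/
def homPostcomp (g : B →ₗ[Rᵐᵒᵖ] M') : (C →ₗ[Rᵐᵒᵖ] B) →ₗ[Sᵐᵒᵖ] (C →ₗ[Rᵐᵒᵖ] M') where
  toFun f := g ∘ₗ f
  map_add' f f' := LinearMap.comp_add f f' g
  map_smul' _ _ := rfl

theorem MTensor.nuFun_map_homPostcomp (g : B →ₗ[Rᵐᵒᵖ] M') (z : MTensor S (C →ₗ[Rᵐᵒᵖ] B) C) :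
    MTensor.nuFun S R C M' (MTensor.map (homPostcomp S C g) z) =
      g (MTensor.nuFun S R C B z) :=
  DFunLike.congr_fun (MTensor.hom_ext
    (f := (MTensor.nuFun S R C M').comp (MTensor.map (homPostcomp S C g)))
    (g := g.toAddMonoidHom.comp (MTensor.nuFun S R C B)) fun _ _ => rfl) z

theorem MTensor.nuFun_mk (f : C →ₗ[Rᵐᵒᵖ] M) (c : C) :
    MTensor.nuFun S R C M (MTensor.mk f c) = f c := rfl

theorem exists_lift_of_nuFun
    (htf : ∀ (N : Type u) [AddCommGroup N] [Module Sᵐᵒᵖ N],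
      Subsingleton (MTensor S N C) → Subsingleton N)
    {g : B →ₗ[Rᵐᵒᵖ] M'} (hg : Surjective g) (hB : Surjective (MTensor.nuFun S R C B))
    (hM : Injective (MTensor.nuFun S R C M')) (φ : C →ₗ[Rᵐᵒᵖ] M') :
    ∃ ψ : C →ₗ[Rᵐᵒᵖ] B, g ∘ₗ ψ = φ := by
  have key : Subsingleton ((C →ₗ[Rᵐᵒᵖ] M') ⧸ LinearMap.range (homPostcomp S C g)) := by
    refine htf _ (subsingleton_of_forall_eq 0 fun z => ?_)
    refine DFunLike.congr_fun (MTensor.hom_ext (f := AddMonoidHom.id _) (g := 0) fun n c => ?_) z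
    obtain ⟨f, rfl⟩ := Submodule.mkQ_surjective _ n
    obtain ⟨b, hb⟩ := hg (f c)
    obtain ⟨y, rfl⟩ := hB b
    have h₁ : (MTensor.mk f c : MTensor S (C →ₗ[Rᵐᵒᵖ] M') C) = MTensor.map (homPostcomp S C g) y :=
      hM ((MTensor.nuFun_mk f c).trans (hb.symm.trans (MTensor.nuFun_map_homPostcomp g y).symm))
    have h₂ := congrArg (MTensor.map (LinearMap.range (homPostcomp S C g)).mkQ) h₁
    rw [← MTensor.map_comp_apply, LinearMap.range_mkQ_comp, MTensor.map_zero_apply] at h₂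
    exact h₂
  obtain ⟨ψ, hψ⟩ := (Submodule.Quotient.mk_eq_zero _).1
    (key.elim (Submodule.Quotient.mk φ) 0)
  exact ⟨ψ, hψ⟩

namespace FinCoresolution

theorem lifts (K : FinCoresolution S R C) {E : ZComplex Rᵐᵒᵖ}
    (hE : ∀ i, Module.Injective Rᵐᵒᵖ (E.P i))
    (hex : E.IsExact)
    (hC : E.Lifts C) (j : ℕ) : E.Lifts (K.X j) := by
  induction j with
  | zero =>
    have : Module.Projective Rᵐᵒᵖ (K.X 0) := Module.Projective.of_equiv K.unit
    exact .of_projective hex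
  | succ j ih => exact .coker (K.ses j) hE hex ih (hC.fin _)

theorem inBassClass_of_isGorensteinInjective (K : FinCoresolution S R C)
    (hEnd : Bijective (leftHomothety S R C))
    (hC : ∃ n, InjDimLE Rᵐᵒᵖ C n) (hM : IsGorensteinInjective Rᵐᵒᵖ M) : InBassClass S R C M := by
  obtain ⟨E, hE, hex, hI, ⟨e⟩⟩ := hM
  obtain ⟨n, hn⟩ := hC
  have hC : E.Lifts C := ZComplex.Lifts.of_coresolution hE hex (fun I _ => by
    rw [ZComplex.lifts_iff]
    intro i g hg
    obtain ⟨h, hh⟩ := (hI I inferInstance i g).1 (LinearMap.ext hg)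
    exact ⟨h, LinearMap.congr_fun hh⟩) hn
  exact (K.inBassClass_iff hEnd).2 ⟨fun n => (hC.extZero hE hex 0 n).congr_right e.symm,
    fun j n => ((K.lifts hE hex hC j).extZero hE hex 0 n).congr_right e.symm⟩

theorem inBassClass_of_lift (K : FinCoresolution S R C)
    (hEnd : Bijective (leftHomothety S R C)) {f : M →ₗ[Rᵐᵒᵖ] B} {g : B →ₗ[Rᵐᵒᵖ] M'}
    (h : IsSES f g) (hl : ∀ φ : C →ₗ[Rᵐᵒᵖ] M', ∃ ψ : C →ₗ[Rᵐᵒᵖ] B, g ∘ₗ ψ = φ)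
    (hB : InBassClass S R C B) (hM' : InBassClass S R C M') : InBassClass S R C M := by
  have hB := (K.inBassClass_iff hEnd).1 hB
  have hM' := (K.inBassClass_iff hEnd).1 hM'
  have hC : ∀ n, ExtZero Rᵐᵒᵖ C M (n + 1)
    | 0 => h.cov₁_of_lift hl (hB.1 0)
    | n + 1 => h.cov₁ (hM'.1 n) (hB.1 (n + 1))
  have hX : ∀ j n, ExtZero Rᵐᵒᵖ (K.X j) M (n + 1 + 1) :=
    fun j n => h.cov₁ (hM'.2 j n) (hB.2 j (n + 1))
  exact (K.inBassClass_iff hEnd).2 ⟨hC, fun j n =>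
    (K.ses j).con₁ (extZero_fin_left (hC n)) (hX (j + 1) n)⟩

theorem inBassClass_of_gidLE (K : FinCoresolution S R C)
    (hEnd : Bijective (leftHomothety S R C))
    (htf : ∀ (N : Type u) [AddCommGroup N] [Module Sᵐᵒᵖ N],
      Subsingleton (MTensor S N C) → Subsingleton N)
    (hC : ∃ n, InjDimLE Rᵐᵒᵖ C n) {n : ℕ} {M : ModuleCat.{u} Rᵐᵒᵖ}
    (h : HasClassCoresolution Rᵐᵒᵖ (fun E => IsGorensteinInjective Rᵐᵒᵖ E) n M) :
    InBassClass S R C M := by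
  induction n generalizing M with
  | zero => exact K.inBassClass_of_isGorensteinInjective hEnd hC h
  | succ n ih =>
    obtain ⟨m, h₁, h₂⟩ := h
    have hE := K.inBassClass_of_isGorensteinInjective hEnd hC h₁
    exact K.inBassClass_of_lift hEnd (isSES_mkQ_range m.inj) (exists_lift_of_nuFun htf
      (Submodule.mkQ_surjective _) hE.nuBij.2 (ih h₂).nuBij.1) hE (ih h₂)

end FinCoresolution

end FiniteGid

/-! ## Cosyzygies and coresolutions by cycles of complexes of injectives -/

section Cosyzygy

variable {A : Type u} [Ring A]

theorem injective_of_extZero {I : Type u} [AddCommGroup I] [Module A I]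
    (h : ∀ (X : Type u) [AddCommGroup X] [Module A X] [Module.Finite A X], ExtZero A X I 1) :
    Module.Injective A I := by
  refine Module.Baer.injective fun J g => ?_
  obtain ⟨ψ, hψ⟩ := IsSES.extend ⟨J.injective_subtype, J.mkQ_surjective,
    LinearMap.exact_subtype_mkQ J⟩ (h (A ⧸ J)) g
  exact ⟨ψ, fun x hx => LinearMap.congr_fun hψ ⟨x, hx⟩⟩

theorem injective_prod {I J : Type u} [AddCommGroup I] [Module A I] [AddCommGroup J] [Module A J]
    (hI : Module.Injective A I) (hJ : Module.Injective A J) : Module.Injective A (I × J) where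
  out X Y _ _ _ _ f hf g := by
    obtain ⟨h₁, e₁⟩ := hI.out f hf (LinearMap.fst A I J ∘ₗ g)
    obtain ⟨h₂, e₂⟩ := hJ.out f hf (LinearMap.snd A I J ∘ₗ g)
    exact ⟨h₁.prod h₂, fun x => Prod.ext (e₁ x) (e₂ x)⟩

theorem HasClassCoresolution.extZero_finsupp [IsNoetherianRing A] (J : Type u) {n : ℕ}
    {M : ModuleCat.{u} A} (h : HasClassCoresolution A (fun I => Module.Injective A I) n M)
    (X : Type u) [AddCommGroup X] [Module A X] : ExtZero A X (J →₀ M) (n + 1) := by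
  induction n generalizing M with
  | zero =>
    have : Module.Injective A M := h
    have : Module.Injective A (J →₀ M) :=
      injective_of_extZero fun X => extZero_finsupp_right extZero_of_injective
    exact extZero_of_injective
  | succ n ih =>
    obtain ⟨m, h₁, h₂⟩ := h
    have : Module.Injective A m.E := h₁
    have hs : IsSES (Finsupp.mapRange.linearMap (α := J) m.f)
        (Finsupp.mapRange.linearMap (α := J) (LinearMap.range m.f).mkQ) := by
      refine ⟨Finsupp.mapRange_injective _ (map_zero _) m.inj,
        Finsupp.mapRange_surjective _ (map_zero _) (Submodule.mkQ_surjective _), ?_⟩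
      rw [LinearMap.exact_iff, Finsupp.ker_mapRange, Finsupp.range_mapRange_linearMap,
        Submodule.ker_mkQ]
      exact LinearMap.ker_eq_bot.2 m.inj
    have : Module.Injective A (J →₀ m.E) :=
      injective_of_extZero fun X => extZero_finsupp_right extZero_of_injective
    exact hs.cov₁ (ih h₂) extZero_of_injective

/-- The `k`-fold cosyzygies of modules in a given class. -/
def CosyzygyClass (A : Type u) [Ring A] (B : ModuleCat.{u} A → Prop) :
    ℕ → ModuleCat.{u} A → Prop
  | 0, M => B M
  | k + 1, M => ∃ (N I : ModuleCat.{u} A) (f : N →ₗ[A] I) (g : I →ₗ[A] M),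
      CosyzygyClass A B k N ∧ Module.Injective A I ∧ IsSES f g

namespace CosyzygyClass

variable {B : ModuleCat.{u} A → Prop}

theorem of_injective (hB : ∀ I : ModuleCat.{u} A, Module.Injective A I → B I) (k : ℕ)
    {I : ModuleCat.{u} A} (hI : Module.Injective A I) : CosyzygyClass A B k I := by
  induction k generalizing I with
  | zero => exact hB I hI
  | succ k ih =>
    refine ⟨ModuleCat.of A PUnit, I, 0, LinearMap.id, ih ⟨fun _ _ _ _ _ _ _ _ _ =>
      ⟨0, fun _ => rfl⟩⟩, hI, injective_of_subsingleton _, surjective_id, fun x => ?_⟩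
    exact ⟨fun h => ⟨0, h.symm⟩, by rintro ⟨y, rfl⟩; rfl⟩

theorem of_succ (hB : ∀ M, CosyzygyClass A B 1 M → B M) {k : ℕ} {M : ModuleCat.{u} A}
    (h : CosyzygyClass A B (k + 1) M) : CosyzygyClass A B k M := by
  induction k generalizing M with
  | zero => exact hB M h
  | succ k ih =>
    obtain ⟨N, I, f, g, hN, hI, hs⟩ := h
    exact ⟨N, I, f, g, ih hN, hI, hs⟩

theorem mem_of_le (hB : ∀ M, CosyzygyClass A B 1 M → B M) {k : ℕ} {M : ModuleCat.{u} A}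
    (h : CosyzygyClass A B k M) : B M := by
  induction k with
  | zero => exact h
  | succ k ih => exact ih (h.of_succ hB)

/-- Every module in the class is a quotient of a module of injective dimension at most `m`
by a module in the class. -/
def _root_.HasPrecovers (B : ModuleCat.{u} A → Prop) (m : ℕ) : Prop :=
  ∀ G, B G → ∃ (N Y : ModuleCat.{u} A) (α : N →ₗ[A] Y) (β : Y →ₗ[A] G), B N ∧
    (∀ X : ModuleCat.{u} A, ExtZero A X Y (m + 1)) ∧ IsSES α β

theorem hasPrecovers_succ {k m : ℕ} (H : HasPrecovers (CosyzygyClass A B k) (m + 1)) :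
    HasPrecovers (CosyzygyClass A B (k + 1)) m := by
  rintro G ⟨G', I, γ, δ, hG', hI, hs⟩
  obtain ⟨N, Y, α, β, hN, hY, ht⟩ := H G' hG'
  obtain ⟨J, ι, hJ, hι⟩ := exists_injective_embedding A N
  obtain ⟨ε, hε⟩ := Module.Injective.extension_property A _ _ _ α ht.inj ι
  have hε' : ∀ x, ε (α x) = ι x := LinearMap.congr_fun hε
  have hI' : Module.Injective A (J × I) := injective_prod hJ hI
  let h : Y →ₗ[A] J × I := ε.prod (γ ∘ₗ β)
  have hh : ∀ y, h y = (ε y, γ (β y)) := fun _ => rfl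
  have hinj : ∀ y, γ (β y) = 0 → ∃ x, α x = y := fun y hy =>
    (ht.exact y).1 ((map_eq_zero_iff γ hs.inj).1 hy)
  have hh_inj : Injective h := by
    refine (injective_iff_map_eq_zero h).2 fun y hy => ?_
    rw [hh, Prod.mk_eq_zero] at hy
    obtain ⟨x, rfl⟩ := hinj y hy.2
    rw [hε', map_eq_zero_iff ι hι] at hy
    rw [hy.1, map_zero]
  let α' : (J ⧸ LinearMap.range ι) →ₗ[A] ((J × I) ⧸ LinearMap.range h) :=
    (LinearMap.range ι).liftQ ((LinearMap.range h).mkQ ∘ₗ LinearMap.inl A J I) (by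
      rintro _ ⟨x, rfl⟩
      refine (Submodule.Quotient.mk_eq_zero _).2 ⟨α x, ?_⟩
      rw [hh, hε', ht.exact.apply_apply_eq_zero, map_zero]
      rfl)
  let β' : ((J × I) ⧸ LinearMap.range h) →ₗ[A] G :=
    (LinearMap.range h).liftQ (δ ∘ₗ LinearMap.snd A J I) (by
      rintro _ ⟨y, rfl⟩
      exact hs.exact.apply_apply_eq_zero _)
  refine ⟨ModuleCat.of A (J ⧸ LinearMap.range ι), ModuleCat.of A ((J × I) ⧸ LinearMap.range h),
    α', β', ⟨N, J, ι, (LinearMap.range ι).mkQ, hN, hJ, isSES_mkQ_range hι⟩,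
    fun X => (isSES_mkQ_range hh_inj).cov₃ extZero_of_injective (hY X), ?_, ?_, ?_⟩
  · refine (injective_iff_map_eq_zero α').2 fun v hv => ?_
    obtain ⟨v, rfl⟩ := Submodule.mkQ_surjective _ v
    obtain ⟨y, hy⟩ := (Submodule.Quotient.mk_eq_zero _).1 hv
    rw [hh, LinearMap.inl_apply, Prod.mk.injEq] at hy
    obtain ⟨x, rfl⟩ := hinj y hy.2
    exact (Submodule.Quotient.mk_eq_zero _).2 ⟨x, (hε' x).symm.trans hy.1⟩
  · intro z
    obtain ⟨w, rfl⟩ := hs.surj z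
    exact ⟨Submodule.Quotient.mk (0, w), rfl⟩
  · intro v
    obtain ⟨⟨v, w⟩, rfl⟩ := Submodule.mkQ_surjective _ v
    constructor
    · intro hw
      obtain ⟨z, rfl⟩ := (hs.exact w).1 hw
      obtain ⟨y, rfl⟩ := ht.surj z
      refine ⟨Submodule.Quotient.mk (v - ε y), (Submodule.Quotient.eq _).2 ⟨-y, ?_⟩⟩
      rw [map_neg, hh]
      simp
    · rintro ⟨x, hx⟩
      obtain ⟨x, rfl⟩ := Submodule.mkQ_surjective _ x
      rw [← hx]
      exact map_zero δ

theorem hasPrecovers {k m : ℕ} (H : HasPrecovers B (k + m)) :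
    HasPrecovers (CosyzygyClass A B k) m := by
  induction k generalizing m with
  | zero => simpa [CosyzygyClass] using H
  | succ k ih => exact hasPrecovers_succ (ih (by rwa [← add_assoc, add_right_comm]))

theorem coresolution (hB : ∀ I : ModuleCat.{u} A, Module.Injective A I → B I)
    {P : ModuleCat.{u} A → Prop} {j k : ℕ} (hP : ∀ M, CosyzygyClass A B (k + j) M → P M)
    {M : ModuleCat.{u} A} (hM : CosyzygyClass A B k M) : HasClassCoresolution A P j M := by
  induction j generalizing k M with
  | zero => exact hP M hM
  | succ j ih =>
    obtain ⟨I, f, hI, hf⟩ := exists_injective_embedding A M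
    refine ⟨⟨I, f, hf⟩, hP I (of_injective hB _ hI), ih (k := k + 1) (fun N hN => hP N ?_)
      ⟨M, I, f, (LinearMap.range f).mkQ, hM, hI, isSES_mkQ_range hf⟩⟩
    rwa [← add_assoc, add_right_comm]

end CosyzygyClass

theorem exists_zComplex {G : ModuleCat.{u} A → Prop}
    (hprev : ∀ M, G M → ∃ (N I : ModuleCat.{u} A) (f : N →ₗ[A] I) (g : I →ₗ[A] M),
      G N ∧ Module.Injective A I ∧ IsSES f g)
    (hnext : ∀ M, G M → ∃ (I N : ModuleCat.{u} A) (f : M →ₗ[A] I) (g : I →ₗ[A] N),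
      G N ∧ Module.Injective A I ∧ IsSES f g)
    {M : ModuleCat.{u} A} (hM : G M) :
    ∃ E : ZComplex A, (∀ i, Module.Injective A (E.P i)) ∧ E.IsExact ∧
      (∀ i, ∃ N : ModuleCat.{u} A, G N ∧ Nonempty (N ≃ₗ[A] LinearMap.ker (E.d i))) ∧
      Nonempty (M ≃ₗ[A] LinearMap.ker (E.d 0)) := by
  choose prev I f g hG hI hs using fun M : {M // G M} => hprev M.1 M.2
  choose I' next f' g' hG' hI' hs' using fun M : {M // G M} => hnext M.1 M.2
  let Z : ℤ → {M // G M} := fun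
    | Int.ofNat n => (fun N => ⟨next N, hG' N⟩)^[n] ⟨M, hM⟩
    | Int.negSucc n => (fun N => ⟨prev N, hG N⟩)^[n + 1] ⟨M, hM⟩
  have hZ : ∀ i, ∃ (I : ModuleCat.{u} A) (f : (Z i).1 →ₗ[A] I) (g : I →ₗ[A] (Z (i + 1)).1),
      Module.Injective A I ∧ IsSES f g := by
    rintro (n | n)
    · have h : Z (Int.ofNat n + 1) = ⟨next (Z (Int.ofNat n)), hG' _⟩ :=
        iterate_succ_apply' _ n _
      rw [h]
      exact ⟨_, _, _, hI' _, hs' _⟩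
    · have h : Z (Int.negSucc n) = ⟨prev (Z (Int.negSucc n + 1)), hG _⟩ := by
        cases n with
        | zero => rfl
        | succ n => exact iterate_succ_apply' _ (n + 1) _
      rw [h]
      exact ⟨_, _, _, hI _, hs _⟩
  choose P φ ψ hP hφ using hZ
  let E : ZComplex A := { P := fun i => P i, d := fun i => φ (i + 1) ∘ₗ ψ i }
  have hd : ∀ i x, E.d i x = φ (i + 1) (ψ i x) := fun _ _ => rfl
  have hker : ∀ i x, E.d i x = 0 ↔ ∃ y, φ i y = x := fun i x => by
    rw [hd, map_eq_zero_iff _ (hφ (i + 1)).inj]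
    exact (hφ i).exact x
  have hcyc : ∀ i, Nonempty ((Z i).1 ≃ₗ[A] LinearMap.ker (E.d i)) := fun i =>
    ⟨(LinearEquiv.ofInjective _ (hφ i).inj).trans
      (LinearEquiv.ofEq _ _ (Submodule.ext fun x => (hker i x).symm))⟩
  refine ⟨E, hP, fun i x => ?_, fun i => ⟨_, (Z i).2, hcyc i⟩, hcyc 0⟩
  rw [hker]
  constructor
  · rintro ⟨y, rfl⟩
    obtain ⟨z, rfl⟩ := (hφ i).surj y
    exact ⟨z, rfl⟩
  · rintro ⟨z, rfl⟩
    exact ⟨ψ i z, rfl⟩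

end Cosyzygy

section TotalAcyclicity

variable {R : Type u} [Ring R] {C : Type u} [AddCommGroup C] [Module Rᵐᵒᵖ C]
variable {E : ZComplex Rᵐᵒᵖ}

theorem HasClassResolution.lifts_pi {A : Type u} [Ring A] {C : Type u} [AddCommGroup C]
    [Module A C] {E : ZComplex A} (hE : ∀ i, Module.Injective A (E.P i)) (hex : E.IsExact)
    (hC : ∀ X : Type u, E.Lifts (X → C)) {r : ℕ} {Q : ModuleCat.{u} A}
    (h : HasClassResolution A (InProdClass A C) r Q) (X : Type u) : E.Lifts (X → Q) := by
  have key : ∀ P : ModuleCat.{u} A, InProdClass A C P → E.Lifts (X → P) := by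
    rintro P ⟨I, f, r, hr⟩
    have hr' : ∀ p, r (f p) = p := LinearMap.congr_fun hr
    refine (hC (X × I)).retract (LinearMap.pi fun y => (LinearMap.proj y.2 : (I → C) →ₗ[A] C) ∘ₗ
        f ∘ₗ
      LinearMap.proj y.1) (LinearMap.pi fun x => r ∘ₗ LinearMap.pi fun i =>
        (LinearMap.proj (x, i) : (X × I → C) →ₗ[A] C))
        (LinearMap.ext fun p => funext fun x => hr' (p x))
  induction r generalizing Q with
  | zero => exact key Q h
  | succ r ih =>
    obtain ⟨e, h₁, h₂⟩ := h
    have hs : IsSES ((LinearMap.ker e.f).subtype.compLeft X) (e.f.compLeft X) := by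
      refine ⟨Subtype.val_injective.comp_left, e.surj.comp_left, fun y => ⟨fun hy => ?_, ?_⟩⟩
      · exact ⟨fun x => ⟨y x, congrFun hy x⟩, rfl⟩
      · rintro ⟨y, rfl⟩
        exact funext fun x => (y x).2
    exact .coker hs hE hex (ih h₂) (key _ h₁)

theorem IsCotilting.lifts_of_injective (hcot : IsCotilting R C)
    (hE : ∀ i, Module.Injective Rᵐᵒᵖ (E.P i)) (hex : E.IsExact)
    (hC : ∀ X : Type u, E.Lifts (X → C)) {I : Type u} [AddCommGroup I] [Module Rᵐᵒᵖ I]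
    [Module.Injective Rᵐᵒᵖ I] : E.Lifts I := by
  obtain ⟨Q, r, ⟨-, hQ⟩, hr⟩ := hcot.coresolution
  obtain ⟨X, f, hf⟩ := hQ I
  obtain ⟨g, hg⟩ := Module.Injective.extension_property Rᵐᵒᵖ _ _ _ f hf LinearMap.id
  exact (hr.lifts_pi hE hex hC X).retract f g hg

theorem ZComplex.Lifts.exact_comp {A : Type u} [Ring A] {E : ZComplex A} (hex : E.IsExact)
    {D : Type u} [AddCommGroup D] [Module A D] (h : E.Lifts D) (i : ℤ) :
    Function.Exact (fun f : D →ₗ[A] E.P i => (E.d i).comp f)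
      (fun f : D →ₗ[A] E.P (i + 1) => (E.d (i + 1)).comp f) := by
  intro g
  constructor
  · intro hg
    obtain ⟨h, hh⟩ := (E.lifts_iff D).1 h i g (LinearMap.congr_fun hg)
    exact ⟨h, LinearMap.ext hh⟩
  · rintro ⟨h, rfl⟩
    exact LinearMap.ext fun x => (hex i).apply_apply_eq_zero (h x)

end TotalAcyclicity

section BassClass

variable {R S : Type u} [Ring R] [Ring S]
variable {C : Type u} [AddCommGroup C] [Module Rᵐᵒᵖ C] [Module S C] [SMulCommClass S Rᵐᵒᵖ C]

namespace FinCoresolution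

theorem inBassClass_of_injective (K : FinCoresolution S R C)
    (hEnd : Bijective (leftHomothety S R C)) {I : Type u} [AddCommGroup I] [Module Rᵐᵒᵖ I]
    [Module.Injective Rᵐᵒᵖ I] : InBassClass S R C I :=
  (K.inBassClass_iff hEnd).2 ⟨fun _ => extZero_of_injective, fun _ _ => extZero_of_injective⟩

theorem inBassClass_coker (K : FinCoresolution S R C)
    (hEnd : Bijective (leftHomothety S R C)) {M I N : Type u} [AddCommGroup M] [Module Rᵐᵒᵖ M]
    [AddCommGroup I] [Module Rᵐᵒᵖ I] [AddCommGroup N] [Module Rᵐᵒᵖ N] [Module.Injective Rᵐᵒᵖ I]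
    {f : M →ₗ[Rᵐᵒᵖ] I} {g : I →ₗ[Rᵐᵒᵖ] N} (h : IsSES f g) (hM : InBassClass S R C M) :
    InBassClass S R C N := by
  have hM := (K.inBassClass_iff hEnd).1 hM
  exact (K.inBassClass_iff hEnd).2 ⟨fun n => h.cov₃ extZero_of_injective (hM.1 (n + 1)),
    fun j n => h.cov₃ extZero_of_injective (hM.2 j (n + 1))⟩

theorem hasPrecovers [IsNoetherianRing Rᵐᵒᵖ] [Module.Finite Rᵐᵒᵖ C] (K : FinCoresolution S R C)
    (hEnd : Bijective (leftHomothety S R C)) (hC : ∀ n, ExtZero Rᵐᵒᵖ C C (n + 1)) {n : ℕ}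
    (hn : InjDimLE Rᵐᵒᵖ C n) :
    HasPrecovers (fun M : ModuleCat.{u} Rᵐᵒᵖ => InBassClass S R C M) n := by
  intro M hM
  let p : ((C →ₗ[Rᵐᵒᵖ] M) →₀ C) →ₗ[Rᵐᵒᵖ] M := Finsupp.lsum ℕ id
  have hp : ∀ f c, p (Finsupp.single f c) = f c := fun f c =>
    Finsupp.lsum_single ℕ (id : (C →ₗ[Rᵐᵒᵖ] M) → C →ₗ[Rᵐᵒᵖ] M) f c
  have hps : Surjective p := by
    intro x
    obtain ⟨z, rfl⟩ := hM.nuBij.2 x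
    rw [← LinearMap.mem_range]
    induction z using MTensor.induction_on with
    | h0 => rw [map_zero]; exact zero_mem _
    | hmk f c => exact ⟨Finsupp.single f c, hp f c⟩
    | hadd x y hx hy => rw [map_add]; exact add_mem hx hy
  have hsum : InBassClass S R C ((C →ₗ[Rᵐᵒᵖ] M) →₀ C) := by
    refine (K.inBassClass_iff hEnd).2 ⟨fun n => extZero_finsupp_right (hC n), fun j n => ?_⟩
    have := K.finite j
    exact extZero_finsupp_right (K.perp j n)
  have hs := isSES_subtype_ker hps
  refine ⟨ModuleCat.of _ (LinearMap.ker p), ModuleCat.of _ _, _, p,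
    K.inBassClass_of_lift hEnd hs (fun f => ⟨Finsupp.lsingle f, LinearMap.ext (hp f)⟩) hsum hM,
    fun X => HasClassCoresolution.extZero_finsupp _ hn X, hs⟩

theorem exists_gidLE [IsNoetherianRing Rᵐᵒᵖ] [Module.Finite Rᵐᵒᵖ C] [Module.Finite S C]
    (K : FinCoresolution S R C) (hEnd : Bijective (leftHomothety S R C))
    (hS : IsLeftCoherentRing S)
    (hC : ∀ (L : Type u) [AddCommGroup L] [Module Rᵐᵒᵖ L],
      (∀ f : C →ₗ[Rᵐᵒᵖ] L, f = 0) → Subsingleton L) (hcot : IsCotilting R C)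
    {M : Type u} [AddCommGroup M] [Module Rᵐᵒᵖ M] (hM : InBassClass S R C M) :
    ∃ n, GidLE Rᵐᵒᵖ M n := by
  obtain ⟨n, hn⟩ := hcot.finInjDim
  let B : ModuleCat.{u} Rᵐᵒᵖ → Prop := fun M => InBassClass S R C M
  have hI : ∀ I : ModuleCat.{u} Rᵐᵒᵖ, Module.Injective Rᵐᵒᵖ I → B I := fun I _ =>
    K.inBassClass_of_injective hEnd
  have h₁ : ∀ M, CosyzygyClass Rᵐᵒᵖ B 1 M → B M := by
    rintro M ⟨N, I, f, g, hN, _, hs⟩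
    exact K.inBassClass_coker hEnd hs hN
  have hpre : HasPrecovers (CosyzygyClass Rᵐᵒᵖ B n) 0 :=
    CosyzygyClass.hasPrecovers (K.hasPrecovers hEnd hcot.extZero_self hn)
  refine ⟨n, CosyzygyClass.coresolution (B := B) (k := 0) hI (fun G hG => ?_) hM⟩
  rw [zero_add] at hG
  obtain ⟨E, hE, hex, hZ, he⟩ := exists_zComplex
    (G := CosyzygyClass Rᵐᵒᵖ B n)
    (fun G hG => by
      obtain ⟨N, Y, α, β, hN, hY, hs⟩ := hpre G hG
      exact ⟨N, Y, α, β, hN, injective_of_extZero fun X => hY (ModuleCat.of _ X), hs⟩)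
    (fun G hG => by
      obtain ⟨I, f, hI, hf⟩ := exists_injective_embedding Rᵐᵒᵖ G
      exact ⟨I, ModuleCat.of _ (I ⧸ LinearMap.range f), f, (LinearMap.range f).mkQ,
        CosyzygyClass.of_succ h₁ ⟨G, I, f, (LinearMap.range f).mkQ, hG, hI, isSES_mkQ_range hf⟩,
        hI, isSES_mkQ_range hf⟩) hG
  have hEC : E.Lifts C := (ZComplex.lifts_iff_extZero hE hex).2 fun i => by
    obtain ⟨N, hN, ⟨e⟩⟩ := hZ i
    exact (((K.inBassClass_iff hEnd).1 (hN.mem_of_le h₁)).1 0).congr_right e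
  have hEpi : ∀ X : Type u, E.Lifts (X → C) := fun X =>
    .of_factorsThroughFinitePowers hE hex (factorsThroughFinitePowers_pi hEnd hS hC X) hEC
  exact ⟨E, hE, hex, fun I _ _ _ i =>
    (hcot.lifts_of_injective hE hex hEpi (I := I)).exact_comp hex i, he⟩

end FinCoresolution

theorem IsRightNoetherianRing.isNoetherianRing_op (h : IsRightNoetherianRing R) :
    IsNoetherianRing Rᵐᵒᵖ := by
  have : IsNoetherian Rᵐᵒᵖ R := ⟨h⟩
  let e : R ≃ₗ[Rᵐᵒᵖ] Rᵐᵒᵖ := { opAddEquiv with map_smul' := fun _ _ => rfl }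
  exact isNoetherian_of_linearEquiv e

end BassClass

/-- Let `R` be a right Noetherian ring, `C` a finitely generated tensorly
faithful cotilting right `R`-module and `S = End(C_R)`. Assume `S` is left coherent and `C`
is finitely generated as a left `S`-module. Then for a right `R`-module `M` we have
`M ∈ ℬ_C(R)` iff `Gid(M) < ∞`. -/
theorem cotilting_bass_iff_finite_Gid
    (R S : Type u) [Ring R] [Ring S]
    (C : Type u) [AddCommGroup C] [Module Rᵐᵒᵖ C] [Module S C] [SMulCommClass S Rᵐᵒᵖ C]
    (hEnd : Function.Bijective (leftHomothety S R C))
    (hRnoeth : IsRightNoetherianRing R) (hScoh : IsLeftCoherentRing S)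
    (hCfgR : Module.Finite Rᵐᵒᵖ C) (hCfgS : Module.Finite S C)
    (hcot : IsCotilting R C) (htf : IsTensorlyFaithful S R C)
    (M : Type u) [AddCommGroup M] [Module Rᵐᵒᵖ M] :
    InBassClass S R C M ↔ ∃ n, GidLE Rᵐᵒᵖ M n := by
  have := hRnoeth.isNoetherianRing_op
  have hC : ∀ (L : Type u) [AddCommGroup L] [Module Rᵐᵒᵖ L],
      (∀ f : C →ₗ[Rᵐᵒᵖ] L, f = 0) → Subsingleton L :=
    fun L _ _ h => subsingleton_of_hom_eq_zero htf.1 h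
  obtain ⟨K⟩ := exists_finCoresolution hEnd hScoh hC hcot
  exact ⟨K.exists_gidLE hEnd hScoh hC hcot, fun ⟨n, hn⟩ =>
    K.inBassClass_of_gidLE hEnd htf.2 hcot.finInjDim hn⟩
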